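/- arXiv:1403.3642 — 2 statements merged into one kernel-verified Lean document; each statement's English description precedes it below -/
import Mathlib

section
/- Let N ≥ 3 and let C ⊆ ℝ^N be a closed set with tC ⊆ C for every t ≥ 0, such that C ∩ S^{N-1} is (N−2)-rectifiable with H^{N-2}(C ∩ S^{N-1}) < ∞. Let K ⊆ C be a closed set. Then K is (N−1)-rectifiable, and for H^{N-1}-almost every x ∈ K, any (N−1)-dimensional linear subspace P ⊆ ℝ^N that is an approximate tangent plane of K at x contains x (equivalently, ⟨x, ν_x⟩ = 0 for any unit normal ν_x to P). -/
open MeasureTheory Metric Set Filter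
open scoped ENNReal NNReal Topology

noncomputable section

/-- `ℝ^N` as a Euclidean space. -/
abbrev Rn (N : ℕ) := EuclideanSpace ℝ (Fin N)

/-- `u` is locally Lipschitz on the set `s` (neighborhoods taken within `s`). -/
def LocLipOn (N : ℕ) (u : Rn N → ℝ) (s : Set (Rn N)) : Prop :=
  ∀ x ∈ s, ∃ t ∈ nhdsWithin x s, ∃ C : ℝ≥0, LipschitzOnWith C u t

/-- `E` is `k`-rectifiable: up to an `H^k`-null set, `E` is covered by countably many
Lipschitz images of `ℝ^k`. -/
def KRectifiable (N k : ℕ) (E : Set (Rn N)) : Prop :=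
  ∃ f : ℕ → (EuclideanSpace ℝ (Fin k) → Rn N),
    (∀ i, ∃ C : ℝ≥0, LipschitzWith C (f i)) ∧
    μH[(k : ℝ)] (E \ ⋃ i, Set.range (f i)) = 0

/-- The linear subspace `P` is an approximate tangent plane (for `H^k`, `k = d`) of `S`
at `x`: the rescaled sets `(S - x)/r` converge to `P` weakly-* in the sense of measures
against continuous compactly supported test functions. -/
def ApproxTangentAt (N : ℕ) (d : ℝ) (S : Set (Rn N)) (x : Rn N)
    (P : Submodule ℝ (Rn N)) : Prop :=
  ∀ φ : Rn N → ℝ, Continuous φ → HasCompactSupport φ →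
    Tendsto (fun r : ℝ => ∫ y in (fun y => r⁻¹ • (y - x)) '' S, φ y ∂μH[d])
      (𝓝[>] 0) (𝓝 (∫ y in (P : Set (Rn N)), φ y ∂μH[d]))

def rad5 {E : Type*} [NormedAddCommGroup E] [NormedSpace ℝ E] (x : E) : E := ‖x‖⁻¹ • x

lemma norm_smul_rad5 {E : Type*} [NormedAddCommGroup E] [NormedSpace ℝ E] (x : E) :
    ‖x‖ • rad5 x = x := by
  unfold rad5
  by_cases h : x = 0
  · simp [h]
  · rw [smul_smul, mul_inv_cancel₀ (norm_ne_zero_iff.2 h), one_smul]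

lemma sub_eq_rad5 {E : Type*} [NormedAddCommGroup E] [NormedSpace ℝ E] (x y : E) :
    y - x = ‖y‖ • (rad5 y - rad5 x) + (‖y‖ - ‖x‖) • rad5 x := by
  rw [smul_sub, sub_smul, norm_smul_rad5, norm_smul_rad5]; abel

lemma norm_rad5_le {E : Type*} [NormedAddCommGroup E] [NormedSpace ℝ E] (x : E) :
    ‖rad5 x‖ ≤ 1 := by
  unfold rad5
  rw [norm_smul, norm_inv, norm_norm]
  exact inv_mul_le_one

lemma norm_sub_rad5_le {E : Type*} [NormedAddCommGroup E] [NormedSpace ℝ E] (x y : E) :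
    ‖y - x‖ ≤ ‖y‖ * ‖rad5 y - rad5 x‖ + |‖y‖ - ‖x‖| := by
  conv_lhs => rw [sub_eq_rad5 x y]
  refine (norm_add_le _ _).trans ?_
  rw [norm_smul, norm_smul, norm_norm, Real.norm_eq_abs]
  gcongr
  exact mul_le_of_le_one_right (abs_nonneg _) (norm_rad5_le x)

lemma pre_cone_le {E : Type*} [NormedAddCommGroup E] [NormedSpace ℝ E]
    {d : ℝ} (hd : 0 < d) (M : ℕ) (δ : ℝ≥0∞) (s : Set E) (b : ℝ≥0) (hb : 0 < b) (hb1 : b ≤ 1)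
    (hbδ : ((M : ℝ≥0∞) + 1) * b ≤ δ) (hs : ediam s ≤ b) :
    OuterMeasure.mkMetric'.pre (fun t : Set E => (ediam t) ^ (d + 1)) δ
      (rad5 ⁻¹' s ∩ closedBall 0 M) ≤ ((M : ℝ≥0∞) + 1) ^ (d + 2) * (b : ℝ≥0∞) ^ d := by
  set pc : ℕ → Set E := fun j => {x | rad5 x ∈ s ∧ ‖x‖ ≤ M ∧ j * (b : ℝ) ≤ ‖x‖ ∧ ‖x‖ < (j + 1) * b}
  have hbR : (0 : ℝ) < b := by exact_mod_cast hb
  have hdiam : ∀ j, ediam (pc j) ≤ ((M : ℝ≥0∞) + 1) * b := by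
    intro j
    refine ediam_le ?_
    rintro x ⟨hx1, hx2, hx3, hx4⟩ y ⟨hy1, hy2, hy3, hy4⟩
    have h1 : edist (rad5 y) (rad5 x) ≤ b := (edist_le_ediam_of_mem hy1 hx1).trans hs
    have h2 : ‖rad5 y - rad5 x‖ ≤ b := by
      rw [edist_nndist] at h1
      rw [← dist_eq_norm]
      exact_mod_cast h1
    have h3 : |‖y‖ - ‖x‖| ≤ b := by
      rw [abs_le]; constructor <;> nlinarith
    have h4 : ‖y - x‖ ≤ (M + 1) * b := by
      refine (norm_sub_rad5_le x y).trans ?_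
      have : ‖y‖ * ‖rad5 y - rad5 x‖ ≤ M * b := by gcongr
      linarith
    rw [edist_comm, edist_nndist]
    rw [← dist_eq_norm] at h4
    have h5 : nndist y x ≤ ((M : ℝ≥0) + 1) * b := by
      rw [← NNReal.coe_le_coe]; push_cast; exact h4
    exact_mod_cast h5
  have hcov : rad5 ⁻¹' s ∩ closedBall 0 M ⊆ ⋃ j ∈ Finset.range (⌊(M : ℝ) / b⌋₊ + 1), pc j := by
    rintro x ⟨hx, hxM⟩
    rw [mem_closedBall_zero_iff] at hxM
    simp only [mem_iUnion, Finset.mem_range]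
    refine ⟨⌊‖x‖ / b⌋₊, ?_, hx, hxM, ?_, ?_⟩
    · refine Nat.lt_succ_of_le (Nat.floor_le_floor ?_)
      gcongr
    · have := Nat.floor_le (a := ‖x‖ / b) (by positivity)
      rwa [le_div_iff₀ hbR] at this
    · have := Nat.lt_floor_add_one (‖x‖ / b)
      rwa [div_lt_iff₀ hbR] at this
  refine (measure_mono hcov).trans ((measure_biUnion_finset_le _ _).trans ?_)
  have hone : ∀ j ∈ Finset.range (⌊(M : ℝ) / b⌋₊ + 1),
      OuterMeasure.mkMetric'.pre (fun t : Set E => (ediam t) ^ (d + 1)) δ (pc j)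
        ≤ (((M : ℝ≥0∞) + 1) * b) ^ (d + 1) := by
    intro j _
    refine (OuterMeasure.mkMetric'.pre_le ((hdiam j).trans hbδ)).trans ?_
    exact ENNReal.rpow_le_rpow (hdiam j) (by linarith)
  refine (Finset.sum_le_card_nsmul _ _ _ hone).trans ?_
  rw [Finset.card_range, nsmul_eq_mul, ENNReal.mul_rpow_of_nonneg _ _ (by linarith)]
  have hcount : ((⌊(M : ℝ) / b⌋₊ + 1 : ℕ) : ℝ≥0∞) * b ≤ (M : ℝ≥0∞) + 1 := by
    have h := Nat.floor_le (a := (M : ℝ) / b) (by positivity)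
    rw [le_div_iff₀ hbR] at h
    have h' : ((⌊(M : ℝ) / b⌋₊ + 1 : ℕ) : ℝ≥0) * b ≤ (M : ℝ≥0) + 1 := by
      rw [← NNReal.coe_le_coe]; push_cast
      have : (b : ℝ) ≤ 1 := by exact_mod_cast hb1
      linarith
    exact_mod_cast h'
  have hb0 : (b : ℝ≥0∞) ≠ 0 := by simpa using hb.ne'
  have hM0 : (M : ℝ≥0∞) + 1 ≠ 0 := by simp
  have hMt : (M : ℝ≥0∞) + 1 ≠ ⊤ := by simp
  have e1 : (b : ℝ≥0∞) ^ (d + 1) = b * (b : ℝ≥0∞) ^ d := by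
    rw [ENNReal.rpow_add _ _ hb0 ENNReal.coe_ne_top, ENNReal.rpow_one, mul_comm]
  have e2 : ((M : ℝ≥0∞) + 1) ^ (d + 2) = ((M : ℝ≥0∞) + 1) * ((M : ℝ≥0∞) + 1) ^ (d + 1) := by
    rw [show d + 2 = 1 + (d + 1) by ring, ENNReal.rpow_add _ _ hM0 hMt, ENNReal.rpow_one]
  rw [e1, e2]
  calc _ = (((⌊(M : ℝ) / b⌋₊ + 1 : ℕ) : ℝ≥0∞) * b) * ((M : ℝ≥0∞) + 1) ^ (d + 1) * (b : ℝ≥0∞) ^ d := by ring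
    _ ≤ _ := by gcongr

lemma cone_null {E : Type*} [NormedAddCommGroup E] [NormedSpace ℝ E] [MeasurableSpace E]
    [BorelSpace E] {d : ℝ} (hd : 0 < d) (Z : Set E) (hZ : μH[d] Z = 0) :
    μH[d + 1] (rad5 ⁻¹' Z : Set E) = 0 := by
  have hU : (rad5 ⁻¹' Z : Set E) = ⋃ M : ℕ, (rad5 ⁻¹' Z ∩ closedBall 0 M) := by
    rw [← inter_iUnion, iUnion_closedBall_nat, inter_univ]
  rw [hU, measure_iUnion_null_iff]
  intro M
  simp only [Measure.hausdorffMeasure, ← OuterMeasure.coe_mkMetric] at hZ ⊢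
  unfold OuterMeasure.mkMetric
  rw [OuterMeasure.mkMetric'.eq_iSup_nat, OuterMeasure.iSup_apply]
  simp only [ENNReal.iSup_eq_zero]
  intro n
  set p := OuterMeasure.mkMetric'.pre (fun t : Set E => (ediam t) ^ (d + 1)) (n : ℝ≥0∞)⁻¹ with hp
  set ν : OuterMeasure E := OuterMeasure.map rad5 (OuterMeasure.restrict (closedBall 0 M) p) with hν
  have hνa : ∀ s, ν s = p (rad5 ⁻¹' s ∩ closedBall 0 M) := by
    intro s; rw [hν, OuterMeasure.map_apply, OuterMeasure.restrict_apply]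
  rw [← hνa]
  set c : ℝ≥0∞ := ((M : ℝ≥0∞) + 1) ^ (d + 2) with hc
  have hM0 : (M : ℝ≥0∞) + 1 ≠ 0 := by simp
  have hMt : (M : ℝ≥0∞) + 1 ≠ ⊤ := by simp
  have hc0 : c ≠ 0 := by
    rw [hc]; exact (ENNReal.rpow_pos (pos_iff_ne_zero.2 hM0) hMt).ne'
  have hct : c ≠ ⊤ := ENNReal.rpow_ne_top_of_nonneg (by linarith) hMt
  obtain ⟨r, hr0, hr1, hrn⟩ : ∃ r : ℝ≥0, 0 < r ∧ r ≤ 1 ∧ ((M : ℝ≥0∞) + 1) * r ≤ (n : ℝ≥0∞)⁻¹ := by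
    refine ⟨(((M : ℝ≥0) + 1) * (n + 1))⁻¹, by positivity, ?_, ?_⟩
    · apply inv_le_one_of_one_le₀
      have h1 : (1 : ℝ≥0) ≤ M + 1 := by simp
      have h2 : (1 : ℝ≥0) ≤ n + 1 := by simp
      exact one_le_mul h1 h2
    · rw [ENNReal.le_inv_iff_mul_le]
      have h : ((M : ℝ≥0) + 1) * (((M : ℝ≥0) + 1) * (n + 1))⁻¹ * n ≤ 1 := by
        rw [mul_inv, ← mul_assoc, mul_inv_cancel₀ (by positivity), one_mul]
        rw [inv_mul_le_iff₀ (by positivity)]; simp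
      exact_mod_cast h
  have key : ν ≤ OuterMeasure.mkMetric (c • fun a : ℝ≥0∞ => a ^ d) := by
    refine OuterMeasure.le_mkMetric _ _ ((r / 2 : ℝ≥0) : ℝ≥0∞)
      (ENNReal.coe_pos.2 (half_pos hr0)) ?_
    intro s hs
    rw [hνa]
    have hst : ediam s ≠ ⊤ := (hs.trans_lt ENNReal.coe_lt_top).ne
    lift ediam s to ℝ≥0 using hst with a ha
    have hs' : a ≤ r / 2 := by exact_mod_cast hs
    have har : a < r := hs'.trans_lt (half_lt_self hr0)
    have ht : Tendsto (fun b : ℝ≥0 => c * (b : ℝ≥0∞) ^ d) (𝓝[>] a) (𝓝 (c * (a : ℝ≥0∞) ^ d)) := by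
      refine Tendsto.mono_left ?_ nhdsWithin_le_nhds
      refine ENNReal.Tendsto.const_mul ?_ (Or.inr hct)
      exact (ENNReal.continuous_rpow_const.comp ENNReal.continuous_coe).tendsto a
    refine ge_of_tendsto ht ?_
    filter_upwards [Ioo_mem_nhdsGT har] with b hb
    refine pre_cone_le hd M _ s b (lt_of_le_of_lt zero_le hb.1) (hb.2.le.trans hr1) ?_ ?_
    · refine le_trans ?_ hrn
      gcongr
      exact_mod_cast hb.2.le
    · rw [← ha]; exact_mod_cast hb.1.le
  have := key Z
  rw [OuterMeasure.mkMetric_smul _ hct hc0] at this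
  have h0 : (c • OuterMeasure.mkMetric (fun a : ℝ≥0∞ => a ^ d) : OuterMeasure E) Z = 0 := by
    rw [smul_apply, hZ, smul_zero]
  rw [h0] at this
  exact le_antisymm this zero_le

lemma exists_cone_param {k N : ℕ} (f : Rn k → Rn N) {L : ℝ≥0} (hf : LipschitzWith L f) (M : ℕ) :
    ∃ g : Rn (k + 1) → Rn N, (∃ L' : ℝ≥0, LipschitzWith L' g) ∧
      ∀ u : Rn k, ∀ t : ℝ, ‖u‖ ≤ M → |t| ≤ M → t • f u ∈ range g := by
  let e : Rn (k + 1) ≃L[ℝ] (Rn k × ℝ) := ContinuousLinearEquiv.ofFinrankEq (by simp)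
  set c : ℝ≥0 := M * L + (‖f 0‖₊ + L * M) with hc
  have h1 : LipschitzOnWith c (fun p : Rn k × ℝ => p.2 • f p.1) (closedBall 0 M) := by
    refine LipschitzOnWith.of_dist_le_mul ?_
    rintro ⟨u, t⟩ hp ⟨v, s⟩ hq
    rw [mem_closedBall_zero_iff, Prod.norm_def] at hp hq
    simp only [sup_le_iff, Real.norm_eq_abs] at hp hq
    have hd1 : dist u v ≤ dist (u, t) (v, s) := by rw [Prod.dist_eq]; exact le_max_left _ _
    have hd2 : dist t s ≤ dist (u, t) (v, s) := by rw [Prod.dist_eq]; exact le_max_right _ _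
    have hfv : ‖f v‖ ≤ ‖f 0‖ + L * M := by
      have := hf.dist_le_mul v 0
      rw [dist_eq_norm, dist_zero_right] at this
      have h2 : ‖f v‖ ≤ ‖f 0‖ + ‖f v - f 0‖ := norm_le_norm_add_norm_sub' _ _
      have h3 : L * ‖v‖ ≤ L * (M : ℝ) := by gcongr; exact hq.1
      linarith
    have hdec : t • f u - s • f v = t • (f u - f v) + (t - s) • f v := by
      rw [smul_sub, sub_smul]; abel
    have hfu := hf.dist_le_mul u v
    show dist (t • f u) (s • f v) ≤ _
    rw [dist_eq_norm, hdec]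
    refine (norm_add_le _ _).trans ?_
    rw [norm_smul, norm_smul, ← dist_eq_norm, Real.norm_eq_abs, ← dist_eq_norm]
    have a1 : |t| * dist (f u) (f v) ≤ M * (L * dist (u, t) (v, s)) := by
      gcongr
      · exact hp.2
      · exact hfu.trans (by gcongr)
    have a2 : dist t s * ‖f v‖ ≤ dist (u, t) (v, s) * (‖f 0‖ + L * M) := by gcongr
    rw [hc]; push_cast
    linarith
  obtain ⟨G, hG, hGe⟩ := h1.extend_finite_dimension
  refine ⟨G ∘ e, ⟨_, hG.comp e.lipschitz⟩, ?_⟩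
  intro u t hu ht
  refine ⟨e.symm (u, t), ?_⟩
  simp only [Function.comp, ContinuousLinearEquiv.apply_symm_apply]
  refine (hGe ?_).symm
  rw [mem_closedBall_zero_iff, Prod.norm_def]
  exact sup_le hu (by simpa using ht)

lemma rect_part {k N : ℕ} (hk : 1 ≤ k) (C : Set (Rn N))
    (hcone : ∀ t : ℝ, 0 ≤ t → ∀ x ∈ C, t • x ∈ C)
    (hrect : KRectifiable N k (C ∩ sphere (0 : Rn N) 1))
    (K : Set (Rn N)) (hKC : K ⊆ C) : KRectifiable N (k + 1) K := by
  obtain ⟨f, hf, hZ⟩ := hrect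
  choose L hL using hf
  choose g hg hgr using fun i M => exists_cone_param (f i) (hL i) M
  refine ⟨fun n => g n.unpair.1 n.unpair.2, fun n => hg _ _, ?_⟩
  have hn := cone_null (by exact_mod_cast hk : (0 : ℝ) < k) _ hZ
  push_cast
  refine measure_mono_null ?_ hn
  rintro x ⟨hxK, hx⟩
  have hx' : ∀ i M, x ∉ range (g i M) := by
    intro i M h
    apply hx
    refine mem_iUnion.2 ⟨Nat.pair i M, ?_⟩
    simpa using h
  have hx0 : x ≠ 0 := by
    rintro rfl
    apply hx' 0 0
    have := hgr 0 0 0 0 (by simp) (by simp)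
    simpa using this
  refine ⟨⟨hcone _ (by positivity) _ (hKC hxK), ?_⟩, ?_⟩
  · rw [mem_sphere_zero_iff_norm, rad5, norm_smul, norm_inv, norm_norm,
      inv_mul_cancel₀ (norm_ne_zero_iff.2 hx0)]
  · intro h
    obtain ⟨i, u, hu⟩ := mem_iUnion.1 h
    obtain ⟨M, hM⟩ := exists_nat_ge (max ‖u‖ ‖x‖)
    apply hx' i M
    have := hgr i M u ‖x‖ ((le_max_left _ _).trans hM)
      (by rw [abs_norm]; exact (le_max_right _ _).trans hM)
    rwa [hu, norm_smul_rad5] at this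

lemma plane_integral_pos {N : ℕ} (P : Submodule ℝ (Rn N)) {d : ℝ}
    (hd : d = (Module.finrank ℝ P : ℝ)) (φ : Rn N → ℝ) (hφ : Continuous φ)
    (hc : HasCompactSupport φ) (h0 : 0 ≤ φ) (h1 : φ 0 ≠ 0) :
    0 < ∫ y in (P : Set (Rn N)), φ y ∂μH[d] := by
  subst hd
  have hi : Isometry ((↑) : P → Rn N) := isometry_subtype_coe
  have hcl : IsClosed (P : Set (Rn N)) := P.closed_of_finiteDimensional
  have hce : Topology.IsClosedEmbedding ((↑) : P → Rn N) := hcl.isClosedEmbedding_subtypeVal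
  have hm := hi.map_hausdorffMeasure (d := (Module.finrank ℝ P : ℝ)) (Or.inl (by positivity))
  rw [Subtype.range_coe] at hm
  have hm' : (μH[(Module.finrank ℝ P : ℝ)]).restrict (P : Set (Rn N)) =
    Measure.map ((↑) : P → Rn N) μH[(Module.finrank ℝ P : ℝ)] := hm.symm
  rw [hm', hce.measurableEmbedding.integral_map]
  refine Continuous.integral_pos_of_hasCompactSupport_nonneg_nonzero (x := 0)
    (hφ.comp continuous_subtype_val) (hc.comp_isClosedEmbedding hce) (fun x => h0 _) ?_
  simpa using h1

abbrev blow {N : ℕ} (K : Set (Rn N)) (x : Rn N) (r : ℝ) : Set (Rn N) :=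
  (fun y => r⁻¹ • (y - x)) '' K

lemma lower_dens {N : ℕ} {d : ℝ} (K : Set (Rn N)) (x : Rn N) (P : Submodule ℝ (Rn N))
    (hd : d = (Module.finrank ℝ P : ℝ)) (hT : ApproxTangentAt N d K x P) :
    ∃ c : ℝ, 0 < c ∧ ∀ᶠ r in 𝓝[>] (0 : ℝ), ENNReal.ofReal c ≤ μH[d] (ball 0 1 ∩ blow K x r) := by
  set φ : Rn N → ℝ := fun z => max 0 (1 - ‖z‖) with hφ
  have hcont : Continuous φ := by fun_prop
  have hsupp : HasCompactSupport φ := by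
    refine HasCompactSupport.intro (isCompact_closedBall 0 1) ?_
    intro z hz
    rw [mem_closedBall_zero_iff, not_le] at hz
    simp only [hφ]
    exact max_eq_left (by linarith)
  have h0 : 0 ≤ φ := fun z => le_max_left _ _
  have hpos := plane_integral_pos P hd φ hcont hsupp h0 (by simp [hφ])
  refine ⟨_, half_pos hpos, ?_⟩
  filter_upwards [(hT φ hcont hsupp).eventually (lt_mem_nhds (half_lt_self hpos))] with r hr
  refine (ENNReal.ofReal_le_ofReal hr.le).trans ?_
  rw [integral_eq_lintegral_of_nonneg_ae (Eventually.of_forall h0) hcont.aestronglyMeasurable]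
  refine ENNReal.ofReal_toReal_le.trans ?_
  rw [← Measure.restrict_apply isOpen_ball.measurableSet, ← lintegral_indicator_one isOpen_ball.measurableSet]
  refine lintegral_mono fun z => ?_
  by_cases hz : z ∈ ball (0 : Rn N) 1
  · rw [indicator_of_mem hz]
    simp only [hφ, Pi.one_apply, ENNReal.ofReal_le_one]
    exact max_le zero_le_one (by linarith [norm_nonneg z])
  · rw [indicator_of_notMem hz]
    rw [mem_ball_zero_iff, not_lt] at hz
    simp only [hφ]
    rw [max_eq_left (by linarith)]; simp

lemma upper_dens {N : ℕ} {d : ℝ} (K : Set (Rn N)) (x : Rn N) (P : Submodule ℝ (Rn N))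
    (hd : d = (Module.finrank ℝ P : ℝ)) (hT : ApproxTangentAt N d K x P)
    (Q : Rn N →L[ℝ] Rn N) (hQ : ∀ z ∈ P, Q z = 0) {ε : ℝ} (hε : 0 < ε) (c : ℝ≥0∞) (hc : c ≠ 0) :
    ∀ᶠ r in 𝓝[>] (0 : ℝ), μH[d] ({z | ‖z‖ ≤ 2 ∧ ε ≤ ‖Q z‖} ∩ blow K x r) < c := by
  set ψ : Rn N → ℝ := fun z => max 0 (min 1 (3 - ‖z‖)) with hψ
  set φ : Rn N → ℝ := fun z => min 1 (‖Q z‖ / ε) * ψ z with hφ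
  have hψc : Continuous ψ := by fun_prop
  have hφc : Continuous φ := by fun_prop
  have hψs : HasCompactSupport ψ := by
    refine HasCompactSupport.intro (isCompact_closedBall 0 3) ?_
    intro z hz
    rw [mem_closedBall_zero_iff, not_le] at hz
    simp only [hψ]
    exact max_eq_left ((min_le_right _ _).trans (by linarith))
  have hφs : HasCompactSupport φ := hψs.mul_left
  have hψ0 : 0 ≤ ψ := fun z => le_max_left _ _
  have hm0 : ∀ z, 0 ≤ min 1 (‖Q z‖ / ε) := fun z => le_min zero_le_one (by positivity)
  have hφ0 : 0 ≤ φ := fun z => mul_nonneg (hm0 z) (hψ0 z)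
  have hpos := plane_integral_pos P hd ψ hψc hψs hψ0 (by norm_num [hψ])
  have hzero : ∫ y in (P : Set (Rn N)), φ y ∂μH[d] = 0 := by
    refine setIntegral_eq_zero_of_forall_eq_zero ?_
    intro z hz
    simp [hφ, hQ z hz]
  have hlim := hT φ hφc hφs
  rw [hzero] at hlim
  have hlim2 := (ENNReal.continuous_ofReal.tendsto 0).comp hlim
  rw [ENNReal.ofReal_zero] at hlim2
  filter_upwards [(hT ψ hψc hψs).eventually (lt_mem_nhds hpos),
    hlim2.eventually (gt_mem_nhds (pos_iff_ne_zero.2 hc))] with r hr1 hr2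
  refine lt_of_le_of_lt ?_ hr2
  have hψi : Integrable ψ ((μH[d]).restrict (blow K x r)) := by
    by_contra h
    rw [integral_undef h] at hr1
    exact lt_irrefl _ hr1
  have hφi : Integrable φ ((μH[d]).restrict (blow K x r)) := by
    refine hψi.mono' hφc.aestronglyMeasurable (Eventually.of_forall fun z => ?_)
    rw [Real.norm_of_nonneg (hφ0 z)]
    exact mul_le_of_le_one_left (hψ0 z) (min_le_left _ _)
  have hmeas : MeasurableSet {z : Rn N | ‖z‖ ≤ 2 ∧ ε ≤ ‖Q z‖} := by
    apply IsClosed.measurableSet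
    exact (isClosed_le continuous_norm continuous_const).inter
      (isClosed_le continuous_const Q.continuous.norm)
  rw [Function.comp, ofReal_integral_eq_lintegral_ofReal hφi (Eventually.of_forall hφ0),
    ← Measure.restrict_apply hmeas, ← lintegral_indicator_one hmeas]
  refine lintegral_mono fun z => ?_
  by_cases hz : z ∈ {z : Rn N | ‖z‖ ≤ 2 ∧ ε ≤ ‖Q z‖}
  · rw [indicator_of_mem hz]
    have e1 : ψ z = 1 := by
      simp only [hψ]
      rw [min_eq_left (by linarith [hz.1])]; norm_num
    have e2 : min 1 (‖Q z‖ / ε) = 1 := min_eq_left (by rw [one_le_div hε]; exact hz.2)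
    simp [hφ, e1, e2]
  · rw [indicator_of_notMem hz]; simp

lemma null_of_rad {N : ℕ} {d : ℝ} (hd : 0 ≤ d) (S : Set (Rn N)) (Λ : ℝ≥0)
    (h : ∀ x ∈ S, ∀ y ∈ S, ‖y - x‖ ≤ Λ * ‖rad5 y - rad5 x‖) (h0 : μH[d] (rad5 '' S) = 0) :
    μH[d] S = 0 := by
  have hinj : InjOn rad5 S := by
    intro x hx y hy hxy
    have := h x hx y hy
    rw [hxy, sub_self, norm_zero, mul_zero] at this
    exact (sub_eq_zero.1 (norm_le_zero_iff.1 this)).symm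
  have hl := hinj.leftInvOn_invFunOn
  have hL : LipschitzOnWith Λ (Function.invFunOn rad5 S) (rad5 '' S) := by
    refine LipschitzOnWith.of_dist_le_mul ?_
    rintro _ ⟨x, hx, rfl⟩ _ ⟨y, hy, rfl⟩
    rw [hl hx, hl hy, dist_eq_norm, dist_eq_norm]
    exact h y hy x hx
  have := hL.hausdorffMeasure_image_le hd
  rw [h0, mul_zero, hl.image_image] at this
  exact le_antisymm this zero_le

lemma tangent_part {N : ℕ} {d : ℝ} (hd : 0 ≤ d) (K : Set (Rn N)) (hK : IsClosed K)
    (h0 : μH[d] (rad5 '' (K \ {0})) = 0) :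
    ∀ᵐ x ∂(μH[d]).restrict K,
      ∀ P : Submodule ℝ (Rn N), (Module.finrank ℝ P : ℝ) = d →
        ApproxTangentAt N d K x P → x ∈ P := by
  rw [ae_restrict_iff' hK.measurableSet, ae_iff]
  set η : ℕ → ℝ≥0 := fun n => ((n : ℝ≥0) + 1)⁻¹ with hη
  have hηpos : ∀ n, 0 < η n := fun n => by simp only [hη]; positivity
  have hηle : ∀ n, η n ≤ 1 := fun n => by
    simp only [hη]; exact inv_le_one_of_one_le₀ (by simp)
  have hηex : ∀ a : ℝ, 0 < a → ∀ᶠ n in atTop, (η n : ℝ) < a := by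
    intro a ha
    have := (tendsto_one_div_add_atTop_nhds_zero_nat (𝕜 := ℝ)).eventually (gt_mem_nhds ha)
    filter_upwards [this] with n hn
    simpa [hη] using hn
  set κ : ℕ → ℝ≥0 := fun n => (η n / 4)⁻¹ with hκ
  -- the pieces
  set B : ℕ → ℕ → Set (Rn N) := fun n m => {x | x ∈ K ∧ ‖x‖ ≤ n ∧
    (∀ s : ℝ, 0 < s → s < η n → (η n : ℝ≥0∞) ≤ μH[d] (ball 0 1 ∩ blow K x s)) ∧
    ∃ Q : Rn N →L[ℝ] Rn N, (∀ z, ‖Q z‖ ≤ ‖z‖) ∧ (η n : ℝ) ≤ ‖Q (rad5 x)‖ ∧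
      ∀ r : ℝ, 0 < r → r < η m →
        (κ n : ℝ≥0∞) ^ d * μH[d] ({z | ‖z‖ ≤ 2 ∧ (η n : ℝ) / 4 ≤ ‖Q z‖} ∩ blow K x r) < η n}
    with hB
  set D := TopologicalSpace.denseSeq (Rn N) with hD
  set T : ℕ → ℕ → ℕ → Set (Rn N) := fun n m j =>
    B n m ∩ ball (D j) (min (η n) (η m) / 2) with hTdef
  have hT0 : ∀ n m j, μH[d] (T n m j) = 0 := by
    intro n m j
    have hηn : (0 : ℝ) < η n := by exact_mod_cast hηpos n
    have hη1 : (η n : ℝ) ≤ 1 := by exact_mod_cast hηle n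
    refine null_of_rad hd _ (4 * n / η n) ?_ ?_
    · rintro x ⟨⟨hxK, hxn, -, Q, hQ1, hQx, hQr⟩, hxb⟩ y ⟨⟨hyK, hyn, hylow, -⟩, hyb⟩
      by_cases hxy : y = x
      · subst hxy; simp
      set r := ‖y - x‖ with hr
      have hr0 : 0 < r := norm_pos_iff.2 (sub_ne_zero.2 hxy)
      have hrlt : r < min (η n) (η m) := by
        rw [hr, ← dist_eq_norm]
        calc dist y x ≤ dist y (D j) + dist x (D j) := dist_triangle_right _ _ _
          _ < min (η n : ℝ) (η m) / 2 + min (η n : ℝ) (η m) / 2 := by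
            rw [mem_ball] at hxb hyb
            push_cast at hxb hyb
            gcongr
          _ = _ := by push_cast; ring
      push_cast at hrlt
      have hrn : r < η n := hrlt.trans_le (min_le_left _ _)
      have hrm : r < η m := hrlt.trans_le (min_le_right _ _)
      have hclose : ‖Q (y - x)‖ < (η n : ℝ) / 2 * r := by
        by_contra hcon
        push Not at hcon
        have h1 := hylow ((η n : ℝ) / 4 * r) (by positivity) (by nlinarith)
        have h2 := hQr r hr0 hrm
        refine absurd (h1.trans ?_) (not_le.2 h2)
        set v := r⁻¹ • (y - x) with hv
        have hv1 : ‖v‖ = 1 := by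
          rw [hv, norm_smul, norm_inv, Real.norm_of_nonneg hr0.le, ← hr, inv_mul_cancel₀ hr0.ne']
        have hQv : (η n : ℝ) / 2 ≤ ‖Q v‖ := by
          rw [hv, map_smul, norm_smul, norm_inv, Real.norm_of_nonneg hr0.le,
            le_inv_mul_iff₀ hr0]
          linarith
        have hLip : LipschitzWith (κ n) (fun z : Rn N => ((η n : ℝ) / 4)⁻¹ • (z - v)) := by
          refine LipschitzWith.of_dist_le_mul ?_
          intro a b
          rw [dist_eq_norm, ← smul_sub, sub_sub_sub_cancel_right, norm_smul, norm_inv,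
            Real.norm_of_nonneg (by positivity), dist_eq_norm]
          simp [hκ]
        refine le_trans (measure_mono ?_) (hLip.hausdorffMeasure_image_le hd _)
        rintro z ⟨hz, w, hw, rfl⟩
        rw [mem_ball_zero_iff] at hz
        set z := ((η n : ℝ) / 4 * r)⁻¹ • (w - y) with hz'
        have hwz : r⁻¹ • (w - x) = ((η n : ℝ) / 4) • z + v := by
          rw [hz', hv, smul_smul, mul_inv, ← mul_assoc, mul_inv_cancel₀ (by positivity), one_mul,
            ← smul_add, sub_add_sub_cancel]
        have hnz : ‖((η n : ℝ) / 4) • z‖ ≤ (η n : ℝ) / 4 := by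
          rw [norm_smul, Real.norm_of_nonneg (by positivity)]
          exact mul_le_of_le_one_right (by positivity) hz.le
        refine ⟨r⁻¹ • (w - x), ⟨⟨?_, ?_⟩, w, hw, rfl⟩, ?_⟩
        · rw [hwz]
          refine (norm_add_le _ _).trans ?_
          rw [hv1]; linarith
        · rw [hwz, map_add]
          have h3 : ‖Q v‖ ≤ ‖Q (((η n : ℝ) / 4) • z) + Q v‖ + ‖Q (((η n : ℝ) / 4) • z)‖ := by
            rw [add_comm (Q (((η n : ℝ) / 4) • z))]
            exact norm_le_add_norm_add _ _
          have h4 := (hQ1 (((η n : ℝ) / 4) • z)).trans hnz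
          linarith
        · simp only
          rw [hwz, add_sub_cancel_right, smul_smul, inv_mul_cancel₀ (by positivity), one_smul]
      set Dd := ‖rad5 y - rad5 x‖ with hDd
      have hDd0 : 0 ≤ Dd := norm_nonneg _
      have g1 : r ≤ ‖y‖ * Dd + |‖y‖ - ‖x‖| := norm_sub_rad5_le x y
      have g2 : |‖y‖ - ‖x‖| * ‖Q (rad5 x)‖ ≤ ‖Q (y - x)‖ + ‖y‖ * Dd := by
        have e : (‖y‖ - ‖x‖) • Q (rad5 x) = Q (y - x) - ‖y‖ • Q (rad5 y - rad5 x) := by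
          rw [← map_smul, ← map_smul, ← map_sub]
          congr 1
          rw [eq_sub_iff_add_eq, add_comm]
          exact (sub_eq_rad5 x y).symm
        rw [← Real.norm_eq_abs, ← norm_smul, e]
        refine (norm_sub_le _ _).trans ?_
        rw [norm_smul, norm_norm]
        gcongr
        exact hQ1 _
      have g3 : ‖y‖ * Dd ≤ n * Dd := by gcongr
      have g4 : |‖y‖ - ‖x‖| * η n ≤ |‖y‖ - ‖x‖| * ‖Q (rad5 x)‖ := by gcongr
      have g5 : (r - n * Dd) * η n ≤ |‖y‖ - ‖x‖| * η n := by gcongr; linarith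
      have g6 : n * Dd * η n ≤ n * Dd := mul_le_of_le_one_right (by positivity) hη1
      push_cast
      rw [div_mul_eq_mul_div, le_div_iff₀ hηn]
      nlinarith
    · refine measure_mono_null (image_mono ?_) h0
      rintro x ⟨⟨hxK, -, -, Q, -, hQx, -⟩, -⟩
      refine ⟨hxK, ?_⟩
      rintro rfl
      simp [rad5] at hQx
      linarith
  refine measure_mono_null ?_
    (measure_iUnion_null fun n => measure_iUnion_null fun m => measure_iUnion_null (hT0 n m))
  intro x hx
  simp only [mem_ofPred_eq, not_forall] at hx
  obtain ⟨hxK, P, hP, hTan, hxP⟩ := hx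
  set Q : Rn N →L[ℝ] Rn N := Pᗮ.starProjection with hQ
  have hQ1 : ∀ z, ‖Q z‖ ≤ ‖z‖ := fun z => Pᗮ.norm_starProjection_apply_le z
  have hQP : ∀ z, Q z = 0 ↔ z ∈ P := by
    intro z
    rw [hQ, Submodule.starProjection_apply_eq_zero_iff, Submodule.orthogonal_orthogonal]
  have hx0 : x ≠ 0 := by rintro rfl; exact hxP P.zero_mem
  have hQx : 0 < ‖Q (rad5 x)‖ := by
    rw [norm_pos_iff, rad5, map_smul]
    exact smul_ne_zero (inv_ne_zero (norm_ne_zero_iff.2 hx0)) (fun h => hxP ((hQP x).1 h))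
  obtain ⟨c, hc, hlow⟩ := lower_dens K x P hP.symm hTan
  obtain ⟨r0, hr0, hlow⟩ := mem_nhdsGT_iff_exists_Ioo_subset.1 hlow
  obtain ⟨n, hn1, hn2, hn3, hn4⟩ := ((hηex _ hQx).and ((hηex c hc).and
    ((hηex r0 hr0).and (eventually_ge_atTop ⌈‖x‖⌉₊)))).exists
  have hηn : (0 : ℝ) < η n := by exact_mod_cast hηpos n
  have hup := upper_dens K x P hP.symm hTan Q (fun z hz => (hQP z).2 hz)
    (by positivity : 0 < (η n : ℝ) / 4) ((η n : ℝ≥0∞) / (κ n : ℝ≥0∞) ^ d)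
    (ENNReal.div_pos (by simpa using (hηpos n).ne')
      (ENNReal.rpow_ne_top_of_nonneg hd ENNReal.coe_ne_top)).ne'
  obtain ⟨r1, hr1, hup⟩ := mem_nhdsGT_iff_exists_Ioo_subset.1 hup
  obtain ⟨m, hm⟩ := (hηex r1 hr1).exists
  have hρ : 0 < (min (η n : ℝ) (η m)) / 2 := by
    have : (0 : ℝ) < η m := by exact_mod_cast hηpos m
    positivity
  obtain ⟨j, hj⟩ := (TopologicalSpace.denseRange_denseSeq (Rn N)).exists_dist_lt x hρ
  simp only [mem_iUnion]
  refine ⟨n, m, j, ⟨hxK, (Nat.le_ceil _).trans (by exact_mod_cast hn4), ?_, Q, hQ1, hn1.le, ?_⟩, ?_⟩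
  · intro s hs hs'
    refine le_trans ?_ (hlow ⟨hs, hs'.trans hn3⟩)
    rw [ENNReal.le_ofReal_iff_toReal_le ENNReal.coe_ne_top hc.le]
    exact hn2.le
  · intro r hr hr'
    have := hup ⟨hr, hr'.trans hm⟩
    exact ENNReal.mul_lt_of_lt_div' this
  · rw [mem_ball]; push_cast; exact hj

/-- Let `N ≥ 3` and let `C ⊆ ℝ^N` be a closed cone (`tC ⊆ C` for all
`t ≥ 0`) with `C ∩ S^{N-1}` `(N-2)`-rectifiable of finite `H^{N-2}` measure, and let
`K ⊆ C` be closed. Then `K` is `(N-1)`-rectifiable and, for `H^{N-1}`-a.e. `x ∈ K`,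
every `(N-1)`-dimensional approximate tangent plane of `K` at `x` contains `x`. -/
theorem statement5 {N : ℕ} (hN : 3 ≤ N) (C : Set (Rn N)) (hCc : IsClosed C)
    (hcone : ∀ t : ℝ, 0 ≤ t → ∀ x ∈ C, t • x ∈ C)
    (hrect : KRectifiable N (N - 2) (C ∩ sphere (0 : Rn N) 1))
    (hfin : μH[(N : ℝ) - 2] (C ∩ sphere (0 : Rn N) 1) < ⊤)
    (K : Set (Rn N)) (hK : IsClosed K) (hKC : K ⊆ C) :
    KRectifiable N (N - 1) K ∧
    ∀ᵐ x ∂(μH[(N : ℝ) - 1]).restrict K,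
      ∀ P : Submodule ℝ (Rn N), Module.finrank ℝ P = N - 1 →
        ApproxTangentAt N ((N : ℝ) - 1) K x P → x ∈ P := by
  obtain ⟨k, rfl⟩ : ∃ k, N = k + 2 := ⟨N - 2, by omega⟩
  have e2 : ((k + 2 : ℕ) : ℝ) - 2 = (k : ℝ) := by push_cast; ring
  have e1 : ((k + 2 : ℕ) : ℝ) - 1 = ((k + 1 : ℕ) : ℝ) := by push_cast; ring
  have h1 : k + 2 - 1 = k + 1 := rfl
  refine ⟨rect_part (by omega) C hcone hrect K hKC, ?_⟩
  have hnull : μH[((k + 2 : ℕ) : ℝ) - 1] (C ∩ sphere (0 : Rn (k + 2)) 1) = 0 := by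
    rcases Measure.hausdorffMeasure_zero_or_top
      (by linarith : ((k + 2 : ℕ) : ℝ) - 2 < ((k + 2 : ℕ) : ℝ) - 1)
      (C ∩ sphere (0 : Rn (k + 2)) 1) with h | h
    · exact h
    · exact absurd h hfin.ne
  have := tangent_part (d := ((k + 2 : ℕ) : ℝ) - 1) (by rw [e1]; positivity) K hK ?_
  · filter_upwards [this] with x hx P hP hT
    exact hx P (by rw [hP, e1, h1]) hT
  · refine measure_mono_null ?_ hnull
    rintro _ ⟨x, ⟨hxK, hx0⟩, rfl⟩
    refine ⟨hcone _ (by positivity) _ (hKC hxK), ?_⟩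
    rw [mem_sphere_zero_iff_norm, rad5, norm_smul, norm_inv, norm_norm,
      inv_mul_cancel₀ (norm_ne_zero_iff.2 hx0)]
end
end

section
/- Let E₀ = { (−cos φ, 0, sin φ) : φ ∈ [−π/2, π/2] } ⊆ S² be a closed half great circle, and let K ⊆ E₀ be a closed set with Λ(K) = 3/4. Then K = E₀. -/
open MeasureTheory Metric Set Filter
open scoped ENNReal NNReal Topology

noncomputable section

/-- The unit sphere `S² ⊆ ℝ³`. -/
def S2 : Set (Rn 3) := sphere (0 : Rn 3) 1

/-- The open cone (with vertex removed) over a subset `U` of the sphere. -/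
def coneOver (U : Set (Rn 3)) : Set (Rn 3) :=
  {z | ∃ t : ℝ, 0 < t ∧ ∃ y ∈ U, z = t • y}

/-- Admissible test functions for the Rayleigh quotient on `S² ∖ K`: a locally Lipschitz
function on `S² ∖ K` is encoded by its radially `0`-homogeneous extension `g` (so that
the ambient gradient of `g` at points of the sphere is the tangential gradient `∇_τ`),
with `0 < ∫_{S²} g² dH² < ∞`, finite tangential energy on `S² ∖ K`, and zero mean. -/
def SphAdmissible (K : Set (Rn 3)) (g : Rn 3 → ℝ) : Prop :=
  (∀ (y : Rn 3) (t : ℝ), 0 < t → g (t • y) = g y) ∧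
  LocLipOn 3 g (coneOver (S2 \ K)) ∧
  0 < (∫⁻ y in S2, ENNReal.ofReal ((g y) ^ 2) ∂μH[(2 : ℝ)]) ∧
  (∫⁻ y in S2, ENNReal.ofReal ((g y) ^ 2) ∂μH[(2 : ℝ)]) < ⊤ ∧
  (∫⁻ y in S2 \ K, ENNReal.ofReal (‖gradient g y‖ ^ 2) ∂μH[(2 : ℝ)]) < ⊤ ∧
  (∫ y in S2, g y ∂μH[(2 : ℝ)]) = 0

/-- `Λ(K)`: the infimum of the Rayleigh quotients
`∫_{S² ∖ K} |∇_τ u|² dH² / ∫_{S²} u² dH²` over admissible `u`; for `S² ∖ K` connected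
this is the first nonzero Neumann eigenvalue of the Laplace–Beltrami operator
on `S² ∖ K`. -/
def Lam (K : Set (Rn 3)) : ℝ≥0∞ :=
  sInf { q : ℝ≥0∞ | ∃ g : Rn 3 → ℝ, SphAdmissible K g ∧
    q = (∫⁻ y in S2 \ K, ENNReal.ofReal (‖gradient g y‖ ^ 2) ∂μH[(2 : ℝ)]) /
        (∫⁻ y in S2, ENNReal.ofReal ((g y) ^ 2) ∂μH[(2 : ℝ)]) }

/-- The closed half great circle `E₀ = {(-cos φ, 0, sin φ) : φ ∈ [-π/2, π/2]} ⊆ S²`. -/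
def halfCircle : Set (Rn 3) :=
  {x | ∃ φ : ℝ, φ ∈ Icc (-(Real.pi / 2)) (Real.pi / 2) ∧
    x 0 = -Real.cos φ ∧ x 1 = 0 ∧ x 2 = Real.sin φ}

lemma deriv_sq_intervalIntegrable {f : ℝ → ℝ} {a b : ℝ} (hab : a ≤ b) {K : ℝ≥0}
    (hf : LipschitzOnWith K f (Icc a b)) {w : ℝ → ℝ} (hw : ContinuousOn w (Icc a b)) :
    IntervalIntegrable (fun x => w x * deriv f x ^ 2) volume a b := by
  obtain ⟨M, hM⟩ := isCompact_Icc.exists_bound_of_continuousOn hw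
  rw [intervalIntegrable_iff_integrableOn_Ioo_of_le hab]
  refine Integrable.of_bound (C := M * K ^ 2) ?_ ?_
  · refine AEStronglyMeasurable.mul ?_ ?_
    · exact (hw.mono Ioo_subset_Icc_self).aestronglyMeasurable measurableSet_Ioo
    · exact ((measurable_deriv f).pow_const 2).aestronglyMeasurable
  · refine (ae_restrict_iff' measurableSet_Ioo).2 (ae_of_all _ fun x hx => ?_)
    have h1 : ‖deriv f x‖ ≤ K :=
      norm_deriv_le_of_lipschitzOn (Icc_mem_nhds hx.1 hx.2) hf
    have h2 := hM x (Ioo_subset_Icc_self hx)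
    rw [norm_mul, norm_pow]
    have : 0 ≤ M := (norm_nonneg _).trans h2
    gcongr

lemma riccati {f w p p' V : ℝ → ℝ} {a b : ℝ} (hab : a ≤ b) {K : ℝ≥0}
    (hf : LipschitzOnWith K f (Icc a b))
    (hp : ∀ x ∈ Icc a b, HasDerivAt p (p' x) x) (hp' : ContinuousOn p' (Icc a b))
    (hw : ContinuousOn w (Icc a b)) (hwpos : ∀ x ∈ Icc a b, 0 < w x)
    (hVc : ContinuousOn V (Icc a b)) (hV : ∀ x ∈ Icc a b, V x ≤ p' x - p x ^ 2 / w x) :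
    p a * f a ^ 2 - p b * f b ^ 2 + ∫ x in a..b, V x * f x ^ 2 ≤
      ∫ x in a..b, w x * deriv f x ^ 2 := by
  have hfc : ContinuousOn f (Icc a b) := hf.continuousOn
  have hpc : ContinuousOn p (Icc a b) := fun x hx => (hp x hx).continuousAt.continuousWithinAt
  have hfac : AbsolutelyContinuousOnInterval f a b := by
    apply LipschitzOnWith.absolutelyContinuousOnInterval (K := K)
    rwa [uIcc_of_le hab]
  obtain ⟨M, hM⟩ := isCompact_Icc.exists_bound_of_continuousOn hp'
  have hplip : LipschitzOnWith (Real.toNNReal M) p (Icc a b) := by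
    apply Convex.lipschitzOnWith_of_nnnorm_hasDerivWithin_le (convex_Icc a b)
      (fun x hx => (hp x hx).hasDerivWithinAt)
    intro x hx
    rw [← NNReal.coe_le_coe]
    exact (hM x hx).trans (Real.le_coe_toNNReal M)
  have hpac : AbsolutelyContinuousOnInterval p a b := by
    apply LipschitzOnWith.absolutelyContinuousOnInterval (K := Real.toNNReal M)
    rwa [uIcc_of_le hab]
  have hg := hpac.mul (hfac.mul hfac)
  have hftc := hg.integral_deriv_eq_sub
  have hdi := hg.intervalIntegrable_deriv
  have hsq := deriv_sq_intervalIntegrable hab hf hw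
  have hVi : IntervalIntegrable (fun x => V x * f x ^ 2) volume a b := by
    apply ContinuousOn.intervalIntegrable
    rw [uIcc_of_le hab]
    exact hVc.mul (hfc.pow 2)
  have key : ∫ x in a..b, (V x * f x ^ 2 - deriv (p * (f * f)) x) ≤
      ∫ x in a..b, w x * deriv f x ^ 2 := by
    apply intervalIntegral.integral_mono_ae_restrict hab (hVi.sub hdi) hsq
    have hdf := hfac.ae_differentiableAt
    rw [uIcc_of_le hab] at hdf
    refine (ae_restrict_iff' measurableSet_Icc).2 ?_
    filter_upwards [hdf] with x hx hxm
    have hd := (hx hxm).hasDerivAt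
    have h1 : deriv (p * (f * f)) x = p' x * (f x * f x) + p x * (deriv f x * f x + f x * deriv f x) :=
      ((hp x hxm).mul (hd.mul hd)).deriv
    rw [h1]
    have hw0 := hwpos x hxm
    have h2 := mul_le_mul_of_nonneg_right (hV x hxm) (sq_nonneg (f x))
    have h3 : 0 ≤ (w x * deriv f x + p x * f x) ^ 2 / w x := by positivity
    have h4 : (w x * deriv f x + p x * f x) ^ 2 / w x =
      w x * deriv f x ^ 2 + 2 * p x * f x * deriv f x + p x ^ 2 / w x * f x ^ 2 := by
      field_simp; ring
    rw [h4] at h3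
    nlinarith
  rw [intervalIntegral.integral_sub hVi hdi, hftc] at key
  simp only [Pi.mul_apply] at key
  nlinarith

lemma exhaust {F : ℝ → ℝ≥0∞} {c : ℝ≥0∞} {l r : ℝ}
    (h : ∀ a b, l < a → a < b → b < r → ∫⁻ x in Ioc a b, F x ≤ c) :
    ∫⁻ x in Ioo l r, F x ≤ c := by
  by_cases hlr : l < r
  swap
  · simp [Ioo_eq_empty hlr]
  obtain ⟨u, hu, hul, hut⟩ := exists_seq_strictAnti_tendsto' (show l < (l + r) / 2 by linarith)
  obtain ⟨v, hv, hvl, hvt⟩ := exists_seq_strictMono_tendsto' (show (l + r) / 2 < r by linarith)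
  have hU : Ioo l r = ⋃ n, Ioc (u n) (v n) := by
    ext x
    simp only [mem_iUnion]
    constructor
    · rintro ⟨h1, h2⟩
      have e1 := hut.eventually (gt_mem_nhds h1)
      have e2 := hvt.eventually (lt_mem_nhds h2)
      obtain ⟨n, hn⟩ := (e1.and e2).exists
      exact ⟨n, hn.1, hn.2.le⟩
    · rintro ⟨n, h1, h2⟩
      exact ⟨(hul n).1.trans h1, h2.trans_lt (hvl n).2⟩
  rw [hU, setLIntegral_iUnion_of_directed]
  · apply iSup_le
    intro n
    exact h _ _ (hul n).1 ((hul n).2.trans (hvl n).1) (hvl n).2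
  · apply Monotone.directed_le
    intro n m hnm
    exact Ioc_subset_Ioc (hu.antitone hnm) (hv.monotone hnm)

lemma ofReal_interval {F : ℝ → ℝ} {a b : ℝ} (hab : a ≤ b) (hi : IntervalIntegrable F volume a b)
    (h0 : ∀ x ∈ Ioc a b, 0 ≤ F x) :
    ENNReal.ofReal (∫ x in a..b, F x) = ∫⁻ x in Ioc a b, ENNReal.ofReal (F x) := by
  rw [intervalIntegral.integral_of_le hab, ofReal_integral_eq_lintegral_ofReal]
  · exact (intervalIntegrable_iff_integrableOn_Ioc_of_le hab).1 hi
  · exact (ae_restrict_iff' measurableSet_Ioc).2 (ae_of_all _ h0)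

lemma incr_sq {f : ℝ → ℝ} {s t : ℝ} (hst : s ≤ t) {K : ℝ≥0} (hf : LipschitzOnWith K f (Icc s t)) :
    ENNReal.ofReal ((f t - f s) ^ 2) ≤
      ENNReal.ofReal (t - s) * ∫⁻ x in Ioc s t, ENNReal.ofReal (deriv f x ^ 2) := by
  rcases hst.eq_or_lt with rfl | hlt
  · simp
  have hfac : AbsolutelyContinuousOnInterval f s t := by
    apply LipschitzOnWith.absolutelyContinuousOnInterval (K := K)
    rwa [uIcc_of_le hst]
  have hftc := hfac.integral_deriv_eq_sub
  have hdi := hfac.intervalIntegrable_deriv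
  have hsq := deriv_sq_intervalIntegrable (w := fun _ => 1) hst hf continuousOn_const
  simp only [one_mul] at hsq
  rw [← ofReal_interval hst hsq (fun x _ => sq_nonneg _), ← ENNReal.ofReal_mul (by linarith)]
  apply ENNReal.ofReal_le_ofReal
  set l := (f t - f s) / (t - s) with hl
  have h0 : 0 ≤ ∫ x in s..t, (deriv f x ^ 2 - (2 * l) * deriv f x + l ^ 2) := by
    apply intervalIntegral.integral_nonneg hst
    intro x _
    nlinarith [sq_nonneg (deriv f x - l)]
  rw [intervalIntegral.integral_add (hsq.sub (hdi.const_mul _)) (by simp),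
    intervalIntegral.integral_sub hsq (hdi.const_mul _), intervalIntegral.integral_const_mul,
    hftc, intervalIntegral.integral_const, smul_eq_mul] at h0
  have hpos : 0 < t - s := by linarith
  have hl' : l * (t - s) = f t - f s := by rw [hl]; field_simp
  have := mul_nonneg hpos.le h0
  rw [← hl'] at this ⊢
  nlinarith

def k1 (s t x : ℝ) : ℝ≥0∞ := if s < x ∧ x ≤ t then ENNReal.ofReal (t - s) else 0

lemma measurable_k1 : Measurable (fun q : ℝ × ℝ × ℝ => k1 q.1 q.2.1 q.2.2) := by
  unfold k1
  refine Measurable.ite ?_ (by fun_prop) (by fun_prop)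
  exact (measurableSet_lt measurable_fst (measurable_snd.comp measurable_snd)).inter
    (measurableSet_le (measurable_snd.comp measurable_snd) (measurable_fst.comp measurable_snd))

lemma k1_int {a b x : ℝ} (hx : x ∈ Ioo a b) :
    ∫⁻ s in Ioo a b, ∫⁻ t in Ioo a b, k1 s t x ≤
      ENNReal.ofReal ((b - a) * ((x - a) * (b - x)) / 2) := by
  have h1 : ∀ s, ∫⁻ t in Ioo a b, k1 s t x ≤
      if s < x then ENNReal.ofReal (((b - s) ^ 2 - (x - s) ^ 2) / 2) else 0 := by
    intro s
    split_ifs with h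
    · calc ∫⁻ t in Ioo a b, k1 s t x
          ≤ ∫⁻ t in Ioo a b, (Icc x b).indicator (fun t => ENNReal.ofReal (t - s)) t := by
            apply setLIntegral_mono' measurableSet_Ioo
            intro t ht
            unfold k1
            split_ifs with h2
            · rw [indicator_of_mem]
              exact ⟨h2.2, ht.2.le⟩
            · exact zero_le
        _ ≤ ∫⁻ t, (Icc x b).indicator (fun t => ENNReal.ofReal (t - s)) t :=
            setLIntegral_le_lintegral _ _
        _ = ∫⁻ t in Icc x b, ENNReal.ofReal (t - s) := lintegral_indicator measurableSet_Icc _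
        _ = ∫⁻ t in Ioc x b, ENNReal.ofReal (t - s) := by rw [restrict_Ioc_eq_restrict_Icc]
        _ = ENNReal.ofReal (∫ t in x..b, (t - s)) := by
            rw [ofReal_interval hx.2.le]
            · exact Continuous.intervalIntegrable (by fun_prop) _ _
            · intro t ht; linarith [ht.1]
        _ = _ := by
            congr 1
            rw [intervalIntegral.integral_sub (by simp) (by simp)]
            simp
            ring
    · rw [show (fun t => k1 s t x) = fun _ => 0 by
        funext t; unfold k1; rw [if_neg]; tauto]
      simp
  calc _ ≤ ∫⁻ s in Ioo a b, (Ioc a x).indicator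
        (fun s => ENNReal.ofReal (((b - s) ^ 2 - (x - s) ^ 2) / 2)) s := by
        apply setLIntegral_mono' measurableSet_Ioo
        intro s hs
        refine (h1 s).trans ?_
        split_ifs with h
        · rw [indicator_of_mem]
          exact ⟨hs.1, h.le⟩
        · exact zero_le
    _ ≤ ∫⁻ s, (Ioc a x).indicator
        (fun s => ENNReal.ofReal (((b - s) ^ 2 - (x - s) ^ 2) / 2)) s :=
            setLIntegral_le_lintegral _ _
    _ = ∫⁻ s in Ioc a x, ENNReal.ofReal (((b - s) ^ 2 - (x - s) ^ 2) / 2) :=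
        lintegral_indicator measurableSet_Ioc _
    _ = ENNReal.ofReal (∫ s in a..x, (((b - s) ^ 2 - (x - s) ^ 2) / 2)) := by
        rw [ofReal_interval hx.1.le]
        · exact Continuous.intervalIntegrable (by fun_prop) _ _
        · intro s hs
          nlinarith [hs.2, hx.2, mul_nonneg (sub_nonneg.2 hx.2.le) (sub_nonneg.2 hs.2)]
    _ ≤ _ := by
        apply ENNReal.ofReal_le_ofReal
        apply le_of_eq
        have : ∀ s : ℝ, ((b - s) ^ 2 - (x - s) ^ 2) / 2 = (b ^ 2 - x ^ 2) / 2 - (b - x) * s := by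
          intro s; ring
        simp only [this]
        rw [intervalIntegral.integral_sub (by simp)
          (Continuous.intervalIntegrable (by fun_prop) _ _), intervalIntegral.integral_const_mul]
        simp
        ring

lemma double_diff {f : ℝ → ℝ} {a b : ℝ} (hf : LocallyLipschitzOn (Ioo a b) f) :
    ∫⁻ s in Ioo a b, ∫⁻ t in Ioo a b, ENNReal.ofReal ((f t - f s) ^ 2) ≤
      ENNReal.ofReal (b - a) * ∫⁻ x in Ioo a b, ENNReal.ofReal ((x - a) * (b - x)) *
        ENNReal.ofReal (deriv f x ^ 2) := by
  set D : ℝ → ℝ≥0∞ := fun x => ENNReal.ofReal (deriv f x ^ 2) with hD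
  have hDm : Measurable D := ((measurable_deriv f).pow_const 2).ennreal_ofReal
  have hm3 : Measurable fun q : ℝ × ℝ × ℝ => k1 q.1 q.2.1 q.2.2 * D q.2.2 :=
    measurable_k1.mul (hDm.comp (by fun_prop))
  have step : ∀ s ∈ Ioo a b, ∀ t ∈ Ioo a b, s ≤ t → ENNReal.ofReal ((f t - f s) ^ 2) ≤
      ∫⁻ x in Ioo a b, k1 s t x * D x := by
    intro s hs t ht hst
    obtain ⟨K, hK⟩ := (hf.mono (Icc_subset_Ioo hs.1 ht.2)).exists_lipschitzOnWith_of_compact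
      isCompact_Icc
    refine (incr_sq hst hK).trans ?_
    rw [← lintegral_const_mul _ hDm, ← lintegral_indicator measurableSet_Ioc,
      ← lintegral_indicator measurableSet_Ioo]
    apply lintegral_mono
    intro x
    simp only [indicator]
    split_ifs with h1 h2
    · unfold k1; rw [if_pos ⟨h1.1, h1.2⟩]
    · exact absurd ⟨hs.1.trans h1.1, h1.2.trans_lt ht.2⟩ h2
    · exact zero_le
    · exact zero_le
  have step2 : ∀ s ∈ Ioo a b, ∀ t ∈ Ioo a b, ENNReal.ofReal ((f t - f s) ^ 2) ≤
      (∫⁻ x in Ioo a b, k1 s t x * D x) + ∫⁻ x in Ioo a b, k1 t s x * D x := by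
    intro s hs t ht
    rcases le_total s t with h | h
    · exact (step s hs t ht h).trans le_self_add
    · rw [show (f t - f s) ^ 2 = (f s - f t) ^ 2 by ring]
      exact (step t ht s hs h).trans le_add_self
  have hmI : Measurable fun q : ℝ × ℝ => ∫⁻ x in Ioo a b, k1 q.1 q.2 x * D x := by
    apply Measurable.lintegral_prod_right' (f := fun (z : (ℝ × ℝ) × ℝ) => k1 z.1.1 z.1.2 z.2 * D z.2)
    exact hm3.comp (by fun_prop : Measurable fun z : (ℝ × ℝ) × ℝ => (z.1.1, z.1.2, z.2))
  set J := ∫⁻ s in Ioo a b, ∫⁻ t in Ioo a b, ∫⁻ x in Ioo a b, k1 s t x * D x with hJ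
  have hJ' : ∫⁻ s in Ioo a b, ∫⁻ t in Ioo a b, ∫⁻ x in Ioo a b, k1 t s x * D x = J := by
    rw [hJ]
    exact lintegral_lintegral_swap
      (f := fun s t => ∫⁻ x in Ioo a b, k1 t s x * D x)
      (hmI.comp measurable_swap).aemeasurable
  have h2J : ∫⁻ s in Ioo a b, ∫⁻ t in Ioo a b, ENNReal.ofReal ((f t - f s) ^ 2) ≤ J + J := by
    calc _ ≤ ∫⁻ s in Ioo a b, ∫⁻ t in Ioo a b, ((∫⁻ x in Ioo a b, k1 s t x * D x) +
        ∫⁻ x in Ioo a b, k1 t s x * D x) := by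
          apply setLIntegral_mono' measurableSet_Ioo
          intro s hs
          apply setLIntegral_mono' measurableSet_Ioo
          intro t ht
          exact step2 s hs t ht
      _ = ∫⁻ s in Ioo a b, ((∫⁻ t in Ioo a b, ∫⁻ x in Ioo a b, k1 s t x * D x) +
        ∫⁻ t in Ioo a b, ∫⁻ x in Ioo a b, k1 t s x * D x) := by
          apply lintegral_congr
          intro s
          rw [lintegral_add_left]
          exact hmI.comp (by fun_prop : Measurable fun t : ℝ => (s, t))
      _ = J + J := by
          rw [lintegral_add_left, hJ']
          exact Measurable.lintegral_prod_right' (f := fun q : ℝ × ℝ =>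
            ∫⁻ x in Ioo a b, k1 q.1 q.2 x * D x) hmI
  have hJle : J ≤ ∫⁻ x in Ioo a b, ENNReal.ofReal ((b - a) * ((x - a) * (b - x)) / 2) * D x := by
    calc J = ∫⁻ s in Ioo a b, ∫⁻ x in Ioo a b, ∫⁻ t in Ioo a b, k1 s t x * D x := by
          apply lintegral_congr
          intro s
          exact lintegral_lintegral_swap (f := fun t x => k1 s t x * D x)
            (hm3.comp (by fun_prop : Measurable fun z : ℝ × ℝ => (s, z.1, z.2))).aemeasurable
      _ = ∫⁻ x in Ioo a b, ∫⁻ s in Ioo a b, ∫⁻ t in Ioo a b, k1 s t x * D x := by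
          apply lintegral_lintegral_swap (f := fun s x => ∫⁻ t in Ioo a b, k1 s t x * D x)
          apply Measurable.aemeasurable
          apply Measurable.lintegral_prod_right' (f := fun (z : (ℝ × ℝ) × ℝ) =>
            k1 z.1.1 z.2 z.1.2 * D z.1.2)
          exact hm3.comp (by fun_prop : Measurable fun z : (ℝ × ℝ) × ℝ => (z.1.1, z.2, z.1.2))
      _ = ∫⁻ x in Ioo a b, (∫⁻ s in Ioo a b, ∫⁻ t in Ioo a b, k1 s t x) * D x := by
          apply lintegral_congr
          intro x
          rw [← lintegral_mul_const]
          · apply lintegral_congr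
            intro s
            rw [lintegral_mul_const]
            exact measurable_k1.comp (by fun_prop : Measurable fun t : ℝ => (s, t, x))
          · apply Measurable.lintegral_prod_right' (f := fun (z : ℝ × ℝ) => k1 z.1 z.2 x)
            exact measurable_k1.comp (by fun_prop : Measurable fun z : ℝ × ℝ => (z.1, z.2, x))
      _ ≤ _ := by
          apply setLIntegral_mono' measurableSet_Ioo
          intro x hx
          gcongr
          exact k1_int hx
  refine h2J.trans ((add_le_add hJle hJle).trans ?_)
  rw [← lintegral_add_left (by fun_prop), ← lintegral_const_mul _ (by fun_prop)]
  apply setLIntegral_mono' measurableSet_Ioo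
  intro x hx
  have hab : 0 ≤ b - a := by linarith [hx.1, hx.2]
  have hxx : 0 ≤ (x - a) * (b - x) := mul_nonneg (by linarith [hx.1]) (by linarith [hx.2])
  rw [← add_mul, ← mul_assoc (ENNReal.ofReal (b - a)), ← ENNReal.ofReal_mul hab, ← ENNReal.ofReal_add (by positivity) (by positivity)]
  apply le_of_eq
  congr 2
  ring

lemma wirt_aux {f : ℝ → ℝ} {k : ℝ} (hk : 0 < k) (hk1 : k ≤ 1) {a b : ℝ} (ha : 0 < a) (hab : a ≤ b)
    (hb : b < Real.pi) {K : ℝ≥0} (hf : LipschitzOnWith K f (Icc a b)) :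
    k ^ 2 * ∫ x in a..b, f x ^ 2 ≤ (∫ x in a..b, deriv f x ^ 2) +
      k * Real.cos (k * a) / Real.sin (k * a) * f a ^ 2 -
      k * Real.cos (k * b) / Real.sin (k * b) * f b ^ 2 := by
  have hs : ∀ x ∈ Icc a b, 0 < Real.sin (k * x) := by
    intro x hx
    apply Real.sin_pos_of_pos_of_lt_pi
    · have : 0 < x := ha.trans_le hx.1
      positivity
    · have : 0 < x := ha.trans_le hx.1
      nlinarith [hx.2]
  have := riccati (f := f) (w := fun _ => 1) (p := fun x => -(k * Real.cos (k * x) / Real.sin (k * x)))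
    (p' := fun x => k ^ 2 / Real.sin (k * x) ^ 2) (V := fun _ => k ^ 2) hab hf ?_ ?_
    continuousOn_const (fun _ _ => one_pos) continuousOn_const ?_
  · simp only [one_mul, intervalIntegral.integral_const_mul] at this
    linarith
  · intro x hx
    have h := hs x hx
    have h1 : HasDerivAt (fun x : ℝ => k * x) k x := by
      simpa using (hasDerivAt_id x).const_mul k
    have h2 := ((h1.cos.const_mul k).div h1.sin h.ne').neg
    refine h2.congr_deriv ?_
    have := Real.sin_sq_add_cos_sq (k * x)
    have hne := h.ne'
    field_simp
    linear_combination this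
  · apply ContinuousOn.div continuousOn_const (by fun_prop)
    intro x hx
    exact (pow_pos (hs x hx) 2).ne'
  · intro x hx
    have h := hs x hx
    apply le_of_eq
    have := Real.sin_sq_add_cos_sq (k * x)
    field_simp
    linear_combination this

lemma wirt {f : ℝ → ℝ} {k : ℝ} (hk : 0 < k) (hk1 : k ≤ 1)
    (hf : LocallyLipschitzOn (Ioo 0 Real.pi) f)
    (h0 : ∃ C η : ℝ, 0 < η ∧ ∀ x ∈ Ioo 0 η, k * Real.cos (k * x) / Real.sin (k * x) * f x ^ 2 ≤ C * x)
    (h1 : ∃ C η : ℝ, 0 < η ∧ ∀ x ∈ Ioo (Real.pi - η) Real.pi,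
      -(k * Real.cos (k * x) / Real.sin (k * x) * f x ^ 2) ≤ C * (Real.pi - x)) :
    ENNReal.ofReal (k ^ 2) * ∫⁻ x in Ioo 0 Real.pi, ENNReal.ofReal (f x ^ 2) ≤
      ∫⁻ x in Ioo 0 Real.pi, ENNReal.ofReal (deriv f x ^ 2) := by
  obtain ⟨C0, η0, hη0, H0⟩ := h0
  obtain ⟨C1, η1, hη1, H1⟩ := h1
  rw [← lintegral_const_mul' _ _ ENNReal.ofReal_ne_top]
  apply exhaust
  intro a0 b0 ha0 hab0 hb0
  apply ENNReal.le_of_forall_pos_le_add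
  intro ε hε _
  have e0 : ∀ᶠ x in 𝓝[>] (0 : ℝ), C0 * x < ε / 2 := by
    have : Tendsto (fun x : ℝ => C0 * x) (𝓝[>] 0) (𝓝 (C0 * 0)) :=
      (continuous_const.mul continuous_id).continuousAt.tendsto.mono_left nhdsWithin_le_nhds
    apply this.eventually (gt_mem_nhds _)
    simpa using hε
  have e1 : ∀ᶠ x in 𝓝[<] Real.pi, C1 * (Real.pi - x) < ε / 2 := by
    have : Tendsto (fun x : ℝ => C1 * (Real.pi - x)) (𝓝[<] Real.pi) (𝓝 (C1 * (Real.pi - Real.pi))) :=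
      (by fun_prop : Continuous fun x : ℝ => C1 * (Real.pi - x)).continuousAt.tendsto.mono_left
        nhdsWithin_le_nhds
    apply this.eventually (gt_mem_nhds _)
    simpa using hε
  obtain ⟨a, ⟨haε, haη⟩, haa⟩ := ((e0.and (Ioo_mem_nhdsGT hη0)).and (Ioo_mem_nhdsGT ha0)).exists
  obtain ⟨b, ⟨hbε, hbη⟩, hbb⟩ := ((e1.and (Ioo_mem_nhdsLT (by linarith : Real.pi - η1 < Real.pi))).and
    (Ioo_mem_nhdsLT hb0)).exists
  have hab : a ≤ b := by linarith [haa.2, hbb.1]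
  obtain ⟨K, hK⟩ := (hf.mono (Icc_subset_Ioo haa.1 hbb.2)).exists_lipschitzOnWith_of_compact
    isCompact_Icc
  have hsq := deriv_sq_intervalIntegrable (w := fun _ => 1) hab hK continuousOn_const
  simp only [one_mul] at hsq
  have hfi : IntervalIntegrable (fun x => k ^ 2 * f x ^ 2) volume a b := by
    apply ContinuousOn.intervalIntegrable
    rw [uIcc_of_le hab]
    exact continuousOn_const.mul (hK.continuousOn.pow 2)
  have key := wirt_aux hk hk1 haa.1 hab hbb.2 hK
  have h2 := H0 a haη
  have h3 := H1 b hbη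
  calc ∫⁻ x in Ioc a0 b0, ENNReal.ofReal (k ^ 2) * ENNReal.ofReal (f x ^ 2)
      ≤ ∫⁻ x in Ioc a b, ENNReal.ofReal (k ^ 2 * f x ^ 2) := by
        simp_rw [ENNReal.ofReal_mul (sq_nonneg k)]
        exact lintegral_mono_set (Ioc_subset_Ioc haa.2.le hbb.1.le)
    _ = ENNReal.ofReal (∫ x in a..b, k ^ 2 * f x ^ 2) := by
        rw [ofReal_interval hab hfi (fun x _ => by positivity)]
    _ ≤ ENNReal.ofReal ((∫ x in a..b, deriv f x ^ 2) + ε) := by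
        apply ENNReal.ofReal_le_ofReal
        rw [intervalIntegral.integral_const_mul]
        linarith
    _ ≤ ENNReal.ofReal (∫ x in a..b, deriv f x ^ 2) + ε := by
        refine ENNReal.ofReal_add_le.trans ?_
        simp
    _ ≤ _ := by
        rw [ofReal_interval hab hsq (fun x _ => by positivity)]
        gcongr
        exact fun x hx => ⟨haa.1.trans hx.1, hx.2.trans_lt hbb.2⟩

lemma cot_bound {k x y C : ℝ} (hk : 0 < k) (hk1 : k ≤ 1) (hx : 0 < x) (hx1 : x < Real.pi / 2)
    (hy : |y| ≤ C * x) :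
    k * Real.cos (k * x) / Real.sin (k * x) * y ^ 2 ≤ (Real.pi / 2 * C ^ 2) * x := by
  have hkx : 0 < k * x := by positivity
  have hkx1 : k * x ≤ Real.pi / 2 := by nlinarith
  have hs := Real.mul_le_sin hkx.le hkx1
  have hsp : 0 < Real.sin (k * x) := lt_of_lt_of_le (by positivity) hs
  have hy2 : y ^ 2 ≤ C ^ 2 * x ^ 2 := by
    rw [← sq_abs, ← mul_pow]
    gcongr
  have h1 : k * Real.cos (k * x) / Real.sin (k * x) ≤ Real.pi / 2 / x := by
    rw [div_le_div_iff₀ hsp hx]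
    have h2 : k * Real.cos (k * x) * x ≤ k * x := by
      nlinarith [Real.cos_le_one (k * x)]
    refine h2.trans ?_
    have h3 := mul_le_mul_of_nonneg_left hs (by positivity : 0 ≤ Real.pi / 2)
    have h4 : Real.pi / 2 * (2 / Real.pi * (k * x)) = k * x := by
      field_simp
    linarith
  calc _ ≤ Real.pi / 2 / x * y ^ 2 := by gcongr
    _ ≤ Real.pi / 2 / x * (C ^ 2 * x ^ 2) := by gcongr
    _ = _ := by field_simp

lemma wirt_half {f : ℝ → ℝ} (hf : LocallyLipschitzOn (Ioo 0 Real.pi) f)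
    (h0 : ∃ C η : ℝ, 0 < η ∧ ∀ x ∈ Ioo 0 η, |f x| ≤ C * x) :
    ENNReal.ofReal (1 / 4) * ∫⁻ x in Ioo 0 Real.pi, ENNReal.ofReal (f x ^ 2) ≤
      ∫⁻ x in Ioo 0 Real.pi, ENNReal.ofReal (deriv f x ^ 2) := by
  obtain ⟨C, η, hη, H⟩ := h0
  have := wirt (k := 1 / 2) (by norm_num) (by norm_num) hf ?_ ?_
  · norm_num at this ⊢
    exact this
  · refine ⟨Real.pi / 2 * C ^ 2, min η (Real.pi / 2), lt_min hη (by positivity), fun x hx => ?_⟩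
    exact cot_bound (by norm_num) (by norm_num) hx.1 (hx.2.trans_le (min_le_right _ _))
      (H x ⟨hx.1, hx.2.trans_le (min_le_left _ _)⟩)
  · refine ⟨0, Real.pi, Real.pi_pos, fun x hx => ?_⟩
    have hx0 : 0 < x := by linarith [hx.1]
    have hc : 0 ≤ Real.cos (1 / 2 * x) := Real.cos_nonneg_of_mem_Icc ⟨by linarith [Real.pi_pos], by linarith [hx.2]⟩
    have hs : 0 ≤ Real.sin (1 / 2 * x) := Real.sin_nonneg_of_nonneg_of_le_pi (by linarith) (by linarith [hx.2])
    have : 0 ≤ 1 / 2 * Real.cos (1 / 2 * x) / Real.sin (1 / 2 * x) * f x ^ 2 := by positivity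
    linarith

lemma wirt_one {f : ℝ → ℝ} (hf : LocallyLipschitzOn (Ioo 0 Real.pi) f)
    (h0 : ∃ C η : ℝ, 0 < η ∧ ∀ x ∈ Ioo 0 η, |f x| ≤ C * x)
    (h1 : ∃ C η : ℝ, 0 < η ∧ ∀ x ∈ Ioo (Real.pi - η) Real.pi, |f x| ≤ C * (Real.pi - x)) :
    ∫⁻ x in Ioo 0 Real.pi, ENNReal.ofReal (f x ^ 2) ≤
      ∫⁻ x in Ioo 0 Real.pi, ENNReal.ofReal (deriv f x ^ 2) := by
  obtain ⟨C, η, hη, H⟩ := h0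
  obtain ⟨C1, η1, hη1, H1⟩ := h1
  have := wirt (k := 1) (by norm_num) (by norm_num) hf ?_ ?_
  · norm_num at this ⊢
    exact this
  · refine ⟨Real.pi / 2 * C ^ 2, min η (Real.pi / 2), lt_min hη (by positivity), fun x hx => ?_⟩
    exact cot_bound (by norm_num) (by norm_num) hx.1 (hx.2.trans_le (min_le_right _ _))
      (H x ⟨hx.1, hx.2.trans_le (min_le_left _ _)⟩)
  · refine ⟨Real.pi / 2 * C1 ^ 2, min η1 (Real.pi / 2), lt_min hη1 (by positivity), fun x hx => ?_⟩
    have hx1 : Real.pi - x < min η1 (Real.pi / 2) := by linarith [hx.1]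
    have := cot_bound (k := 1) (x := Real.pi - x) (y := f x) (C := C1) (by norm_num) (by norm_num)
      (by linarith [hx.2]) (hx1.trans_le (min_le_right _ _))
      (H1 x ⟨by linarith [hx1.trans_le (min_le_left _ _)], hx.2⟩)
    simp only [one_mul, Real.cos_pi_sub, Real.sin_pi_sub] at this ⊢
    refine le_trans (le_of_eq ?_) this
    ring

lemma lint_inv_top {l r c : ℝ} (hlr : l < r) (hc : c ∈ Icc l r) :
    ∫⁻ x in Ioo l r, ENNReal.ofReal (|x - c|⁻¹) = ⊤ := by
  by_contra h
  have h1 : IntervalIntegrable (fun x => (x - c)⁻¹) volume l r := by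
    rw [intervalIntegrable_iff_integrableOn_Ioo_of_le hlr.le]
    refine ⟨by fun_prop, ?_⟩
    rw [hasFiniteIntegral_iff_norm]
    simp only [norm_inv, Real.norm_eq_abs]
    exact lt_top_iff_ne_top.2 h
  rw [intervalIntegrable_sub_inv_iff, uIcc_of_le hlr.le] at h1
  rcases h1 with h1 | h1
  · exact hlr.ne h1
  · exact h1 hc

lemma small_near {f : ℝ → ℝ} (hfin : ∫⁻ s in Ioo (-1 : ℝ) 1, ENNReal.ofReal (1 / (1 - s ^ 2)) *
      ENNReal.ofReal (f s ^ 2) ≠ ⊤) {ε : ℝ} (hε : 0 < ε) {l r c : ℝ} (hl : -1 ≤ l) (hlr : l < r)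
    (hr : r ≤ 1) (hc : c ∈ Icc l r) (hc1 : c = 1 ∨ c = -1) : ∃ x ∈ Ioo l r, f x ^ 2 ≤ ε := by
  by_contra! hcon
  apply hfin
  rw [eq_top_iff]
  have h2 : ENNReal.ofReal (ε / 2) * ∫⁻ x in Ioo l r, ENNReal.ofReal (|x - c|⁻¹) = ⊤ := by
    rw [lint_inv_top hlr hc, ENNReal.mul_top]
    simpa using hε
  rw [← h2, ← lintegral_const_mul' _ _ ENNReal.ofReal_ne_top]
  refine le_trans ?_ (lintegral_mono_set (Ioo_subset_Ioo hl hr))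
  apply setLIntegral_mono' measurableSet_Ioo
  intro x hx
  have hx1 : -1 < x := hl.trans_lt hx.1
  have hx2 : x < 1 := hx.2.trans_le hr
  have hw : 0 < 1 - x ^ 2 := by nlinarith
  rw [← ENNReal.ofReal_mul (by positivity), ← ENNReal.ofReal_mul (by positivity)]
  apply ENNReal.ofReal_le_ofReal
  have h3 := hcon x hx
  have h4 : |x - c|⁻¹ / 2 ≤ 1 / (1 - x ^ 2) := by
    rcases hc1 with rfl | rfl
    · rw [abs_of_neg (by linarith), neg_sub, le_div_iff₀ hw]
      have h5 : 0 < 1 - x := by linarith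
      have h6 : (1 - x)⁻¹ / 2 * (1 - x ^ 2) = (1 + x) / 2 := by
        field_simp
        ring
      rw [h6]
      linarith
    · rw [abs_of_pos (by linarith), le_div_iff₀ hw]
      have : 0 < x - -1 := by linarith
      field_simp
      nlinarith
  calc ε / 2 * |x - c|⁻¹ = (|x - c|⁻¹ / 2) * ε := by ring
    _ ≤ 1 / (1 - x ^ 2) * f x ^ 2 := by gcongr

def PP (ε m k s : ℝ) : ℝ := s / 2 + ε * (m * s + k) / √(1 - s ^ 2)

lemma leg_piece {f : ℝ → ℝ} {a b m k ε δ e : ℝ} (hab : a ≤ b) (ha : -1 < a) (hb : b < 1) {K : ℝ≥0}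
    (hf : LipschitzOnWith K f (Icc a b))
    (hV : ∀ s ∈ Icc a b, δ ≤ e / (1 - s ^ 2) + ε * m / √(1 - s ^ 2) -
      ε ^ 2 * (m * s + k) ^ 2 / (1 - s ^ 2) ^ 2) :
    PP ε m k a * f a ^ 2 - PP ε m k b * f b ^ 2 + (3 / 4 + δ) * ∫ s in a..b, f s ^ 2 ≤
      (∫ s in a..b, (1 - s ^ 2) * deriv f s ^ 2) +
      (1 / 4 + e) * ∫ s in a..b, 1 / (1 - s ^ 2) * f s ^ 2 := by
  have hw : ∀ s ∈ Icc a b, 0 < 1 - s ^ 2 := by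
    intro s hs
    nlinarith [hs.1, hs.2]
  have hcw : ContinuousOn (fun s : ℝ => 1 / (1 - s ^ 2)) (Icc a b) :=
    ContinuousOn.div continuousOn_const (by fun_prop) (fun s hs => (hw s hs).ne')
  have hcq : ContinuousOn (fun s : ℝ => 1 / √(1 - s ^ 2)) (Icc a b) :=
    ContinuousOn.div continuousOn_const (by fun_prop) (fun s hs => (Real.sqrt_pos.2 (hw s hs)).ne')
  have := riccati (f := f) (w := fun s => 1 - s ^ 2) (p := PP ε m k)
    (p' := fun s => 1 / 2 + ε * m * (1 / √(1 - s ^ 2)) +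
      ε * (m * s + k) * s * ((1 / (1 - s ^ 2)) * (1 / √(1 - s ^ 2))))
    (V := fun s => 3 / 4 + δ - (1 / 4 + e) * (1 / (1 - s ^ 2))) hab hf ?_ ?_ (by fun_prop) hw ?_ ?_
  · have hfc := hf.continuousOn
    have e1 : ∫ x in a..b, (3 / 4 + δ - (1 / 4 + e) * (1 / (1 - x ^ 2))) * f x ^ 2 =
        (3 / 4 + δ) * (∫ s in a..b, f s ^ 2) - (1 / 4 + e) * ∫ s in a..b, 1 / (1 - s ^ 2) * f s ^ 2 := by
      rw [← intervalIntegral.integral_const_mul, ← intervalIntegral.integral_const_mul,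
        ← intervalIntegral.integral_sub]
      · congr 1; funext x; ring
      · apply ContinuousOn.intervalIntegrable
        rw [uIcc_of_le hab]
        exact continuousOn_const.mul (hfc.pow 2)
      · apply ContinuousOn.intervalIntegrable
        rw [uIcc_of_le hab]
        exact continuousOn_const.mul (hcw.mul (hfc.pow 2))
    rw [e1] at this
    linarith
  · intro s hs
    have h := hw s hs
    have hq := Real.sqrt_pos.2 h
    have h1 : HasDerivAt (fun s : ℝ => 1 - s ^ 2) (-(2 * s)) s := by
      simpa using (hasDerivAt_pow 2 s).const_sub 1
    have h2 := h1.sqrt h.ne'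
    have h3 : HasDerivAt (fun s : ℝ => ε * (m * s + k)) (ε * m) s := by
      simpa using (((hasDerivAt_id s).const_mul m).add_const k).const_mul ε
    have h4 := ((hasDerivAt_id s).div_const 2).add (h3.div h2 hq.ne')
    refine h4.congr_deriv ?_
    have hqq : √(1 - s ^ 2) ^ 2 = 1 - s ^ 2 := Real.sq_sqrt h.le
    generalize √(1 - s ^ 2) = q at *
    rw [← hqq]
    field_simp
    ring
  · exact (continuousOn_const.add (continuousOn_const.mul hcq)).add
      (ContinuousOn.mul (by fun_prop) (hcw.mul hcq))
  · exact continuousOn_const.sub (continuousOn_const.mul hcw)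
  · intro s hs
    have h := hw s hs
    have hq := Real.sqrt_pos.2 h
    have hv := hV s hs
    have hqq : √(1 - s ^ 2) ^ 2 = 1 - s ^ 2 := Real.sq_sqrt h.le
    unfold PP
    generalize √(1 - s ^ 2) = q at *
    have e2 : (1 / 2 + ε * m * (1 / q) + ε * (m * s + k) * s * ((1 / (1 - s ^ 2)) * (1 / q))) -
      (s / 2 + ε * (m * s + k) / q) ^ 2 / (1 - s ^ 2) =
      3 / 4 - 1 / 4 * (1 / (1 - s ^ 2)) + ε * m / q - ε ^ 2 * (m * s + k) ^ 2 / (1 - s ^ 2) ^ 2 := by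
      have hs2 : s ^ 2 = 1 - q ^ 2 := by linarith
      rw [← hqq]
      field_simp
      ring_nf
      simp only [hs2]
      ring
    rw [e2]
    have : e / (1 - s ^ 2) = e * (1 / (1 - s ^ 2)) := by ring
    linarith

set_option maxHeartbeats 1600000 in
lemma legendre {α β : ℝ} (hα : -1 < α) (hαβ : α < β) (hβ : β < 1) : ∃ δ : ℝ, 0 < δ ∧ δ ≤ 1 / 32 ∧
    ∀ f : ℝ → ℝ, LocallyLipschitzOn (Ioo (-1) 1) f →
    ENNReal.ofReal (3 / 4 + δ) * ∫⁻ s in Ioo (-1 : ℝ) 1, ENNReal.ofReal (f s ^ 2) ≤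
      (∫⁻ s in Ioo (-1 : ℝ) 1, ENNReal.ofReal (1 - s ^ 2) * ENNReal.ofReal (deriv f s ^ 2)) +
      (ENNReal.ofReal (1 / 4) * ∫⁻ s in Ioo (-1 : ℝ) 1, ENNReal.ofReal (1 / (1 - s ^ 2)) *
        ENNReal.ofReal (f s ^ 2)) +
      ENNReal.ofReal (3 / 4) * ∫⁻ s in Ioo α β, ENNReal.ofReal (1 / (1 - s ^ 2)) *
        ENNReal.ofReal (f s ^ 2) := by
  set c := min (1 + α) (1 - β) with hc
  have hc0 : 0 < c := lt_min (by linarith) (by linarith)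
  have hc1 : c ≤ 1 + α := min_le_left _ _
  have hc2 : c ≤ 1 - β := min_le_right _ _
  have hcle : c ≤ 1 := by linarith
  set ε := min (c ^ 4 / 16) ((β - α) * c / 8) with hε
  have hβα : 0 < β - α := by linarith
  have hε0 : 0 < ε := lt_min (by positivity) (by positivity)
  have hε1 : ε ≤ c ^ 4 / 16 := min_le_left _ _
  have hε2 : ε ≤ (β - α) * c / 8 := min_le_right _ _
  have hc4 : c ^ 4 ≤ 1 := pow_le_one₀ hc0.le hcle
  have hc42 : c ^ 4 ≤ c ^ 2 := pow_le_pow_of_le_one hc0.le hcle (by norm_num)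
  have hw1 : ∀ s : ℝ, -1 < s → s < 1 → 0 < 1 - s ^ 2 := fun s h1 h2 => by nlinarith
  -- outer pieces
  have hout : ∀ s y : ℝ, -1 < s → s < 1 → 0 ≤ y → y ≤ 1 / c → 
      ε / 2 ≤ 0 / (1 - s ^ 2) + ε * 1 / √(1 - s ^ 2) - ε ^ 2 * y ^ 2 := by
    intro s y h1 h2 h3 h4
    have hw := hw1 s h1 h2
    have hq := Real.sqrt_pos.2 hw
    have hq1 : √(1 - s ^ 2) ≤ 1 := by
      rw [Real.sqrt_le_one]; nlinarith
    have h5 : ε ≤ ε * 1 / √(1 - s ^ 2) := by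
      rw [le_div_iff₀ hq]; nlinarith
    have h6 : y ^ 2 ≤ 1 / c ^ 2 := by
      calc y ^ 2 ≤ (1 / c) ^ 2 := by gcongr
        _ = _ := by rw [div_pow, one_pow]
    have h7 : ε * y ^ 2 ≤ 1 / 16 := by
      calc ε * y ^ 2 ≤ (c ^ 2 / 16) * (1 / c ^ 2) := by
            gcongr; linarith
        _ = 1 / 16 := by field_simp
    have h8 : ε ^ 2 * y ^ 2 ≤ ε * (1 / 16) := by
      rw [pow_two, mul_assoc]; gcongr
    rw [zero_div]
    linarith
  refine ⟨ε / 2, by positivity, by linarith, ?_⟩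
  intro f hf
  by_cases hfin : ∫⁻ s in Ioo (-1 : ℝ) 1, ENNReal.ofReal (1 / (1 - s ^ 2)) *
        ENNReal.ofReal (f s ^ 2) = ⊤
  · rw [hfin, ENNReal.mul_top (by simp)]
    simp
  rw [← lintegral_const_mul' _ _ ENNReal.ofReal_ne_top]
  apply exhaust
  intro a0 b0 ha0 hab0 hb0
  apply ENNReal.le_of_forall_pos_le_add
  intro η hη _
  obtain ⟨a, ha, haη⟩ := small_near (f := f) hfin (ε := η) (by exact_mod_cast hη) (l := -1)
    (r := min a0 α) le_rfl (lt_min ha0 hα) ((min_le_right _ _).trans (by linarith))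
    (left_mem_Icc.2 (lt_min ha0 hα).le) (Or.inr rfl)
  obtain ⟨b, hb, hbη⟩ := small_near (f := f) hfin (ε := η) (by exact_mod_cast hη) (l := max b0 β)
    (r := 1) ((by linarith : -1 ≤ β).trans (le_max_right _ _)) (max_lt hb0 hβ) le_rfl
    (right_mem_Icc.2 (max_lt hb0 hβ).le) (Or.inl rfl)
  have haa0 : a ≤ a0 := ha.2.le.trans (min_le_left _ _)
  have haα : a ≤ α := ha.2.le.trans (min_le_right _ _)
  have hbb0 : b0 ≤ b := (le_max_left _ _).trans hb.1.le
  have hbβ : β ≤ b := (le_max_right _ _).trans hb.1.le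
  have hab : a ≤ b := by linarith
  obtain ⟨K, hK⟩ := (hf.mono (Icc_subset_Ioo ha.1 hb.2)).exists_lipschitzOnWith_of_compact
    isCompact_Icc
  have hK1 := hK.mono (Icc_subset_Icc_right (by linarith : α ≤ b))
  have hK2 := hK.mono (Icc_subset_Icc haα hbβ)
  have hK3 := hK.mono (Icc_subset_Icc_left (by linarith : a ≤ β))
  have p1 := leg_piece (m := 1) (k := 1) (ε := ε) (δ := ε / 2) (e := 0) haα ha.1 (by linarith) hK1 ?_
  have p2 := leg_piece (m := 1 - 2 / (β - α)) (k := 1 + 2 * α / (β - α)) (ε := ε) (δ := ε / 2)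
    (e := 3 / 4) hαβ.le hα hβ hK2 ?_
  have p3 := leg_piece (m := 1) (k := -1) (ε := ε) (δ := ε / 2) (e := 0) hbβ (by linarith) hb.2 hK3 ?_
  rotate_left
  · intro s hs
    have := hout s (1 / (1 + s)) (by linarith [hs.1]) (by linarith [hs.2, hb.2])
      (by have : 0 < 1 + s := by linarith [hs.1]
          positivity)
      (one_div_le_one_div_of_le hc0 (by linarith [hs.1]))
    refine this.trans (le_of_eq ?_)
    congr 1
    have h1 : 1 + s ≠ 0 := by linarith [hs.1]
    have h2 : 1 - s ≠ 0 := by linarith [hs.2, hb.2]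
    rw [show 1 - s ^ 2 = (1 + s) * (1 - s) by ring]
    field_simp
    ring
  · intro s hs
    have hw := hw1 s (by linarith [hs.1]) (by linarith [hs.2])
    have hwc : c ^ 2 ≤ 1 - s ^ 2 := by
      rw [show 1 - s ^ 2 = (1 + s) * (1 - s) by ring, pow_two]
      apply mul_le_mul (by linarith [hs.1]) (by linarith [hs.2]) hc0.le (by linarith [hs.1])
    have hq := Real.sqrt_pos.2 hw
    have hqc : c ≤ √(1 - s ^ 2) := Real.le_sqrt_of_sq_le hwc
    have h1 : 3 / 4 ≤ 3 / 4 / (1 - s ^ 2) := by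
      rw [le_div_iff₀ hw]; nlinarith
    have h2 : -(1 / 4) ≤ ε * (1 - 2 / (β - α)) / √(1 - s ^ 2) := by
      rw [le_div_iff₀ hq]
      have h3 : ε * (2 / (β - α)) ≤ c / 4 := by
        calc ε * (2 / (β - α)) ≤ ((β - α) * c / 8) * (2 / (β - α)) := by gcongr
          _ = c / 4 := by field_simp; norm_num
      nlinarith
    have h3 : |(1 - 2 / (β - α)) * s + (1 + 2 * α / (β - α))| ≤ 2 := by
      have e1 : (1 - 2 / (β - α)) * s + (1 + 2 * α / (β - α)) = 1 + s - 2 * ((s - α) / (β - α)) := by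
        field_simp; ring
      rw [e1]
      have h4 : 0 ≤ (s - α) / (β - α) := div_nonneg (by linarith [hs.1]) hβα.le
      have h5 : (s - α) / (β - α) ≤ 1 := by rw [div_le_one hβα]; linarith [hs.2]
      rw [abs_le]
      constructor <;> linarith [hs.1, hs.2]
    have h4 : ((1 - 2 / (β - α)) * s + (1 + 2 * α / (β - α))) ^ 2 ≤ 4 := by
      rw [← sq_abs]
      calc _ ≤ (2 : ℝ) ^ 2 := by gcongr
        _ = 4 := by norm_num
    have h5 : ε ^ 2 * ((1 - 2 / (β - α)) * s + (1 + 2 * α / (β - α))) ^ 2 / (1 - s ^ 2) ^ 2 ≤ 1 / 4 := by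
      rw [div_le_iff₀ (by positivity)]
      have h6 : c ^ 4 ≤ (1 - s ^ 2) ^ 2 := by
        calc c ^ 4 = (c ^ 2) ^ 2 := by ring
          _ ≤ _ := by gcongr
      have h7 : ε ^ 2 ≤ ε * (c ^ 4 / 16) := by rw [pow_two]; gcongr
      have h8 : ε ≤ 1 / 16 := by linarith
      calc _ ≤ ε ^ 2 * 4 := by gcongr
        _ ≤ ε * (c ^ 4 / 16) * 4 := by gcongr
        _ ≤ 1 / 16 * (c ^ 4 / 16) * 4 := by gcongr
        _ ≤ 1 / 4 * c ^ 4 := by linarith [pow_pos hc0 4]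
        _ ≤ _ := by gcongr
    linarith
  · intro s hs
    have := hout s (1 / (1 - s)) (by linarith [hs.1, ha.1]) (by linarith [hs.2])
      (by have : 0 < 1 - s := by linarith [hs.2]
          positivity)
      (one_div_le_one_div_of_le hc0 (by linarith [hs.2]))
    refine this.trans (le_of_eq ?_)
    congr 1
    have h1 : 1 + s ≠ 0 := by linarith [hs.1, ha.1]
    have h2 : 1 - s ≠ 0 := by linarith [hs.2]
    rw [show 1 - s ^ 2 = (1 + s) * (1 - s) by ring]
    field_simp
    ring
  have j1 : PP ε (1 - 2 / (β - α)) (1 + 2 * α / (β - α)) α = PP ε 1 1 α := by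
    unfold PP
    congr 3
    field_simp; ring
  have j2 : PP ε (1 - 2 / (β - α)) (1 + 2 * α / (β - α)) β = PP ε 1 (-1) β := by
    unfold PP
    congr 3
    field_simp; ring
  have ba : -(1 / 2) ≤ PP ε 1 1 a := by
    unfold PP
    have : 0 ≤ ε * (1 * a + 1) / √(1 - a ^ 2) := by
      have : 0 ≤ 1 * a + 1 := by linarith [ha.1]
      positivity
    linarith [ha.1]
  have bb : PP ε 1 (-1) b ≤ 1 / 2 := by
    unfold PP
    have : 0 ≤ ε * (1 - b) / √(1 - b ^ 2) := by
      have : 0 ≤ 1 - b := by linarith [hb.2]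
      positivity
    have e1 : ε * (1 * b + -1) / √(1 - b ^ 2) = - (ε * (1 - b) / √(1 - b ^ 2)) := by ring
    linarith [hb.2]
  rw [j1, j2] at p2
  have ba' := mul_le_mul_of_nonneg_right ba (sq_nonneg (f a))
  have bb' := mul_le_mul_of_nonneg_right bb (sq_nonneg (f b))
  -- integrability
  have hfc := hK.continuousOn
  have hcw : ContinuousOn (fun s : ℝ => 1 / (1 - s ^ 2)) (Icc a b) :=
    ContinuousOn.div continuousOn_const (by fun_prop)
      (fun s hs => (hw1 s (by linarith [hs.1, ha.1]) (by linarith [hs.2, hb.2])).ne')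
  have iF : IntervalIntegrable (fun s => f s ^ 2) volume a b := by
    apply ContinuousOn.intervalIntegrable
    rw [uIcc_of_le hab]
    exact hfc.pow 2
  have iW : IntervalIntegrable (fun s => 1 / (1 - s ^ 2) * f s ^ 2) volume a b := by
    apply ContinuousOn.intervalIntegrable
    rw [uIcc_of_le hab]
    exact hcw.mul (hfc.pow 2)
  have iD : IntervalIntegrable (fun s => (1 - s ^ 2) * deriv f s ^ 2) volume a b :=
    deriv_sq_intervalIntegrable hab hK (by fun_prop)
  have split : ∀ F : ℝ → ℝ, IntervalIntegrable F volume a b →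
      ∫ s in a..b, F s = (∫ s in a..α, F s) + (∫ s in α..β, F s) + ∫ s in β..b, F s := by
    intro F hF
    have i1 : IntervalIntegrable F volume a α := hF.mono_set (by
      rw [uIcc_of_le hab, uIcc_of_le haα]; exact Icc_subset_Icc_right (by linarith))
    have i2 : IntervalIntegrable F volume α β := hF.mono_set (by
      rw [uIcc_of_le hab, uIcc_of_le hαβ.le]; exact Icc_subset_Icc haα hbβ)
    have i3 : IntervalIntegrable F volume β b := hF.mono_set (by
      rw [uIcc_of_le hab, uIcc_of_le hbβ]; exact Icc_subset_Icc_left (by linarith))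
    rw [intervalIntegral.integral_add_adjacent_intervals i1 i2,
      intervalIntegral.integral_add_adjacent_intervals (i1.trans i2) i3]
  have key : (3 / 4 + ε / 2) * ∫ s in a..b, f s ^ 2 ≤ (∫ s in a..b, (1 - s ^ 2) * deriv f s ^ 2) +
      1 / 4 * (∫ s in a..b, 1 / (1 - s ^ 2) * f s ^ 2) +
      3 / 4 * (∫ s in α..β, 1 / (1 - s ^ 2) * f s ^ 2) + η := by
    rw [split _ iF, split _ iW, split _ iD]
    linarith
  have iW2 : IntervalIntegrable (fun s => 1 / (1 - s ^ 2) * f s ^ 2) volume α β := iW.mono_set (by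
      rw [uIcc_of_le hab, uIcc_of_le hαβ.le]; exact Icc_subset_Icc haα hbβ)
  have hnw : ∀ s ∈ Ioc a b, 0 ≤ 1 - s ^ 2 := fun s hs =>
    (hw1 s (by linarith [hs.1, ha.1]) (by linarith [hs.2, hb.2])).le
  have hsub : Ioc a b ⊆ Ioo (-1) 1 := fun s hs => ⟨ha.1.trans hs.1, hs.2.trans_lt hb.2⟩
  have rD : ENNReal.ofReal (∫ s in a..b, (1 - s ^ 2) * deriv f s ^ 2) ≤
      ∫⁻ s in Ioo (-1 : ℝ) 1, ENNReal.ofReal (1 - s ^ 2) * ENNReal.ofReal (deriv f s ^ 2) := by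
    rw [ofReal_interval hab iD (fun s hs => mul_nonneg (hnw s hs) (sq_nonneg _))]
    refine le_trans (setLIntegral_mono' measurableSet_Ioc fun s hs => ?_) (lintegral_mono_set hsub)
    rw [ENNReal.ofReal_mul (hnw s hs)]
  have rW : ENNReal.ofReal (∫ s in a..b, 1 / (1 - s ^ 2) * f s ^ 2) ≤
      ∫⁻ s in Ioo (-1 : ℝ) 1, ENNReal.ofReal (1 / (1 - s ^ 2)) * ENNReal.ofReal (f s ^ 2) := by
    rw [ofReal_interval hab iW
      (fun s hs => mul_nonneg (one_div_nonneg.2 (hnw s hs)) (sq_nonneg _))]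
    refine le_trans (setLIntegral_mono' measurableSet_Ioc fun s hs => ?_) (lintegral_mono_set hsub)
    rw [ENNReal.ofReal_mul (one_div_nonneg.2 (hnw s hs))]
  have rW2 : ENNReal.ofReal (∫ s in α..β, 1 / (1 - s ^ 2) * f s ^ 2) ≤
      ∫⁻ s in Ioo α β, ENNReal.ofReal (1 / (1 - s ^ 2)) * ENNReal.ofReal (f s ^ 2) := by
    have hnw2 : ∀ s ∈ Ioc α β, 0 ≤ 1 - s ^ 2 := fun s hs => hnw s ⟨haα.trans_lt hs.1, hs.2.trans hbβ⟩
    rw [ofReal_interval hαβ.le iW2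
      (fun s hs => mul_nonneg (one_div_nonneg.2 (hnw2 s hs)) (sq_nonneg _)),
      restrict_Ioo_eq_restrict_Ioc]
    refine setLIntegral_mono' measurableSet_Ioc fun s hs => ?_
    rw [ENNReal.ofReal_mul (one_div_nonneg.2 (hnw2 s hs))]
  calc ∫⁻ s in Ioc a0 b0, ENNReal.ofReal (3 / 4 + ε / 2) * ENNReal.ofReal (f s ^ 2)
      ≤ ∫⁻ s in Ioc a b, ENNReal.ofReal (3 / 4 + ε / 2) * ENNReal.ofReal (f s ^ 2) :=
        lintegral_mono_set (Ioc_subset_Ioc haa0 hbb0)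
    _ = ENNReal.ofReal ((3 / 4 + ε / 2) * ∫ s in a..b, f s ^ 2) := by
        rw [lintegral_const_mul' _ _ ENNReal.ofReal_ne_top, ENNReal.ofReal_mul (by positivity),
          ofReal_interval hab iF (fun s _ => sq_nonneg _)]
    _ ≤ _ := ENNReal.ofReal_le_ofReal key
    _ ≤ _ := by
        refine ENNReal.ofReal_add_le.trans ?_
        rw [ENNReal.ofReal_coe_nnreal]
        gcongr
        refine ENNReal.ofReal_add_le.trans ?_
        rw [ENNReal.ofReal_mul (p := 3 / 4) (by norm_num)]
        gcongr
        refine ENNReal.ofReal_add_le.trans ?_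
        rw [ENNReal.ofReal_mul (p := 1 / 4) (by norm_num)]
        gcongr

lemma variance_id {X : Type*} [MeasurableSpace X] (μ : Measure X) [IsFiniteMeasure μ] {f : X → ℝ}
    (hf : Measurable f) (h2 : ∫⁻ x, ENNReal.ofReal (f x ^ 2) ∂μ < ⊤) :
    Integrable f μ ∧
    ENNReal.ofReal (μ.real univ) * ∫⁻ x, ENNReal.ofReal (f x ^ 2) ∂μ =
      ENNReal.ofReal ((∫ x, f x ∂μ) ^ 2) +
      ENNReal.ofReal (1 / 2) * ∫⁻ x, ∫⁻ y, ENNReal.ofReal ((f x - f y) ^ 2) ∂μ ∂μ := by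
  have hi2 : Integrable (fun x => f x ^ 2) μ := by
    refine ⟨(hf.pow_const 2).aestronglyMeasurable, ?_⟩
    rw [hasFiniteIntegral_iff_ofReal (Eventually.of_forall fun x => sq_nonneg _)]
    exact h2
  have hL : MemLp f 2 μ := (memLp_two_iff_integrable_sq hf.aestronglyMeasurable).2 hi2
  have hi : Integrable f μ := hL.integrable (by norm_num)
  refine ⟨hi, ?_⟩
  set M := μ.real univ with hM
  set m := ∫ x, f x ∂μ with hm
  set Q := ∫ x, f x ^ 2 ∂μ with hQ
  have hM0 : 0 ≤ M := measureReal_nonneg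
  have hQ0 : 0 ≤ Q := integral_nonneg fun x => sq_nonneg _
  have key : ∀ a b c : ℝ, Integrable (fun y => a * f y ^ 2 + (b * f y + c)) μ ∧
      ∫ y, (a * f y ^ 2 + (b * f y + c)) ∂μ = a * Q + (b * m + c * M) := by
    intro a b c
    have i1 : Integrable (fun y => a * f y ^ 2) μ := hi2.const_mul _
    have i2 : Integrable (fun y => b * f y) μ := hi.const_mul _
    have i3 : Integrable (fun y : X => c) μ := integrable_const _
    have i4 : Integrable (fun y : X => b * f y + c) μ := i2.add i3
    refine ⟨i1.add i4, ?_⟩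
    rw [integral_add i1 i4, integral_add i2 i3, integral_const, integral_const_mul,
      integral_const_mul, smul_eq_mul, mul_comm c]
  have e0 : ∀ x, (fun y => (f x - f y) ^ 2) = fun y => 1 * f y ^ 2 + (-2 * f x * f y + f x ^ 2) := by
    intro x; ext y; ring
  have e1 : ∀ x, ∫⁻ y, ENNReal.ofReal ((f x - f y) ^ 2) ∂μ =
      ENNReal.ofReal (M * f x ^ 2 + (-2 * m * f x + Q)) := by
    intro x
    have hk := key 1 (-2 * f x) (f x ^ 2)
    rw [← ofReal_integral_eq_lintegral_ofReal (by rw [e0]; exact hk.1)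
      (Eventually.of_forall fun x => sq_nonneg _), e0, hk.2]
    congr 1
    ring
  have e2 : ∫⁻ x, ∫⁻ y, ENNReal.ofReal ((f x - f y) ^ 2) ∂μ ∂μ =
      ENNReal.ofReal (2 * (Q * M - m ^ 2)) := by
    simp only [e1]
    have hk := key M (-2 * m) Q
    rw [← ofReal_integral_eq_lintegral_ofReal hk.1, hk.2]
    · congr 1
      ring
    · refine Eventually.of_forall fun x => ?_
      have hk := key 1 (-2 * f x) (f x ^ 2)
      have h0 : 0 ≤ ∫ y, (f x - f y) ^ 2 ∂μ := integral_nonneg fun y => sq_nonneg _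
      rw [e0, hk.2] at h0
      simp only [Pi.zero_apply]
      linarith
  have hvar : 0 ≤ Q * M - m ^ 2 := by
    have h : 0 ≤ ∫ x, (M * f x - m) ^ 2 ∂μ := integral_nonneg fun x => sq_nonneg _
    have e : (fun x => (M * f x - m) ^ 2) =
      fun x => M ^ 2 * f x ^ 2 + ((-2 * M * m) * f x + m ^ 2) := by
      ext x; ring
    rw [e, (key _ _ _).2] at h
    rcases hM0.eq_or_lt with h0 | h0
    · have : μ = 0 := by
        rw [← Measure.measure_univ_eq_zero]
        have := (measureReal_eq_zero_iff (μ := μ) (s := univ)).1 h0.symm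
        exact this
      simp [hm, this, ← h0]
    · by_contra hneg
      push Not at hneg
      nlinarith [mul_pos h0 (neg_pos.2 hneg)]
  rw [e2, ← ofReal_integral_eq_lintegral_ofReal hi2 (Eventually.of_forall fun x => sq_nonneg _),
    ← ENNReal.ofReal_mul hM0, ← ENNReal.ofReal_mul (by norm_num),
    ← ENNReal.ofReal_add (sq_nonneg _) (by positivity)]
  congr 1
  rw [← hQ]; ring

lemma odd_part {α β δ : ℝ}
    (hα : -1 < α) (hβ : β < 1)
    (hleg : ∀ f : ℝ → ℝ, LocallyLipschitzOn (Ioo (-1) 1) f →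
    ENNReal.ofReal (3 / 4 + δ) * ∫⁻ s in Ioo (-1 : ℝ) 1, ENNReal.ofReal (f s ^ 2) ≤
      (∫⁻ s in Ioo (-1 : ℝ) 1, ENNReal.ofReal (1 - s ^ 2) * ENNReal.ofReal (deriv f s ^ 2)) +
      (ENNReal.ofReal (1 / 4) * ∫⁻ s in Ioo (-1 : ℝ) 1, ENNReal.ofReal (1 / (1 - s ^ 2)) *
        ENNReal.ofReal (f s ^ 2)) +
      ENNReal.ofReal (3 / 4) * ∫⁻ s in Ioo α β, ENNReal.ofReal (1 / (1 - s ^ 2)) *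
        ENNReal.ofReal (f s ^ 2))
    {h A B : ℝ → ℝ → ℝ} (mh : Measurable (Function.uncurry h)) (mA : Measurable (Function.uncurry A))
    (mB : Measurable (Function.uncurry B))
    (l1 : ∀ θ ∈ Ioo 0 Real.pi, LocallyLipschitzOn (Ioo (-1) 1) (h θ))
    (l2 : ∀ s ∈ Ioo (-1 : ℝ) 1, LocallyLipschitzOn (Ioo 0 Real.pi) (fun θ => h θ s))
    (z0 : ∀ s ∈ Ioo (-1 : ℝ) 1, ∃ C η, 0 < η ∧ ∀ x ∈ Ioo 0 η, |h x s| ≤ C * x)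
    (z1 : ∀ s ∈ Ioo α β, ∃ C η, 0 < η ∧ ∀ x ∈ Ioo (Real.pi - η) Real.pi,
      |h x s| ≤ C * (Real.pi - x))
    (dA : ∀ᵐ s ∂(volume.restrict (Ioo (-1 : ℝ) 1)), ∀ᵐ θ ∂(volume.restrict (Ioo 0 Real.pi)),
      deriv (fun θ => h θ s) θ = A θ s)
    (dB : ∀ᵐ θ ∂(volume.restrict (Ioo 0 Real.pi)), ∀ᵐ s ∂(volume.restrict (Ioo (-1 : ℝ) 1)),
      deriv (h θ) s = B θ s) :
    ENNReal.ofReal (3 / 4 + δ) * ∫⁻ θ in Ioo 0 Real.pi, ∫⁻ s in Ioo (-1 : ℝ) 1,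
      ENNReal.ofReal (h θ s ^ 2) ≤
    ∫⁻ θ in Ioo 0 Real.pi, ∫⁻ s in Ioo (-1 : ℝ) 1,
      (ENNReal.ofReal (1 - s ^ 2) * ENNReal.ofReal (B θ s ^ 2) +
       ENNReal.ofReal (1 / (1 - s ^ 2)) * ENNReal.ofReal (A θ s ^ 2)) := by
  set w : ℝ → ℝ≥0∞ := fun s => ENNReal.ofReal (1 / (1 - s ^ 2)) with hw
  have mw : Measurable w := by rw [hw]; fun_prop
  set v : ℝ → ℝ≥0∞ := fun s => ENNReal.ofReal (1 / 4) +
    (Ioo α β).indicator (fun _ => ENNReal.ofReal (3 / 4)) s with hv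
  have mv : Measurable v := by
    rw [hv]
    have : Measurable fun s : ℝ => (Ioo α β).indicator (fun _ => ENNReal.ofReal (3 / 4)) s :=
      Measurable.indicator measurable_const measurableSet_Ioo
    exact measurable_const.add this
  have msq : Measurable fun p : ℝ × ℝ => ENNReal.ofReal (h p.1 p.2 ^ 2) :=
    (mh.pow_const 2).ennreal_ofReal
  have mAsq : Measurable fun p : ℝ × ℝ => ENNReal.ofReal (A p.1 p.2 ^ 2) :=
    (mA.pow_const 2).ennreal_ofReal
  have mBsq : Measurable fun p : ℝ × ℝ => ENNReal.ofReal (B p.1 p.2 ^ 2) :=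
    (mB.pow_const 2).ennreal_ofReal
  have step1 : ∀ᵐ θ ∂(volume.restrict (Ioo 0 Real.pi)),
      ENNReal.ofReal (3 / 4 + δ) * ∫⁻ s in Ioo (-1 : ℝ) 1, ENNReal.ofReal (h θ s ^ 2) ≤
      (∫⁻ s in Ioo (-1 : ℝ) 1, ENNReal.ofReal (1 - s ^ 2) * ENNReal.ofReal (B θ s ^ 2)) +
      ∫⁻ s in Ioo (-1 : ℝ) 1, w s * (v s * ENNReal.ofReal (h θ s ^ 2)) := by
    filter_upwards [dB, ae_restrict_mem measurableSet_Ioo] with θ hθ hm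
    refine (hleg (h θ) (l1 θ hm)).trans (le_of_eq ?_)
    have msl : Measurable fun s => w s * ENNReal.ofReal (h θ s ^ 2) :=
      mw.mul (msq.comp (measurable_const.prodMk measurable_id))
    have e1 : ∫⁻ s in Ioo (-1 : ℝ) 1, ENNReal.ofReal (1 - s ^ 2) * ENNReal.ofReal (deriv (h θ) s ^ 2)
      = ∫⁻ s in Ioo (-1 : ℝ) 1, ENNReal.ofReal (1 - s ^ 2) * ENNReal.ofReal (B θ s ^ 2) := by
      refine lintegral_congr_ae ?_
      filter_upwards [hθ] with s hs
      rw [hs]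
    have e2 : ∫⁻ s in Ioo (-1 : ℝ) 1, w s * (v s * ENNReal.ofReal (h θ s ^ 2)) =
      (ENNReal.ofReal (1 / 4) * ∫⁻ s in Ioo (-1 : ℝ) 1, w s * ENNReal.ofReal (h θ s ^ 2)) +
      ENNReal.ofReal (3 / 4) * ∫⁻ s in Ioo α β, w s * ENNReal.ofReal (h θ s ^ 2) := by
      have hsub : Ioo α β ∩ Ioo (-1) 1 = Ioo α β :=
        inter_eq_left.2 (Ioo_subset_Ioo hα.le hβ.le)
      rw [← lintegral_const_mul _ msl, ← lintegral_const_mul _ msl]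
      nth_rewrite 1 [← hsub]
      rw [← Measure.restrict_restrict measurableSet_Ioo, ← lintegral_indicator (s := Ioo α β) measurableSet_Ioo,
        ← lintegral_add_left (msl.const_mul _)]
      congr 1; ext s
      simp only [hv]
      by_cases hs : s ∈ Ioo α β
      · simp only [indicator_of_mem hs]; ring
      · simp only [indicator_of_notMem hs]; ring
    rw [e1, e2, add_assoc]
  have step2 : ∀ᵐ s ∂(volume.restrict (Ioo (-1 : ℝ) 1)),
      v s * ∫⁻ θ in Ioo 0 Real.pi, ENNReal.ofReal (h θ s ^ 2) ≤
      ∫⁻ θ in Ioo 0 Real.pi, ENNReal.ofReal (A θ s ^ 2) := by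
    filter_upwards [dA, ae_restrict_mem measurableSet_Ioo] with s hs hm
    have e1 : ∫⁻ θ in Ioo 0 Real.pi, ENNReal.ofReal (A θ s ^ 2) =
      ∫⁻ θ in Ioo 0 Real.pi, ENNReal.ofReal (deriv (fun θ => h θ s) θ ^ 2) := by
      refine lintegral_congr_ae ?_
      filter_upwards [hs] with s hs
      rw [hs]
    rw [e1]
    by_cases hab : s ∈ Ioo α β
    · have : v s = 1 := by
        simp only [hv, indicator_of_mem hab]
        rw [← ENNReal.ofReal_add (by norm_num) (by norm_num)]; norm_num
      rw [this, one_mul]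
      exact wirt_one (l2 s hm) (z0 s hm) (z1 s hab)
    · have : v s = ENNReal.ofReal (1 / 4) := by
        simp only [hv, indicator_of_notMem hab, add_zero]
      rw [this]
      exact wirt_half (l2 s hm) (z0 s hm)
  have m1 : Measurable fun θ => ∫⁻ s in Ioo (-1 : ℝ) 1, ENNReal.ofReal (h θ s ^ 2) :=
    msq.lintegral_prod_right'
  have mBw : Measurable fun p : ℝ × ℝ => ENNReal.ofReal (1 - p.2 ^ 2) * ENNReal.ofReal (B p.1 p.2 ^ 2) :=
    Measurable.mul (by fun_prop) mBsq
  have mAw : Measurable fun p : ℝ × ℝ => w p.2 * ENNReal.ofReal (A p.1 p.2 ^ 2) :=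
    Measurable.mul (mw.comp measurable_snd) mAsq
  have mhw : Measurable fun p : ℝ × ℝ => w p.2 * (v p.2 * ENNReal.ofReal (h p.1 p.2 ^ 2)) :=
    Measurable.mul (mw.comp measurable_snd) ((mv.comp measurable_snd).mul msq)
  rw [← lintegral_const_mul _ m1]
  refine (lintegral_mono_ae step1).trans ?_
  have e3 : ∀ θ, ∫⁻ s in Ioo (-1 : ℝ) 1,
      (ENNReal.ofReal (1 - s ^ 2) * ENNReal.ofReal (B θ s ^ 2) + w s * ENNReal.ofReal (A θ s ^ 2)) =
      (∫⁻ s in Ioo (-1 : ℝ) 1, ENNReal.ofReal (1 - s ^ 2) * ENNReal.ofReal (B θ s ^ 2)) +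
      ∫⁻ s in Ioo (-1 : ℝ) 1, w s * ENNReal.ofReal (A θ s ^ 2) := fun θ =>
    lintegral_add_left (mBw.comp (measurable_const.prodMk measurable_id)) _
  refine le_trans ?_ (le_of_eq (lintegral_congr fun θ => e3 θ).symm)
  rw [lintegral_add_left mBw.lintegral_prod_right', lintegral_add_left mBw.lintegral_prod_right']
  gcongr 1
  rw [lintegral_lintegral_swap mhw.aemeasurable, 
    lintegral_lintegral_swap (f := fun θ s => w s * ENNReal.ofReal (A θ s ^ 2)) mAw.aemeasurable]
  refine lintegral_mono_ae ?_
  filter_upwards [step2] with s hs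
  have q1 : Measurable fun θ => ENNReal.ofReal (h θ s ^ 2) :=
    msq.comp (measurable_id.prodMk measurable_const)
  have q2 : Measurable fun θ => ENNReal.ofReal (A θ s ^ 2) :=
    mAsq.comp (measurable_id.prodMk measurable_const)
  rw [lintegral_const_mul _ (q1.const_mul _), lintegral_const_mul _ q1, lintegral_const_mul _ q2]
  gcongr

lemma even_part
    {u A B : ℝ → ℝ → ℝ} (mu : Measurable (Function.uncurry u)) (mA : Measurable (Function.uncurry A))
    (mB : Measurable (Function.uncurry B))
    (l1 : ∀ θ ∈ Ioo 0 Real.pi, LocallyLipschitzOn (Ioo (-1) 1) (u θ))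
    (l2 : ∀ s ∈ Ioo (-1 : ℝ) 1, LocallyLipschitzOn (Ioo 0 Real.pi) (fun θ => u θ s))
    (dA : ∀ᵐ s ∂(volume.restrict (Ioo (-1 : ℝ) 1)), ∀ᵐ θ ∂(volume.restrict (Ioo 0 Real.pi)),
      deriv (fun θ => u θ s) θ = A θ s)
    (dB : ∀ᵐ θ ∂(volume.restrict (Ioo 0 Real.pi)), ∀ᵐ s ∂(volume.restrict (Ioo (-1 : ℝ) 1)),
      deriv (u θ) s = B θ s)
    (hfin : ∫⁻ θ in Ioo 0 Real.pi, ∫⁻ s in Ioo (-1 : ℝ) 1, ENNReal.ofReal (u θ s ^ 2) < ⊤)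
    (hz : ∫ p, u p.1 p.2 ∂((volume.restrict (Ioo 0 Real.pi)).prod
      (volume.restrict (Ioo (-1 : ℝ) 1))) = 0) :
    ENNReal.ofReal (25 / 32) * ∫⁻ θ in Ioo 0 Real.pi, ∫⁻ s in Ioo (-1 : ℝ) 1,
      ENNReal.ofReal (u θ s ^ 2) ≤
    ∫⁻ θ in Ioo 0 Real.pi, ∫⁻ s in Ioo (-1 : ℝ) 1,
      (ENNReal.ofReal (1 - s ^ 2) * ENNReal.ofReal (B θ s ^ 2) +
       ENNReal.ofReal (1 / (1 - s ^ 2)) * ENNReal.ofReal (A θ s ^ 2)) := by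
  set μ : Measure ℝ := volume.restrict (Ioo 0 Real.pi) with hμ
  set ν : Measure ℝ := volume.restrict (Ioo (-1 : ℝ) 1) with hν
  have hpi := Real.pi_pos
  have hμM : μ.real univ = Real.pi := by simp [hμ, measureReal_def, hpi.le]
  have hνM : ν.real univ = 2 := by simp [hν, measureReal_def]; norm_num
  have msq : Measurable fun p : ℝ × ℝ => ENNReal.ofReal (u p.1 p.2 ^ 2) :=
    (mu.pow_const 2).ennreal_ofReal
  have mAsq : Measurable fun p : ℝ × ℝ => ENNReal.ofReal (A p.1 p.2 ^ 2) :=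
    (mA.pow_const 2).ennreal_ofReal
  have mBsq : Measurable fun p : ℝ × ℝ => ENNReal.ofReal (B p.1 p.2 ^ 2) :=
    (mB.pow_const 2).ennreal_ofReal
  have mus : ∀ s, Measurable fun θ => u θ s := fun s =>
    mu.comp (measurable_id.prodMk measurable_const)
  have muθ : ∀ θ, Measurable fun s => u θ s := fun s =>
    mu.comp (measurable_const.prodMk measurable_id)
  set N : ℝ → ℝ := fun s => ∫ θ, u θ s ∂μ with hN
  have mN : Measurable N := by
    have : StronglyMeasurable fun p : ℝ × ℝ => u p.2 p.1 :=
      (mu.comp measurable_swap).stronglyMeasurable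
    exact this.integral_prod_right'.measurable
  set Q := ∫⁻ θ, ∫⁻ s, ENNReal.ofReal (u θ s ^ 2) ∂ν ∂μ with hQ
  have hQs : Q = ∫⁻ s, ∫⁻ θ, ENNReal.ofReal (u θ s ^ 2) ∂μ ∂ν :=
    lintegral_lintegral_swap msq.aemeasurable
  have msqs : Measurable fun s => ∫⁻ θ, ENNReal.ofReal (u θ s ^ 2) ∂μ :=
    (msq.comp measurable_swap).lintegral_prod_right'
  have hfs : ∀ᵐ s ∂ν, ∫⁻ θ, ENNReal.ofReal (u θ s ^ 2) ∂μ < ⊤ := by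
    refine ae_lt_top msqs ?_
    rw [← hQs]; exact hfin.ne
  -- the θ-variance
  set D1 : ℝ → ℝ≥0∞ := fun s => ∫⁻ x, ∫⁻ y, ENNReal.ofReal ((u x s - u y s) ^ 2) ∂μ ∂μ with hD1
  have v1 : ENNReal.ofReal Real.pi * Q ≤ (∫⁻ s, ENNReal.ofReal (N s ^ 2) ∂ν) +
      ENNReal.ofReal (1 / 2) * ∫⁻ s, D1 s ∂ν := by
    rw [hQs, ← lintegral_const_mul _ msqs, ← lintegral_const_mul' _ _ ENNReal.ofReal_ne_top,
      ← lintegral_add_left (mN.pow_const 2).ennreal_ofReal]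
    refine lintegral_mono_ae ?_
    filter_upwards [hfs] with s hs
    have := (variance_id μ (mus s) hs).2
    rw [hμM] at this
    exact this.le
  have b1 : ∫⁻ s, D1 s ∂ν ≤ ENNReal.ofReal (Real.pi ^ 3 / 4) *
      ∫⁻ θ, ∫⁻ s, ENNReal.ofReal (1 / (1 - s ^ 2)) * ENNReal.ofReal (A θ s ^ 2) ∂ν ∂μ := by
    rw [lintegral_lintegral_swap (f := fun θ s => ENNReal.ofReal (1 / (1 - s ^ 2)) *
      ENNReal.ofReal (A θ s ^ 2)) (by
        refine Measurable.aemeasurable (Measurable.mul (by fun_prop) mAsq)),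
      ← lintegral_const_mul' _ _ ENNReal.ofReal_ne_top]
    refine lintegral_mono_ae ?_
    filter_upwards [dA, ae_restrict_mem measurableSet_Ioo] with s hs hm
    have h1 : D1 s ≤ _ := le_trans (le_of_eq ?_) (double_diff (l2 s hm))
    · refine h1.trans ?_
      rw [← lintegral_const_mul' _ _ ENNReal.ofReal_ne_top,
        ← lintegral_const_mul' _ _ ENNReal.ofReal_ne_top]
      refine lintegral_mono_ae ?_
      filter_upwards [hs, ae_restrict_mem measurableSet_Ioo] with θ hθ hθm
      rw [hθ, ← mul_assoc, ← mul_assoc]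
      refine mul_le_mul_left ?_ _
      have hw : 0 < 1 - s ^ 2 := by nlinarith [hm.1, hm.2]
      rw [← ENNReal.ofReal_mul (by linarith), ← ENNReal.ofReal_mul (by positivity)]
      refine ENNReal.ofReal_le_ofReal ?_
      have h2 : (1 : ℝ) ≤ 1 / (1 - s ^ 2) := by
        rw [le_div_iff₀ hw]; nlinarith [sq_nonneg s]
      have h3 : (θ - 0) * (Real.pi - θ) ≤ Real.pi ^ 2 / 4 := by
        nlinarith [sq_nonneg (θ - Real.pi / 2)]
      calc (Real.pi - 0) * ((θ - 0) * (Real.pi - θ)) ≤ Real.pi * (Real.pi ^ 2 / 4) := by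
            rw [sub_zero]; gcongr
        _ = Real.pi ^ 3 / 4 * 1 := by ring
        _ ≤ _ := by gcongr
    · simp only [hD1]
      refine lintegral_congr fun x => lintegral_congr fun y => ?_
      congr 1; ring
  -- the mean
  have hint : Integrable (fun p : ℝ × ℝ => u p.1 p.2) (μ.prod ν) := by
    refine (variance_id (μ.prod ν) mu ?_).1
    rw [lintegral_prod _ ((mu.pow_const 2).ennreal_ofReal.aemeasurable)]
    exact hfin
  have hN0 : ∫ s, N s ∂ν = 0 := by
    rw [← hz]
    exact (integral_prod_symm _ hint).symm
  have hNsq : ∫⁻ s, ENNReal.ofReal (N s ^ 2) ∂ν < ⊤ := by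
    have : ∫⁻ s, ENNReal.ofReal (N s ^ 2) ∂ν ≤ ENNReal.ofReal Real.pi * Q := by
      rw [hQs, ← lintegral_const_mul _ msqs]
      refine lintegral_mono_ae ?_
      filter_upwards [hfs] with s hs
      have := (variance_id μ (mus s) hs).2
      rw [hμM] at this
      rw [this]
      exact le_self_add
    exact this.trans_lt (ENNReal.mul_lt_top ENNReal.ofReal_lt_top hfin)
  have v2 := (variance_id ν mN hNsq).2
  rw [hνM, hN0] at v2
  have b2 : ∫⁻ s, ∫⁻ t, ENNReal.ofReal ((N s - N t) ^ 2) ∂ν ∂ν ≤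
      ENNReal.ofReal (2 * Real.pi) *
      ∫⁻ θ, ∫⁻ s, ENNReal.ofReal (1 - s ^ 2) * ENNReal.ofReal (B θ s ^ 2) ∂ν ∂μ := by
    have c1 : ∫⁻ s, ∫⁻ t, ENNReal.ofReal ((N s - N t) ^ 2) ∂ν ∂ν ≤
        ∫⁻ s, ∫⁻ t, ENNReal.ofReal Real.pi * ∫⁻ θ, ENNReal.ofReal ((u θ t - u θ s) ^ 2) ∂μ ∂ν ∂ν := by
      refine lintegral_mono_ae ?_
      filter_upwards [hfs] with s hs
      refine lintegral_mono_ae ?_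
      filter_upwards [hfs] with t ht
      have is := (variance_id μ (mus s) hs).1
      have it := (variance_id μ (mus t) ht).1
      have e : N s - N t = ∫ θ, (u θ s - u θ t) ∂μ := (integral_sub is it).symm
      have hd : ∫⁻ θ, ENNReal.ofReal ((u θ s - u θ t) ^ 2) ∂μ < ⊤ := by
        have : ∫⁻ θ, ENNReal.ofReal ((u θ s - u θ t) ^ 2) ∂μ ≤
            ∫⁻ θ, (ENNReal.ofReal 2 * ENNReal.ofReal (u θ s ^ 2) +
              ENNReal.ofReal 2 * ENNReal.ofReal (u θ t ^ 2)) ∂μ := by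
          refine lintegral_mono fun θ => ?_
          rw [← ENNReal.ofReal_mul (by norm_num), ← ENNReal.ofReal_mul (by norm_num),
            ← ENNReal.ofReal_add (by positivity) (by positivity)]
          refine ENNReal.ofReal_le_ofReal ?_
          nlinarith [sq_nonneg (u θ s + u θ t)]
        refine this.trans_lt ?_
        rw [lintegral_add_left (((mus s).pow_const 2).ennreal_ofReal.const_mul _),
          lintegral_const_mul' _ _ ENNReal.ofReal_ne_top,
          lintegral_const_mul' _ _ ENNReal.ofReal_ne_top]
        exact ENNReal.add_lt_top.2 ⟨ENNReal.mul_lt_top ENNReal.ofReal_lt_top hs,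
          ENNReal.mul_lt_top ENNReal.ofReal_lt_top ht⟩
      have := (variance_id μ ((mus s).sub (mus t)) hd).2
      rw [hμM] at this
      have e' : ∫⁻ θ, ENNReal.ofReal ((u θ t - u θ s) ^ 2) ∂μ =
          ∫⁻ θ, ENNReal.ofReal ((u θ s - u θ t) ^ 2) ∂μ := by
        refine lintegral_congr fun θ => ?_
        congr 1; ring
      rw [e, e']
      refine le_trans ?_ this.symm.le
      exact le_self_add
    have m3 : Measurable fun q : (ℝ × ℝ) × ℝ => ENNReal.ofReal ((u q.2 q.1.2 - u q.2 q.1.1) ^ 2) := by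
      have a1 : Measurable fun q : (ℝ × ℝ) × ℝ => u q.2 q.1.2 :=
        mu.comp (measurable_snd.prodMk (measurable_snd.comp measurable_fst))
      have a2 : Measurable fun q : (ℝ × ℝ) × ℝ => u q.2 q.1.1 :=
        mu.comp (measurable_snd.prodMk (measurable_fst.comp measurable_fst))
      exact ((a1.sub a2).pow_const 2).ennreal_ofReal
    have c2 : ∫⁻ s, ∫⁻ t, ENNReal.ofReal Real.pi * ∫⁻ θ, ENNReal.ofReal ((u θ t - u θ s) ^ 2) ∂μ ∂ν ∂ν
        = ENNReal.ofReal Real.pi *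
          ∫⁻ θ, ∫⁻ s, ∫⁻ t, ENNReal.ofReal ((u θ t - u θ s) ^ 2) ∂ν ∂ν ∂μ := by
      simp only [lintegral_const_mul' _ _ ENNReal.ofReal_ne_top]
      congr 1
      have s1 : ∫⁻ p, ∫⁻ θ, ENNReal.ofReal ((u θ p.2 - u θ p.1) ^ 2) ∂μ ∂(ν.prod ν) =
          ∫⁻ s, ∫⁻ t, ∫⁻ θ, ENNReal.ofReal ((u θ t - u θ s) ^ 2) ∂μ ∂ν ∂ν :=
        lintegral_prod _ m3.lintegral_prod_right'.aemeasurable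
      rw [← s1, lintegral_lintegral_swap m3.aemeasurable]
      refine lintegral_congr fun θ => ?_
      have m4 : Measurable fun p : ℝ × ℝ => ENNReal.ofReal ((u θ p.2 - u θ p.1) ^ 2) :=
        m3.comp (measurable_id.prodMk measurable_const)
      exact lintegral_prod _ m4.aemeasurable
    rw [c2] at c1
    refine c1.trans ?_
    rw [mul_comm (2 : ℝ), ENNReal.ofReal_mul hpi.le, mul_assoc]
    gcongr
    rw [← lintegral_const_mul' _ _ ENNReal.ofReal_ne_top]
    refine lintegral_mono_ae ?_
    filter_upwards [dB, ae_restrict_mem measurableSet_Ioo] with θ hθ hm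
    refine (double_diff (l1 θ hm)).trans ?_
    norm_num
    gcongr 1
    refine le_of_eq (lintegral_congr_ae ?_)
    filter_upwards [hθ] with s hs
    rw [hs]
    congr 2; ring
  set EA := ∫⁻ θ, ∫⁻ s, ENNReal.ofReal (1 / (1 - s ^ 2)) * ENNReal.ofReal (A θ s ^ 2) ∂ν ∂μ with hEA
  set EB := ∫⁻ θ, ∫⁻ s, ENNReal.ofReal (1 - s ^ 2) * ENNReal.ofReal (B θ s ^ 2) ∂ν ∂μ with hEB
  have hE : ∫⁻ θ, ∫⁻ s, (ENNReal.ofReal (1 - s ^ 2) * ENNReal.ofReal (B θ s ^ 2) +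
       ENNReal.ofReal (1 / (1 - s ^ 2)) * ENNReal.ofReal (A θ s ^ 2)) ∂ν ∂μ = EB + EA := by
    have mBw : Measurable fun p : ℝ × ℝ =>
        ENNReal.ofReal (1 - p.2 ^ 2) * ENNReal.ofReal (B p.1 p.2 ^ 2) :=
      Measurable.mul (by fun_prop) mBsq
    rw [hEA, hEB, ← lintegral_add_left mBw.lintegral_prod_right']
    refine lintegral_congr fun θ => ?_
    exact lintegral_add_left (mBw.comp (measurable_const.prodMk measurable_id)) _
  rw [hE]
  set NN := ∫⁻ s, ENNReal.ofReal (N s ^ 2) ∂ν with hNN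
  have hNN2 : NN ≤ ENNReal.ofReal (Real.pi / 2) * EB := by
    have : ENNReal.ofReal 2 * NN ≤ ENNReal.ofReal 2 * (ENNReal.ofReal (Real.pi / 2) * EB) := by
      rw [v2]
      calc _ ≤ ENNReal.ofReal (0 ^ 2) + ENNReal.ofReal (1 / 2) * (ENNReal.ofReal (2 * Real.pi) * EB) := by
            gcongr
        _ = _ := by
            rw [← mul_assoc, ← mul_assoc, ← ENNReal.ofReal_mul (by norm_num),
              ← ENNReal.ofReal_mul (by norm_num),
              show (1 / 2 : ℝ) * (2 * Real.pi) = 2 * (Real.pi / 2) by ring,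
              show ENNReal.ofReal ((0 : ℝ) ^ 2) = 0 by norm_num, zero_add]
    exact (ENNReal.mul_le_mul_iff_right (by simp) ENNReal.ofReal_ne_top).1 this
  have fin : ENNReal.ofReal Real.pi * (ENNReal.ofReal (25 / 32) * Q) ≤
      ENNReal.ofReal Real.pi * (EB + EA) := by
    have hp2 : Real.pi ^ 2 ≤ 256 / 25 := by nlinarith [Real.pi_lt_d2]
    calc ENNReal.ofReal Real.pi * (ENNReal.ofReal (25 / 32) * Q)
        = ENNReal.ofReal (25 / 32) * (ENNReal.ofReal Real.pi * Q) := by ring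
      _ ≤ ENNReal.ofReal (25 / 32) * (ENNReal.ofReal (Real.pi / 2) * EB +
          ENNReal.ofReal (1 / 2) * (ENNReal.ofReal (Real.pi ^ 3 / 4) * EA)) := by
          gcongr
          exact v1.trans (add_le_add hNN2 (by gcongr))
      _ = ENNReal.ofReal (25 / 32 * (Real.pi / 2)) * EB +
          ENNReal.ofReal (25 / 32 * (1 / 2 * (Real.pi ^ 3 / 4))) * EA := by
          rw [ENNReal.ofReal_mul (by norm_num), ENNReal.ofReal_mul (by norm_num),
            ENNReal.ofReal_mul (q := Real.pi ^ 3 / 4) (by norm_num)]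
          ring
      _ ≤ ENNReal.ofReal Real.pi * EB + ENNReal.ofReal Real.pi * EA := by
          gcongr
          · linarith
          · nlinarith
      _ = _ := by ring
  exact (ENNReal.mul_le_mul_iff_right (by simpa using hpi) ENNReal.ofReal_ne_top).1 fin

lemma ll_comp {X Y Z : Type*} [PseudoEMetricSpace X] [PseudoEMetricSpace Y] [PseudoEMetricSpace Z]
    {f : Y → Z} {φ : X → Y} {S : Set X} {T : Set Y} (hf : LocallyLipschitzOn T f)
    (hφ : LocallyLipschitzOn S φ) (hm : MapsTo φ S T) : LocallyLipschitzOn S (fun x => f (φ x)) := by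
  intro x hx
  obtain ⟨K1, t1, ht1, h1⟩ := hf (hm hx)
  obtain ⟨K2, t2, ht2, h2⟩ := hφ hx
  have hc : Tendsto φ (𝓝[S] x) (𝓝[T] (φ x)) :=
    (hφ.continuousOn x hx).tendsto_nhdsWithin hm
  refine ⟨K1 * K2, t2 ∩ φ ⁻¹' t1, inter_mem ht2 (hc ht1), ?_⟩
  exact h1.comp (h2.mono inter_subset_left) (fun y hy => hy.2)

lemma ll_half {X : Type*} [PseudoEMetricSpace X] {f : X → ℝ} {S : Set X}
    (hf : LocallyLipschitzOn S f) : LocallyLipschitzOn S (fun x => f x / 2) := by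
  refine ll_comp (f := fun y : ℝ => y / 2) (T := univ) ?_ hf (mapsTo_univ _ _)
  refine (LipschitzWith.locallyLipschitz (K := 1) ?_).locallyLipschitzOn
  refine LipschitzWith.of_dist_le_mul fun x y => ?_
  simp only [Real.dist_eq, NNReal.coe_one, one_mul]
  rw [← sub_div, abs_div, abs_of_pos (two_pos : (0:ℝ) < 2)]
  linarith [abs_nonneg (x - y)]

lemma R_split : (volume.restrict (Ioo (-Real.pi) Real.pi) : Measure ℝ) =
    volume.restrict (Ioo 0 Real.pi) + (volume.restrict (Ioo 0 Real.pi)).map (fun x => -x) := by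
  have hpi := Real.pi_pos
  have h1 : (volume.restrict (Ioo 0 Real.pi)).map (fun x => -x) =
      (volume.restrict (Ioo (-Real.pi) 0) : Measure ℝ) := by
    have := (Measure.measurePreserving_neg (volume : Measure ℝ)).restrict_preimage
      (s := Ioo (-Real.pi) 0) measurableSet_Ioo
    have e : (Neg.neg : ℝ → ℝ) ⁻¹' (Ioo (-Real.pi) 0) = Ioo 0 Real.pi := by
      ext x; simp only [mem_preimage, mem_Ioo]; constructor <;> intro h <;> constructor <;> linarith [h.1, h.2]
    rw [e] at this
    exact this.map_eq
  rw [h1, add_comm, ← Measure.restrict_union₀ _ measurableSet_Ioo.nullMeasurableSet]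
  · refine Measure.restrict_congr_set ?_
    have e : Ioo (-Real.pi) Real.pi \ {0} = Ioo (-Real.pi) 0 ∪ Ioo 0 Real.pi := by
      ext x; simp only [Set.mem_sdiff, mem_Ioo, mem_singleton_iff, mem_union]
      constructor
      · rintro ⟨⟨h1, h2⟩, h3⟩
        rcases lt_or_gt_of_ne h3 with h | h
        · left; exact ⟨h1, h⟩
        · right; exact ⟨h, h2⟩
      · rintro (⟨h1, h2⟩ | ⟨h1, h2⟩)
        · exact ⟨⟨h1, by linarith⟩, h2.ne⟩
        · exact ⟨⟨by linarith, h2⟩, h1.ne'⟩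
    rw [← e]
    exact (sdiff_null_ae_eq_self (by simp)).symm
  · refine Disjoint.aedisjoint ?_
    rw [Set.disjoint_left]
    intro x h1 h2
    exact lt_asymm h1.2 h2.1

lemma lint_split {F : ℝ → ℝ≥0∞} (hF : Measurable F) :
    ∫⁻ θ in Ioo (-Real.pi) Real.pi, F θ = ∫⁻ θ in Ioo 0 Real.pi, (F θ + F (-θ)) := by
  rw [R_split, lintegral_add_measure, lintegral_map hF measurable_neg, lintegral_add_left hF]

lemma ae_split {P : ℝ → Prop} (h : ∀ᵐ θ ∂(volume.restrict (Ioo (-Real.pi) Real.pi)), P θ) :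
    ∀ᵐ θ ∂(volume.restrict (Ioo 0 Real.pi)), P θ ∧ P (-θ) := by
  rw [R_split, ae_add_measure_iff] at h
  exact h.1.and (ae_of_ae_map measurable_neg.aemeasurable h.2)

lemma par_sq (a b : ℝ) : ENNReal.ofReal (a ^ 2) + ENNReal.ofReal (b ^ 2) =
    ENNReal.ofReal 2 * (ENNReal.ofReal (((a + b) / 2) ^ 2) + ENNReal.ofReal (((a - b) / 2) ^ 2)) := by
  rw [← ENNReal.ofReal_add (by positivity) (by positivity),
    ← ENNReal.ofReal_add (by positivity) (by positivity), ← ENNReal.ofReal_mul (by norm_num)]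
  congr 1; ring

lemma core2d {α β : ℝ} (hα : -1 < α) (hαβ : α < β) (hβ : β < 1) : ∃ δ : ℝ, 0 < δ ∧
    ∀ G A B : ℝ → ℝ → ℝ, Measurable (Function.uncurry G) → Measurable (Function.uncurry A) →
    Measurable (Function.uncurry B) →
    (∀ᵐ p ∂((volume.restrict (Ioo (-Real.pi) Real.pi)).prod (volume.restrict (Ioo (-1 : ℝ) 1))),
      HasDerivAt (fun θ => G θ p.2) (A p.1 p.2) p.1 ∧ HasDerivAt (G p.1) (B p.1 p.2) p.2) →
    (∀ θ ∈ Ioo (-Real.pi) Real.pi, LocallyLipschitzOn (Ioo (-1) 1) (G θ)) →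
    (∀ s ∈ Ioo (-1 : ℝ) 1, LocallyLipschitzOn (Ioo (-Real.pi) Real.pi) (fun θ => G θ s)) →
    (∀ s ∈ Ioo α β, ∃ C η, 0 < η ∧ ∀ x ∈ Ioo (Real.pi - η) Real.pi,
      |G x s - G (-x) s| ≤ C * (Real.pi - x)) →
    (∫⁻ θ in Ioo (-Real.pi) Real.pi, ∫⁻ s in Ioo (-1 : ℝ) 1, ENNReal.ofReal (G θ s ^ 2) < ⊤) →
    (∫ p, G p.1 p.2 ∂((volume.restrict (Ioo (-Real.pi) Real.pi)).prod
      (volume.restrict (Ioo (-1 : ℝ) 1))) = 0) →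
    ENNReal.ofReal (3 / 4 + δ) * ∫⁻ θ in Ioo (-Real.pi) Real.pi, ∫⁻ s in Ioo (-1 : ℝ) 1,
      ENNReal.ofReal (G θ s ^ 2) ≤
    ∫⁻ θ in Ioo (-Real.pi) Real.pi, ∫⁻ s in Ioo (-1 : ℝ) 1,
      (ENNReal.ofReal (1 - s ^ 2) * ENNReal.ofReal (B θ s ^ 2) +
       ENNReal.ofReal (1 / (1 - s ^ 2)) * ENNReal.ofReal (A θ s ^ 2)) := by
  obtain ⟨δ, hδ0, hδ1, hleg⟩ := legendre hα hαβ hβ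
  refine ⟨δ, hδ0, ?_⟩
  intro G A B mG mA mB dd l1 l2 z1 hfin hz
  have hpi := Real.pi_pos
  have mneg : ∀ {X : ℝ → ℝ → ℝ}, Measurable (Function.uncurry X) →
      Measurable (Function.uncurry fun θ s => X (-θ) s) := fun {X} hX =>
    hX.comp (measurable_fst.neg.prodMk measurable_snd)
  have mp : ∀ {X : ℝ → ℝ → ℝ}, Measurable (Function.uncurry X) →
      Measurable (Function.uncurry fun θ s => (X θ s + X (-θ) s) / 2) := fun {X} hX =>
    (hX.add (mneg hX)).div_const 2
  have mm : ∀ {X : ℝ → ℝ → ℝ}, Measurable (Function.uncurry X) →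
      Measurable (Function.uncurry fun θ s => (X θ s - X (-θ) s) / 2) := fun {X} hX =>
    (hX.sub (mneg hX)).div_const 2
  -- slices
  have hnegm : ∀ θ ∈ Ioo 0 Real.pi, θ ∈ Ioo (-Real.pi) Real.pi ∧ -θ ∈ Ioo (-Real.pi) Real.pi :=
    fun θ h => ⟨⟨by linarith [h.1], h.2⟩, ⟨by linarith [h.2], by linarith [h.1]⟩⟩
  have lneg : ∀ s ∈ Ioo (-1 : ℝ) 1, LocallyLipschitzOn (Ioo 0 Real.pi) (fun θ => G (-θ) s) := by
    intro s hs
    refine ll_comp (φ := fun θ : ℝ => -θ) (l2 s hs) ?_ (fun θ h => (hnegm θ h).2)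
    exact (LipschitzWith.locallyLipschitz (LipschitzWith.id.neg)).locallyLipschitzOn
  have lpos : ∀ s ∈ Ioo (-1 : ℝ) 1, LocallyLipschitzOn (Ioo 0 Real.pi) (fun θ => G θ s) := fun s hs =>
    (l2 s hs).mono (fun θ h => (hnegm θ h).1)
  -- derivatives
  have d1 : ∀ᵐ θ ∂(volume.restrict (Ioo (-Real.pi) Real.pi)), ∀ᵐ s ∂(volume.restrict (Ioo (-1 : ℝ) 1)),
      HasDerivAt (G θ) (B θ s) s := by
    filter_upwards [Measure.ae_ae_of_ae_prod dd] with θ h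
    filter_upwards [h] with s hs using hs.2
  have d2 : ∀ᵐ s ∂(volume.restrict (Ioo (-1 : ℝ) 1)), ∀ᵐ θ ∂(volume.restrict (Ioo (-Real.pi) Real.pi)),
      HasDerivAt (fun θ => G θ s) (A θ s) θ := by
    have := (Measure.measurePreserving_swap (μ := (volume.restrict (Ioo (-1 : ℝ) 1)))
      (ν := (volume.restrict (Ioo (-Real.pi) Real.pi)))).quasiMeasurePreserving.ae dd
    filter_upwards [Measure.ae_ae_of_ae_prod this] with θ h
    filter_upwards [h] with s hs using hs.1
  have d1' := ae_split d1
  have d2' : ∀ᵐ s ∂(volume.restrict (Ioo (-1 : ℝ) 1)), ∀ᵐ θ ∂(volume.restrict (Ioo 0 Real.pi)),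
      HasDerivAt (fun θ => G θ s) (A θ s) θ ∧ HasDerivAt (fun θ => G (-θ) s) (-A (-θ) s) θ := by
    filter_upwards [d2] with s hs
    filter_upwards [ae_split hs] with θ h
    refine ⟨h.1, ?_⟩
    have := h.2.comp θ (hasDerivAt_neg θ)
    rw [mul_neg_one] at this
    exact this
  have msq : ∀ {X : ℝ → ℝ → ℝ}, Measurable (Function.uncurry X) →
      Measurable fun p : ℝ × ℝ => ENNReal.ofReal (X p.1 p.2 ^ 2) := fun {X} hX =>
    (hX.pow_const 2).ennreal_ofReal
  have mee : ∀ {X Y : ℝ → ℝ → ℝ}, Measurable (Function.uncurry X) → Measurable (Function.uncurry Y) →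
      Measurable fun p : ℝ × ℝ => (ENNReal.ofReal (1 - p.2 ^ 2) * ENNReal.ofReal (X p.1 p.2 ^ 2) +
       ENNReal.ofReal (1 / (1 - p.2 ^ 2)) * ENNReal.ofReal (Y p.1 p.2 ^ 2)) := fun {X Y} hX hY =>
    Measurable.add (Measurable.mul (by fun_prop) (msq hX)) (Measurable.mul (by fun_prop) (msq hY))
  have m2 : ∀ {F : ℝ × ℝ → ℝ≥0∞} (_ : Measurable F) (θ : ℝ), Measurable fun s => F (θ, s) :=
    fun {F} hF θ => hF.comp (measurable_const.prodMk measurable_id)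
  -- splitting of the L2 norm
  have sG : ∫⁻ θ in Ioo (-Real.pi) Real.pi, ∫⁻ s in Ioo (-1 : ℝ) 1, ENNReal.ofReal (G θ s ^ 2) =
      ENNReal.ofReal 2 * ((∫⁻ θ in Ioo 0 Real.pi, ∫⁻ s in Ioo (-1 : ℝ) 1,
        ENNReal.ofReal (((G θ s + G (-θ) s) / 2) ^ 2)) +
      ∫⁻ θ in Ioo 0 Real.pi, ∫⁻ s in Ioo (-1 : ℝ) 1,
        ENNReal.ofReal (((G θ s - G (-θ) s) / 2) ^ 2)) := by
    rw [lint_split (msq mG).lintegral_prod_right', ← lintegral_add_left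
      (msq (mp mG)).lintegral_prod_right', ← lintegral_const_mul' _ _ ENNReal.ofReal_ne_top]
    refine lintegral_congr fun θ => ?_
    rw [← lintegral_add_left (m2 (msq mG) θ), ← lintegral_add_left (m2 (msq (mp mG)) θ),
      ← lintegral_const_mul' _ _ ENNReal.ofReal_ne_top]
    exact lintegral_congr fun s => par_sq _ _
  have sE : ∫⁻ θ in Ioo (-Real.pi) Real.pi, ∫⁻ s in Ioo (-1 : ℝ) 1,
      (ENNReal.ofReal (1 - s ^ 2) * ENNReal.ofReal (B θ s ^ 2) +
       ENNReal.ofReal (1 / (1 - s ^ 2)) * ENNReal.ofReal (A θ s ^ 2)) =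
      ENNReal.ofReal 2 * ((∫⁻ θ in Ioo 0 Real.pi, ∫⁻ s in Ioo (-1 : ℝ) 1,
      (ENNReal.ofReal (1 - s ^ 2) * ENNReal.ofReal (((B θ s + B (-θ) s) / 2) ^ 2) +
       ENNReal.ofReal (1 / (1 - s ^ 2)) * ENNReal.ofReal (((A θ s - A (-θ) s) / 2) ^ 2))) +
      ∫⁻ θ in Ioo 0 Real.pi, ∫⁻ s in Ioo (-1 : ℝ) 1,
      (ENNReal.ofReal (1 - s ^ 2) * ENNReal.ofReal (((B θ s - B (-θ) s) / 2) ^ 2) +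
       ENNReal.ofReal (1 / (1 - s ^ 2)) * ENNReal.ofReal (((A θ s + A (-θ) s) / 2) ^ 2))) := by
    rw [lint_split (mee mB mA).lintegral_prod_right', ← lintegral_add_left
      (mee (mp mB) (mm mA)).lintegral_prod_right', ← lintegral_const_mul' _ _ ENNReal.ofReal_ne_top]
    refine lintegral_congr fun θ => ?_
    rw [← lintegral_add_left (m2 (mee mB mA) θ), ← lintegral_add_left (m2 (mee (mp mB) (mm mA)) θ),
      ← lintegral_const_mul' _ _ ENNReal.ofReal_ne_top]
    refine lintegral_congr fun s => ?_
    have p1 := par_sq (B θ s) (B (-θ) s)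
    have p2 := par_sq (A θ s) (A (-θ) s)
    calc _ = ENNReal.ofReal (1 - s ^ 2) * (ENNReal.ofReal (B θ s ^ 2) + ENNReal.ofReal (B (-θ) s ^ 2)) +
          ENNReal.ofReal (1 / (1 - s ^ 2)) * (ENNReal.ofReal (A θ s ^ 2) +
            ENNReal.ofReal (A (-θ) s ^ 2)) := by ring
      _ = _ := by rw [p1, p2]; ring
  have hodd := odd_part hα hβ hleg (mm mG) (mp mA) (mm mB)
    (fun θ h => ll_half ((l1 θ (hnegm θ h).1).sub (l1 (-θ) (hnegm θ h).2)))
    (fun s hs => ll_half ((lpos s hs).sub (lneg s hs)))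
    (by
      intro s hs
      obtain ⟨K, t, ht, hK⟩ := l2 s hs (show (0 : ℝ) ∈ Ioo (-Real.pi) Real.pi from ⟨by linarith, hpi⟩)
      rw [nhdsWithin_eq_nhds.2 (Ioo_mem_nhds (by linarith) hpi)] at ht
      obtain ⟨η, hη, hb⟩ := Metric.mem_nhds_iff.1 ht
      refine ⟨K, η, hη, fun x hx => ?_⟩
      have h1 : x ∈ t := hb (by rw [Metric.mem_ball, Real.dist_eq, sub_zero, abs_of_pos hx.1]; exact hx.2)
      have h2 : -x ∈ t := hb (by
        rw [Metric.mem_ball, Real.dist_eq, sub_zero, abs_neg, abs_of_pos hx.1]; exact hx.2)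
      have := hK.dist_le_mul x h1 (-x) h2
      rw [Real.dist_eq, Real.dist_eq, abs_of_pos (show 0 < x - -x by linarith [hx.1])] at this
      rw [abs_div, abs_of_pos (two_pos : (0:ℝ) < 2)]
      linarith)
    (by
      intro s hs
      obtain ⟨C, η, hη, h⟩ := z1 s hs
      refine ⟨C / 2, η, hη, fun x hx => ?_⟩
      rw [abs_div, abs_of_pos (two_pos : (0:ℝ) < 2)]
      linarith [h x hx])
    (by
      filter_upwards [d2'] with s hs
      filter_upwards [hs] with θ h
      have := ((h.1.sub h.2).div_const 2).deriv
      rw [sub_neg_eq_add] at this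
      exact this)
    (by
      filter_upwards [d1'] with θ hθ
      filter_upwards [hθ.1, hθ.2] with s h1 h2
      exact ((h1.sub h2).div_const 2).deriv)
  have hi : Integrable (fun p : ℝ × ℝ => G p.1 p.2)
      ((volume.restrict (Ioo (-Real.pi) Real.pi)).prod (volume.restrict (Ioo (-1 : ℝ) 1))) := by
    refine (variance_id _ mG ?_).1
    rw [lintegral_prod _ ((mG.pow_const 2).ennreal_ofReal.aemeasurable)]
    exact hfin
  have heven := even_part (mp mG) (mm mA) (mp mB)
    (fun θ h => ll_half ((l1 θ (hnegm θ h).1).add (l1 (-θ) (hnegm θ h).2)))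
    (fun s hs => ll_half ((lpos s hs).add (lneg s hs)))
    (by
      filter_upwards [d2'] with s hs
      filter_upwards [hs] with θ h
      have := ((h.1.add h.2).div_const 2).deriv
      rw [← sub_eq_add_neg] at this
      exact this)
    (by
      filter_upwards [d1'] with θ hθ
      filter_upwards [hθ.1, hθ.2] with s h1 h2
      exact ((h1.add h2).div_const 2).deriv)
    (by
      rw [sG] at hfin
      have := ENNReal.lt_top_of_mul_ne_top_right hfin.ne (by simp)
      exact (ENNReal.add_lt_top.1 this).1)
    (by
      have e : (fun p : ℝ × ℝ => (-p.1, p.2)) = Prod.map (fun x : ℝ => -x) (fun x : ℝ => x) := rfl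
      have hmap : ((volume.restrict (Ioo 0 Real.pi)).map (fun x => -x)).prod
          (volume.restrict (Ioo (-1 : ℝ) 1)) =
          ((volume.restrict (Ioo 0 Real.pi)).prod (volume.restrict (Ioo (-1 : ℝ) 1))).map
            (fun p => (-p.1, p.2)) := by
        have := Measure.map_prod_map (volume.restrict (Ioo 0 Real.pi))
          (volume.restrict (Ioo (-1 : ℝ) 1)) (measurable_neg (G := ℝ)) (measurable_id (α := ℝ))
        rw [Measure.map_id] at this
        exact this
      have mphi : Measurable (fun p : ℝ × ℝ => (-p.1, p.2)) :=
        measurable_fst.neg.prodMk measurable_snd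
      rw [R_split, Measure.add_prod, hmap] at hi hz
      have hi' := integrable_add_measure.1 hi
      rw [integral_add_measure hi'.1 hi'.2, integral_map mphi.aemeasurable
        hi'.2.aestronglyMeasurable] at hz
      have hi2 : Integrable (fun p : ℝ × ℝ => G (-p.1) p.2)
        ((volume.restrict (Ioo 0 Real.pi)).prod (volume.restrict (Ioo (-1 : ℝ) 1))) :=
        hi'.2.comp_measurable mphi
      rw [integral_div, integral_add hi'.1 hi2, hz, zero_div])
  rw [sE]
  refine le_trans ?_ (mul_le_mul_right (add_le_add heven hodd) _)
  rw [sG, mul_left_comm, mul_add (ENNReal.ofReal (3 / 4 + δ))]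
  gcongr
  linarith

lemma christensen_half {X : Type*} [MetricSpace X] [SecondCountableTopology X] [MeasurableSpace X]
    [BorelSpace X] (μ ν : Measure X) [IsFiniteMeasure μ] [IsFiniteMeasure ν] (S : Set X)
    (hμS : ∀ᵐ x ∂μ, x ∈ S) (hνS : ∀ᵐ x ∂ν, x ∈ S)
    (hμ : ∀ r, ∀ x ∈ S, ∀ y ∈ S, μ (ball x r) = μ (ball y r))
    (hν : ∀ r, ∀ x ∈ S, ∀ y ∈ S, ν (ball x r) = ν (ball y r)) (hν0 : ν ≠ 0)
    (F : Set X) (hF : IsClosed F) : ν univ * μ F ≤ μ univ * ν F := by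
  have hne : S.Nonempty := by
    by_contra h
    rw [not_nonempty_iff_eq_empty] at h
    apply hν0
    rw [h] at hνS
    rw [← Measure.measure_univ_eq_zero]
    have : ν {x | ¬ x ∈ (∅ : Set X)} = 0 := hνS
    simpa using this
  obtain ⟨o, ho⟩ := hne
  have mset : ∀ r : ℝ, MeasurableSet {p : X × X | dist p.1 p.2 < r} := fun r =>
    (isOpen_lt (by fun_prop) continuous_const).measurableSet
  -- double counting
  have dc : ∀ r : ℝ, ∀ (A : Set X), MeasurableSet A → 
      ν (ball o r) * μ A ≤ μ (ball o r) * ν (thickening r A) := by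
    intro r A hA
    have h1 : ∫⁻ x in A, ∫⁻ y, (ball x r).indicator 1 y ∂ν ∂μ = ν (ball o r) * μ A := by
      rw [← setLIntegral_const]
      refine lintegral_congr_ae ?_
      filter_upwards [ae_restrict_of_ae hμS] with x hx
      rw [lintegral_indicator_one measurableSet_ball]
      exact hν r x hx o ho
    have h2 : ∫⁻ y in thickening r A, ∫⁻ x, (ball y r).indicator 1 x ∂μ ∂ν =
        μ (ball o r) * ν (thickening r A) := by
      rw [← setLIntegral_const]
      refine lintegral_congr_ae ?_
      filter_upwards [ae_restrict_of_ae hνS] with x hx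
      rw [lintegral_indicator_one measurableSet_ball]
      exact hμ r x hx o ho
    rw [← h1, ← h2, lintegral_lintegral_swap, ← lintegral_indicator isOpen_thickening.measurableSet]
    · refine lintegral_mono fun y => ?_
      by_cases hy : y ∈ thickening r A
      · rw [indicator_of_mem hy]
        refine (lintegral_mono fun x => ?_).trans (setLIntegral_le_lintegral _ _)
        simp only [indicator, mem_ball, dist_comm]
        exact le_rfl
      · rw [indicator_of_notMem hy, nonpos_iff_eq_zero, ← lintegral_indicator hA]
        refine lintegral_eq_zero_of_ae_eq_zero (Eventually.of_forall fun x => ?_)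
        by_cases hx : x ∈ A
        · rw [indicator_of_mem hx, indicator_of_notMem]
          · rfl
          · intro hxy
            exact hy (mem_thickening_iff.2 ⟨x, hx, hxy⟩)
        · rw [indicator_of_notMem hx]; rfl
    · have : Function.uncurry (fun x y => (ball x r).indicator (1 : X → ℝ≥0∞) y) =
          {p : X × X | dist p.1 p.2 < r}.indicator 1 := by
        ext ⟨x, y⟩
        simp [Function.uncurry, indicator, dist_comm]
      rw [this]
      exact (measurable_one.indicator (mset r)).aemeasurable
  have dcu : ∀ r : ℝ, μ (ball o r) * ν univ ≤ ν (ball o r) * μ univ := by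
    intro r
    have h1 : ∫⁻ x, ∫⁻ y, (ball x r).indicator 1 y ∂ν ∂μ = ν (ball o r) * μ univ := by
      rw [← lintegral_const]
      refine lintegral_congr_ae ?_
      filter_upwards [hμS] with x hx
      rw [lintegral_indicator_one measurableSet_ball]
      exact hν r x hx o ho
    have h2 : ∫⁻ y, ∫⁻ x, (ball y r).indicator 1 x ∂μ ∂ν =
        μ (ball o r) * ν univ := by
      rw [← lintegral_const]
      refine lintegral_congr_ae ?_
      filter_upwards [hνS] with x hx
      rw [lintegral_indicator_one measurableSet_ball]
      exact hμ r x hx o ho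
    rw [← h1, ← h2, lintegral_lintegral_swap]
    · refine le_of_eq (lintegral_congr fun y => lintegral_congr fun x => ?_)
      simp only [indicator, mem_ball, dist_comm, Pi.one_apply]
    · have : Function.uncurry (fun x y => (ball x r).indicator (1 : X → ℝ≥0∞) y) =
          {p : X × X | dist p.1 p.2 < r}.indicator 1 := by
        ext ⟨x, y⟩
        simp [Function.uncurry, indicator, dist_comm]
      rw [this]
      exact (measurable_one.indicator (mset r)).aemeasurable
  have hpos : ∀ r : ℝ, 0 < r → ν (ball o r) ≠ 0 := by
    intro r hr h0
    apply hν0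
    have : ν S = 0 := by
      refine measure_null_of_locally_null S fun x hx => ⟨ball x r, ?_, ?_⟩
      · exact mem_nhdsWithin_of_mem_nhds (ball_mem_nhds x hr)
      · rw [hν r x hx o ho, h0]
    rw [← Measure.measure_univ_eq_zero]
    have h2 : ν Sᶜ = 0 := hνS
    exact measure_mono_null (by simp) (measure_union_null this h2)
  have key : ∀ r : ℝ, 0 < r → ν univ * μ F ≤ μ univ * ν (thickening r F) := by
    intro r hr
    have h1 := dc r F hF.measurableSet
    have : ν (ball o r) * (ν univ * μ F) ≤ ν (ball o r) * (μ univ * ν (thickening r F)) := by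
      calc ν (ball o r) * (ν univ * μ F) = ν univ * (ν (ball o r) * μ F) := by ring
        _ ≤ ν univ * (μ (ball o r) * ν (thickening r F)) := by gcongr
        _ = (μ (ball o r) * ν univ) * ν (thickening r F) := by ring
        _ ≤ (ν (ball o r) * μ univ) * ν (thickening r F) := mul_le_mul_left (dcu r) _
        _ = _ := by ring
    exact (ENNReal.mul_le_mul_iff_right (hpos r hr) (measure_ne_top _ _)).1 this
  have ht : Tendsto (fun r => μ univ * ν (thickening r F)) (𝓝[>] 0) (𝓝 (μ univ * ν F)) :=
    ENNReal.Tendsto.const_mul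
      (tendsto_measure_thickening_of_isClosed ⟨1, one_pos, measure_ne_top _ _⟩ hF)
      (Or.inr (measure_ne_top _ _))
  refine ge_of_tendsto ht ?_
  filter_upwards [self_mem_nhdsWithin] with r hr using key r hr

lemma christensen {X : Type*} [MetricSpace X] [SecondCountableTopology X] [MeasurableSpace X]
    [BorelSpace X] (μ ν : Measure X) [IsFiniteMeasure μ] [IsFiniteMeasure ν] (S : Set X)
    (hμS : ∀ᵐ x ∂μ, x ∈ S) (hνS : ∀ᵐ x ∂ν, x ∈ S)
    (hμ : ∀ r, ∀ x ∈ S, ∀ y ∈ S, μ (ball x r) = μ (ball y r))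
    (hν : ∀ r, ∀ x ∈ S, ∀ y ∈ S, ν (ball x r) = ν (ball y r)) (hμ0 : μ ≠ 0) (hν0 : ν ≠ 0) :
    (ν univ) • μ = (μ univ) • ν := by
  have hc : ∀ F, IsClosed F → ((ν univ) • μ) F = ((μ univ) • ν) F := by
    intro F hF
    simp only [Measure.smul_apply, smul_eq_mul]
    exact le_antisymm (christensen_half μ ν S hμS hνS hμ hν hν0 F hF)
      (christensen_half ν μ S hνS hμS hν hμ hμ0 F hF)
  have : IsFiniteMeasure ((ν univ) • μ) := Measure.smul_finite μ (measure_ne_top _ _)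
  refine ext_of_generate_finite {s | IsClosed s} ?_ ?_ (fun s hs => hc s hs) (hc _ isClosed_univ)
  · rw [BorelSpace.measurable_eq (α := X), borel_eq_generateFrom_isClosed]
  · exact isPiSystem_isClosed

def Phi (θ s : ℝ) : Rn 3 := !₂[√(1 - s ^ 2) * Real.cos θ, √(1 - s ^ 2) * Real.sin θ, s]

lemma norm3 (x : Rn 3) : ‖x‖ ^ 2 = x 0 ^ 2 + x 1 ^ 2 + x 2 ^ 2 := by
  rw [EuclideanSpace.norm_sq_eq, Fin.sum_univ_three]
  simp

lemma S2_finite : μH[(2 : ℝ)] S2 < ⊤ := by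
  let Ψ : (Fin 2 → ℝ) → Rn 3 := fun p =>
    !₂[Real.cos (p 1) * Real.cos (p 0), Real.cos (p 1) * Real.sin (p 0), Real.sin (p 1)]
  have hΨ : ContDiff ℝ 1 Ψ := by
    rw [contDiff_euclidean]
    intro i
    have h0 : ContDiff ℝ 1 fun p : Fin 2 → ℝ => p 0 := contDiff_apply ℝ ℝ 0
    have h1 : ContDiff ℝ 1 fun p : Fin 2 → ℝ => p 1 := contDiff_apply ℝ ℝ 1
    fin_cases i
    · exact h1.cos.mul h0.cos
    · exact h1.cos.mul h0.sin
    · exact h1.sin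
  let R : Set (Fin 2 → ℝ) := Icc (fun _ => -Real.pi) (fun _ => Real.pi)
  have hR : IsCompact R := isCompact_Icc
  obtain ⟨K, hK⟩ := LocallyLipschitzOn.exists_lipschitzOnWith_of_compact hR
    (hΨ.locallyLipschitz.locallyLipschitzOn (s := R))
  have hsub : S2 ⊆ Ψ '' R := by
    intro x hx
    have hn : ‖x‖ = 1 := by simpa [S2] using hx
    have h3 := norm3 x
    rw [hn] at h3
    have hpi := Real.pi_pos
    set z : ℂ := ⟨x 0, x 1⟩ with hz
    have hzn : ‖z‖ = √(1 - x 2 ^ 2) := by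
      rw [Complex.norm_def, Complex.normSq_mk]
      congr 1; linarith
    have hx2 : -1 ≤ x 2 ∧ x 2 ≤ 1 := by
      constructor <;> nlinarith [sq_nonneg (x 0), sq_nonneg (x 1)]
    refine ⟨![z.arg, Real.arcsin (x 2)], ?_, ?_⟩
    · constructor
      · intro i; fin_cases i
        · exact (Complex.neg_pi_lt_arg z).le
        · simpa using (show -Real.pi ≤ Real.arcsin (x 2) by
            linarith [Real.neg_pi_div_two_le_arcsin (x 2)])
      · intro i; fin_cases i
        · exact Complex.arg_le_pi z
        · simpa using (show Real.arcsin (x 2) ≤ Real.pi by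
            linarith [Real.arcsin_le_pi_div_two (x 2)])
    · have e1 := Complex.norm_mul_cos_arg z
      have e2 := Complex.norm_mul_sin_arg z
      ext i
      fin_cases i
      · simp only [Ψ]
        simpa [Real.cos_arcsin, hzn] using e1
      · simpa [Ψ, Real.cos_arcsin, hzn] using e2
      · simpa [Ψ] using Real.sin_arcsin hx2.1 hx2.2
  have hv : μH[(2 : ℝ)] R < ⊤ := by
    have : (μH[(2 : ℝ)] : Measure (Fin 2 → ℝ)) = volume := by
      have := hausdorffMeasure_pi_real (ι := Fin 2)
      simpa using this
    rw [this]
    exact hR.measure_lt_top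
  refine (measure_mono hsub).trans_lt ((hK.hausdorffMeasure_image_le (by norm_num)).trans_lt ?_)
  exact ENNReal.mul_lt_top (ENNReal.rpow_lt_top_of_nonneg (by norm_num) ENNReal.coe_ne_top) hv

def nrm (x : Rn 3) : Rn 3 := ‖x‖⁻¹ • x

lemma measurable_nrm : Measurable nrm := by
  unfold nrm
  exact measurable_norm.inv.smul measurable_id

def nu0 : Measure (Rn 3) := (volume.restrict (ball (0 : Rn 3) 1)).map nrm

instance : IsFiniteMeasure nu0 := by
  have : IsFiniteMeasure (volume.restrict (ball (0 : Rn 3) 1)) :=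
    ⟨by rw [Measure.restrict_apply_univ]; exact measure_ball_lt_top⟩
  unfold nu0
  infer_instance

lemma exists_iso {x y : Rn 3} (hx : x ∈ S2) (hy : y ∈ S2) : ∃ T : Rn 3 ≃ₗᵢ[ℝ] Rn 3, T x = y := by
  refine ⟨_, Submodule.reflection_sub ?_⟩
  simp only [S2, mem_sphere_iff_norm, sub_zero] at hx hy
  rw [hx, hy]

lemma nu0_ball (r : ℝ) {x y : Rn 3} (hx : x ∈ S2) (hy : y ∈ S2) :
    nu0 (ball x r) = nu0 (ball y r) := by
  obtain ⟨T, hT⟩ := exists_iso hx hy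
  have h1 : T ⁻¹' (ball y r) = ball x r := by
    rw [← hT]; simpa using T.toIsometryEquiv.preimage_ball (T x) r
  have hb : T ⁻¹' (ball 0 1) = ball 0 1 := by
    simpa using T.toIsometryEquiv.preimage_ball 0 1
  have hmp : MeasurePreserving T (volume.restrict (ball (0 : Rn 3) 1))
      (volume.restrict (ball (0 : Rn 3) 1)) := by
    have := T.measurePreserving.restrict_preimage (s := ball (0 : Rn 3) 1) measurableSet_ball
    rwa [hb] at this
  have hc : T ∘ nrm = nrm ∘ T := by
    ext1 z
    simp [nrm]
  have mT : Measurable T := T.continuous.measurable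
  have hinv : nu0.map T = nu0 := by
    unfold nu0
    rw [Measure.map_map mT measurable_nrm, hc, ← Measure.map_map measurable_nrm mT, hmp.map_eq]
  rw [← h1, ← Measure.map_apply mT measurableSet_ball, hinv]

lemma mH_ball (r : ℝ) {x y : Rn 3} (hx : x ∈ S2) (hy : y ∈ S2) :
    (μH[(2 : ℝ)].restrict S2) (ball x r) = (μH[(2 : ℝ)].restrict S2) (ball y r) := by
  obtain ⟨T, hT⟩ := exists_iso hx hy
  have h1 : T ⁻¹' (ball y r) = ball x r := by
    rw [← hT]; simpa using T.toIsometryEquiv.preimage_ball (T x) r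
  have hb : T ⁻¹' S2 = S2 := by
    simpa [S2] using T.toIsometryEquiv.preimage_sphere 0 1
  have mS : MeasurableSet S2 := isClosed_sphere.measurableSet
  have hmp : MeasurePreserving T (μH[(2 : ℝ)].restrict S2) (μH[(2 : ℝ)].restrict S2) := by
    have := (T.toIsometryEquiv.measurePreserving_hausdorffMeasure 2).restrict_preimage (s := S2) mS
    have e : (T.toIsometryEquiv : Rn 3 → Rn 3) = T := rfl
    rwa [e, hb] at this
  rw [← h1, hmp.measure_preimage measurableSet_ball.nullMeasurableSet]

lemma nu0_S2 : ∀ᵐ x ∂nu0, x ∈ S2 := by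
  unfold nu0
  rw [ae_map_iff (p := fun x => x ∈ S2) measurable_nrm.aemeasurable
    (isClosed_sphere.measurableSet : MeasurableSet S2)]
  refine ae_restrict_of_ae ?_
  have : ∀ᵐ x : Rn 3, x ≠ 0 := by
    rw [ae_iff]; simp
  filter_upwards [this] with x hx
  simp [S2, nrm, norm_smul, hx]

lemma nu0_ne : nu0 ≠ 0 := by
  intro h
  have h1 : nu0 univ = 0 := by rw [h]; rfl
  unfold nu0 at h1
  rw [Measure.map_apply measurable_nrm MeasurableSet.univ, preimage_univ,
    Measure.restrict_apply_univ] at h1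
  exact (measure_ball_pos volume (0 : Rn 3) one_pos).ne' h1

lemma mH_eq (h0 : μH[(2 : ℝ)].restrict S2 ≠ 0) :
    ∃ c : ℝ≥0∞, c ≠ 0 ∧ c ≠ ⊤ ∧ μH[(2 : ℝ)].restrict S2 = c • nu0 := by
  have : IsFiniteMeasure (μH[(2 : ℝ)].restrict S2) :=
    ⟨by rw [Measure.restrict_apply_univ]; exact S2_finite⟩
  have h := christensen (μH[(2 : ℝ)].restrict S2) nu0 S2
    (ae_restrict_mem isClosed_sphere.measurableSet) nu0_S2
    (fun r x hx y hy => mH_ball r hx hy) (fun r x hx y hy => nu0_ball r hx hy) h0 nu0_ne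
  have n0 : nu0 univ ≠ 0 := by rw [Ne, Measure.measure_univ_eq_zero]; exact nu0_ne
  have nt : nu0 univ ≠ ⊤ := measure_ne_top _ _
  refine ⟨(nu0 univ)⁻¹ * (μH[(2 : ℝ)].restrict S2) univ, ?_, ?_, ?_⟩
  · refine mul_ne_zero (ENNReal.inv_ne_zero.2 nt) ?_
    rw [Ne, Measure.measure_univ_eq_zero]; exact h0
  · exact ENNReal.mul_ne_top (ENNReal.inv_ne_top.2 n0) (measure_ne_top _ _)
  · rw [mul_smul, ← h, smul_smul, ENNReal.inv_mul_cancel n0 nt, one_smul]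

def Meq : Rn 3 ≃ᵐ ℝ × (ℝ × ℝ) :=
  ((MeasurableEquiv.toLp 2 (Fin 3 → ℝ)).symm.trans
    (MeasurableEquiv.piFinSuccAbove (fun _ : Fin 3 => ℝ) 2)).trans
    (MeasurableEquiv.prodCongr (MeasurableEquiv.refl ℝ) MeasurableEquiv.finTwoArrow)

lemma Meq_mp : MeasurePreserving Meq := by
  unfold Meq
  refine MeasurePreserving.trans (MeasurePreserving.trans
    (EuclideanSpace.volume_preserving_symm_measurableEquiv_toLp (Fin 3))
    (volume_preserving_piFinSuccAbove (fun _ : Fin 3 => ℝ) 2)) ?_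
  exact (MeasurePreserving.id volume).prod (volume_preserving_finTwoArrow ℝ)

lemma Meq_symm (z x y : ℝ) : Meq.symm (z, (x, y)) = !₂[x, y, z] := by
  rw [MeasurableEquiv.symm_apply_eq]
  rfl

/-- volume on R^3 in cylindrical coordinates -/
lemma vol_cyl (H : Rn 3 → ℝ≥0∞) (hH : Measurable H) :
    ∫⁻ x, H x = ∫⁻ ρ in Ioi (0 : ℝ), ∫⁻ θ in Ioo (-Real.pi) Real.pi, ∫⁻ z : ℝ,
      ENNReal.ofReal ρ * H !₂[ρ * Real.cos θ, ρ * Real.sin θ, z] := by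
  have h1 : ∫⁻ x, H x = ∫⁻ q : ℝ × (ℝ × ℝ), H (Meq.symm q) := by
    have := Meq_mp.symm.lintegral_comp_emb Meq.symm.measurableEmbedding H
    exact this.symm
  have hm : Measurable fun q : ℝ × (ℝ × ℝ) => H (Meq.symm q) := hH.comp Meq.symm.measurable
  rw [h1, Measure.volume_eq_prod, lintegral_prod_symm' _ hm,
    ← lintegral_comp_polarCoord_symm, polarCoord_target, Measure.volume_eq_prod,
    ← Measure.prod_restrict, lintegral_prod]
  · refine lintegral_congr fun ρ => lintegral_congr fun θ => ?_
    rw [smul_eq_mul, ← lintegral_const_mul]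
    · refine lintegral_congr fun z => ?_
      rw [polarCoord_symm_apply, Meq_symm]
    · exact hm.comp (measurable_id.prodMk measurable_const)
  · refine Measurable.aemeasurable ?_
    refine (ENNReal.measurable_ofReal.comp measurable_fst).smul ?_
    have := hm.lintegral_prod_left' (μ := (volume : Measure ℝ))
    exact this.comp (by
      rw [show (polarCoord.symm : ℝ × ℝ → ℝ × ℝ) = fun p => (p.1 * Real.cos p.2, p.1 * Real.sin p.2) from rfl]
      fun_prop)

lemma w_pos {s : ℝ} (hs : s ∈ Ioo (-1 : ℝ) 1) : 0 < √(1 - s ^ 2) := by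
  apply Real.sqrt_pos.2
  nlinarith [hs.1, hs.2]

lemma w_sq {s : ℝ} (hs : s ∈ Ioo (-1 : ℝ) 1) : √(1 - s ^ 2) ^ 2 = 1 - s ^ 2 := by
  apply Real.sq_sqrt
  nlinarith [hs.1, hs.2]

lemma sub_z {ρ : ℝ} (hρ : 0 < ρ) (h : ℝ → ℝ≥0∞) :
    ∫⁻ z, h z = ∫⁻ s in Ioo (-1 : ℝ) 1,
      ENNReal.ofReal (ρ / √(1 - s ^ 2) ^ 3) * h (ρ * s / √(1 - s ^ 2)) := by
  have hd : ∀ s ∈ Ioo (-1 : ℝ) 1, HasDerivWithinAt (fun s => ρ * s / √(1 - s ^ 2))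
      (ρ / √(1 - s ^ 2) ^ 3) (Ioo (-1 : ℝ) 1) s := by
    intro s hs
    have hw := w_pos hs
    have hw2 := w_sq hs
    have e : (1 : ℝ) - s ^ 2 ≠ 0 := by rw [← hw2]; positivity
    have h1 : HasDerivAt (fun s : ℝ => 1 - s ^ 2) (-(2 * s)) s := by
      simpa using (hasDerivAt_pow 2 s).const_sub 1
    have h2 := ((hasDerivAt_id s).const_mul ρ).div (h1.sqrt e) hw.ne'
    refine (h2.congr_deriv ?_).hasDerivWithinAt
    simp only [id]
    rw [div_eq_div_iff (by positivity) (by positivity)]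
    field_simp
    rw [hw2]
    ring
  have hinj : ∀ t : ℝ, ∀ s ∈ Ioo (-1 : ℝ) 1, ρ * s / √(1 - s ^ 2) = t →
      s = (t / ρ) / √(1 + (t / ρ) ^ 2) := by
    intro t s hs ht
    have hw := w_pos hs
    have hw2 := w_sq hs
    have e : t / ρ = s / √(1 - s ^ 2) := by rw [← ht]; field_simp
    have e2 : 1 + (t / ρ) ^ 2 = (1 / √(1 - s ^ 2)) ^ 2 := by
      rw [e]; field_simp; linarith
    rw [e2, Real.sqrt_sq (by positivity), e]
    field_simp
  have hI : InjOn (fun s => ρ * s / √(1 - s ^ 2)) (Ioo (-1 : ℝ) 1) := by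
    intro s hs t ht hst
    exact (hinj _ s hs hst).trans (hinj _ t ht rfl).symm
  have him : (fun s => ρ * s / √(1 - s ^ 2)) '' (Ioo (-1 : ℝ) 1) = univ := by
    refine eq_univ_of_forall fun t => ?_
    set r := t / ρ with hr
    have hq : 0 < √(1 + r ^ 2) := by positivity
    have hq2 : √(1 + r ^ 2) ^ 2 = 1 + r ^ 2 := Real.sq_sqrt (by positivity)
    have hab : |r| < √(1 + r ^ 2) := by
      apply Real.lt_sqrt_of_sq_lt; rw [sq_abs]; linarith
    have hab := abs_lt.1 hab
    refine ⟨r / √(1 + r ^ 2), ⟨?_, ?_⟩, ?_⟩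
    · rw [lt_div_iff₀ hq]; linarith
    · rw [div_lt_iff₀ hq]; linarith
    · have e : 1 - (r / √(1 + r ^ 2)) ^ 2 = (1 / √(1 + r ^ 2)) ^ 2 := by
        field_simp; linarith
      simp only
      rw [e, Real.sqrt_sq (by positivity)]
      rw [hr]; field_simp
  have key := lintegral_image_eq_lintegral_abs_deriv_mul measurableSet_Ioo hd hI h
  rw [him, Measure.restrict_univ] at key
  rw [key]
  refine setLIntegral_congr_fun measurableSet_Ioo fun s hs => ?_
  have hw := w_pos hs
  rw [abs_of_pos (by positivity)]

lemma measurable_Phi : Measurable fun p : ℝ × ℝ => Phi p.1 p.2 := by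
  have : Continuous fun p : ℝ × ℝ => Phi p.1 p.2 := by
    unfold Phi
    refine (PiLp.continuous_toLp 2 _).comp (continuous_pi fun i => ?_)
    fin_cases i <;> simp <;> fun_prop
  exact this.measurable

lemma Phi_norm (θ : ℝ) {s : ℝ} (hs : s ∈ Ioo (-1 : ℝ) 1) : ‖Phi θ s‖ = 1 := by
  have h : ‖Phi θ s‖ ^ 2 = 1 := by
    rw [norm3]
    simp only [Phi]
    simp [mul_pow, w_sq hs]
    have := Real.sin_sq_add_cos_sq θ
    have h2 := w_sq hs
    linear_combination (1 - s ^ 2) * this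
  exact (pow_eq_one_iff_of_nonneg (norm_nonneg _) two_ne_zero).1 h

lemma rad_int {w : ℝ} (hw : 0 < w) :
    ∫⁻ ρ in Ioi (0 : ℝ), (Iio w).indicator (fun ρ => ENNReal.ofReal (ρ ^ 2 / w ^ 3)) ρ
      = ENNReal.ofReal (1 / 3) := by
  rw [lintegral_indicator measurableSet_Iio, Measure.restrict_restrict measurableSet_Iio,
    Iio_inter_Ioi, restrict_Ioo_eq_restrict_Ioc, ← ofReal_integral_eq_lintegral_ofReal,
    ← intervalIntegral.integral_of_le hw.le, intervalIntegral.integral_div, integral_pow]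
  · congr 1; norm_num; field_simp
  · exact ((continuous_pow 2).div_const _).integrableOn_Ioc
  · exact Eventually.of_forall fun x => by positivity

lemma m3_aux (J P : ℝ → ℝ → ℝ≥0∞) (mJ : Measurable fun p : ℝ × ℝ => J p.1 p.2)
    (mP : Measurable fun p : ℝ × ℝ => P p.1 p.2) (ν : Measure (ℝ × ℝ)) (μ : Measure ℝ) [SFinite μ] :
    AEMeasurable (Function.uncurry fun ρ θ => ∫⁻ s, J ρ s * P θ s ∂μ) ν := by
  have g1 : Measurable fun q : (ℝ × ℝ) × ℝ => (q.1.1, q.2) := by fun_prop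
  have g2 : Measurable fun q : (ℝ × ℝ) × ℝ => (q.1.2, q.2) := by fun_prop
  have m3 : Measurable fun q : (ℝ × ℝ) × ℝ => J q.1.1 q.2 * P q.1.2 q.2 :=
    (mJ.comp g1).mul (mP.comp g2)
  exact (m3.lintegral_prod_right' (ν := μ)).aemeasurable

lemma nu0_formula (F : Rn 3 → ℝ≥0∞) (hF : Measurable F) :
    ∫⁻ x, F x ∂nu0 = ENNReal.ofReal (1 / 3) *
      ∫⁻ θ in Ioo (-Real.pi) Real.pi, ∫⁻ s in Ioo (-1 : ℝ) 1, F (Phi θ s) := by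
  have hFn : Measurable fun x => F (nrm x) := hF.comp measurable_nrm
  have mP : Measurable fun p : ℝ × ℝ => F (Phi p.1 p.2) := hF.comp measurable_Phi
  let J : ℝ → ℝ → ℝ≥0∞ := fun ρ s =>
    (Iio √(1 - s ^ 2)).indicator (fun ρ => ENNReal.ofReal (ρ ^ 2 / √(1 - s ^ 2) ^ 3)) ρ
  have mJ : Measurable fun p : ℝ × ℝ => J p.1 p.2 := by
    have : (fun p : ℝ × ℝ => J p.1 p.2) = {p : ℝ × ℝ | p.1 < √(1 - p.2 ^ 2)}.indicator
      (fun p => ENNReal.ofReal (p.1 ^ 2 / √(1 - p.2 ^ 2) ^ 3)) := by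
      ext p; simp [J, indicator]
    rw [this]
    refine Measurable.indicator (by fun_prop) (measurableSet_lt (by fun_prop) (by fun_prop))
  have e1 : ∫⁻ x, F x ∂nu0 = ∫⁻ x, (ball (0 : Rn 3) 1).indicator (fun x => F (nrm x)) x := by
    unfold nu0
    rw [lintegral_map hF measurable_nrm, lintegral_indicator measurableSet_ball]
  rw [e1, vol_cyl _ (hFn.indicator measurableSet_ball)]
  have e2 : ∀ ρ ∈ Ioi (0 : ℝ), (∫⁻ θ in Ioo (-Real.pi) Real.pi, ∫⁻ z : ℝ,
      ENNReal.ofReal ρ * (ball (0 : Rn 3) 1).indicator (fun x => F (nrm x))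
        !₂[ρ * Real.cos θ, ρ * Real.sin θ, z]) =
      ∫⁻ θ in Ioo (-Real.pi) Real.pi, ∫⁻ s in Ioo (-1 : ℝ) 1, J ρ s * F (Phi θ s) := by
    intro ρ hρ
    have hρ : 0 < ρ := hρ
    refine lintegral_congr fun θ => ?_
    rw [sub_z hρ]
    refine setLIntegral_congr_fun measurableSet_Ioo fun s hs => ?_
    have hw := w_pos hs
    have ev : (!₂[ρ * Real.cos θ, ρ * Real.sin θ, ρ * s / √(1 - s ^ 2)] : Rn 3)
        = (ρ / √(1 - s ^ 2)) • Phi θ s := by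
      ext i; fin_cases i
      · simp [Phi]; field_simp
      · simp [Phi]; field_simp
      · simp [Phi]; field_simp
    have hn : ‖(ρ / √(1 - s ^ 2)) • Phi θ s‖ = ρ / √(1 - s ^ 2) := by
      rw [norm_smul, Phi_norm θ hs, mul_one, Real.norm_of_nonneg (by positivity)]
    have hnr : nrm ((ρ / √(1 - s ^ 2)) • Phi θ s) = Phi θ s := by
      unfold nrm
      rw [hn, smul_smul, inv_mul_cancel₀ (by positivity), one_smul]
    simp only [J]
    rw [ev]
    by_cases hlt : ρ < √(1 - s ^ 2)
    · rw [indicator_of_mem (by simpa [hn, div_lt_one hw] using hlt), indicator_of_mem (by exact hlt),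
        hnr, ← mul_assoc, ← ENNReal.ofReal_mul (by positivity)]
      congr 2
      field_simp
    · rw [indicator_of_notMem (by simpa [hn, div_lt_one hw] using hlt),
        indicator_of_notMem (by exact hlt)]
      simp
  rw [setLIntegral_congr_fun measurableSet_Ioi e2]
  rw [lintegral_lintegral_swap
    (f := fun ρ θ => ∫⁻ s in Ioo (-1 : ℝ) 1, J ρ s * F (Phi θ s))]
  · rw [← lintegral_const_mul' _ _ ENNReal.ofReal_ne_top]
    refine lintegral_congr fun θ => ?_
    rw [lintegral_lintegral_swap (f := fun ρ s => J ρ s * F (Phi θ s)),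
      ← lintegral_const_mul' _ _ ENNReal.ofReal_ne_top]
    · refine setLIntegral_congr_fun measurableSet_Ioo fun s hs => ?_
      have mJs : Measurable fun ρ => J ρ s := mJ.comp (measurable_id.prodMk measurable_const)
      rw [lintegral_mul_const _ mJs, rad_int (w_pos hs)]
    · refine (mJ.mul (mP.comp (measurable_const.prodMk measurable_snd))).aemeasurable
  · exact m3_aux J (fun θ s => F (Phi θ s)) mJ mP _ _

def m2 : Measure (ℝ × ℝ) :=
  (volume.restrict (Ioo (-Real.pi) Real.pi)).prod (volume.restrict (Ioo (-1 : ℝ) 1))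

lemma m2_mem : ∀ᵐ p ∂m2, p.1 ∈ Ioo (-Real.pi) Real.pi ∧ p.2 ∈ Ioo (-1 : ℝ) 1 := by
  unfold m2
  rw [Measure.prod_restrict]
  exact ae_restrict_mem (measurableSet_Ioo.prod measurableSet_Ioo)

lemma nu0_map : nu0 = ENNReal.ofReal (1 / 3) • m2.map (fun p => Phi p.1 p.2) := by
  refine Measure.ext fun s hs => ?_
  have h := nu0_formula (s.indicator 1) (measurable_one.indicator hs)
  rw [lintegral_indicator_one hs] at h
  rw [h, Measure.smul_apply, smul_eq_mul, ← lintegral_indicator_one hs,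
    lintegral_map (measurable_one.indicator hs) measurable_Phi, m2, lintegral_prod]
  exact ((measurable_one.indicator hs).comp measurable_Phi).aemeasurable

lemma ae_nu0_Phi {p : Rn 3 → Prop} (h : ∀ᵐ x ∂nu0, p x) : ∀ᵐ q ∂m2, p (Phi q.1 q.2) := by
  rw [nu0_map] at h
  have h3 : ENNReal.ofReal (1 / 3) ≠ 0 := by
    rw [Ne, ENNReal.ofReal_eq_zero]; norm_num
  rw [Measure.ae_ennreal_smul_measure_iff h3] at h
  exact ae_of_ae_map measurable_Phi.aemeasurable h

lemma Phi_notMem {θ s : ℝ} (hθ : θ ∈ Ioo (-Real.pi) Real.pi) (hs : s ∈ Ioo (-1 : ℝ) 1) :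
    Phi θ s ∈ S2 \ halfCircle := by
  refine ⟨by simpa [S2] using Phi_norm θ hs, ?_⟩
  rintro ⟨φ, hφ, h0, h1, -⟩
  have hw := w_pos hs
  have hc := Real.cos_nonneg_of_mem_Icc hφ
  simp [Phi] at h0 h1
  have hsin : Real.sin θ = 0 := by
    rcases h1 with h | h
    · exact absurd h hw.ne'
    · exact h
  have hz : θ = 0 := (Real.sin_eq_zero_iff_of_lt_of_lt hθ.1 hθ.2).1 hsin
  rw [hz, Real.cos_zero] at h0
  linarith

lemma Phi_neg_pi (s : ℝ) : Phi (-Real.pi) s = Phi Real.pi s := by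
  simp [Phi]

lemma cone_iff {K : Set (Rn 3)} (x : Rn 3) : x ∈ coneOver (S2 \ K) ↔ x ≠ 0 ∧ nrm x ∉ K := by
  constructor
  · rintro ⟨t, ht, y, ⟨hy, hyK⟩, rfl⟩
    have hn : ‖y‖ = 1 := by simpa [S2] using hy
    have hy0 : y ≠ 0 := by intro h; simp [h] at hn
    refine ⟨smul_ne_zero ht.ne' hy0, ?_⟩
    have : nrm (t • y) = y := by
      rw [nrm, norm_smul, hn, mul_one, Real.norm_of_nonneg ht.le, smul_smul,
        inv_mul_cancel₀ ht.ne', one_smul]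
    rwa [this]
  · rintro ⟨h0, hK⟩
    have hp := norm_pos_iff.2 h0
    refine ⟨‖x‖, hp, nrm x, ⟨?_, hK⟩, ?_⟩
    · simp [S2, nrm, norm_smul, h0]
    · rw [nrm, smul_smul, mul_inv_cancel₀ hp.ne', one_smul]

lemma cone_open {K : Set (Rn 3)} (hK : IsClosed K) : IsOpen (coneOver (S2 \ K)) := by
  have hc : ContinuousOn nrm {0}ᶜ := by
    unfold nrm
    exact (continuous_norm.continuousOn.inv₀ (fun x hx => norm_ne_zero_iff.2 hx)).smul continuousOn_id
  have := hc.isOpen_inter_preimage isOpen_compl_singleton hK.isOpen_compl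
  convert this using 1
  ext x
  rw [cone_iff]; rfl

lemma cone_smul {K : Set (Rn 3)} {t : ℝ} (ht : 0 < t) (y : Rn 3) :
    t • y ∈ coneOver (S2 \ K) ↔ y ∈ coneOver (S2 \ K) := by
  constructor
  · rintro ⟨r, hr, z, hz, h⟩
    refine ⟨t⁻¹ * r, by positivity, z, hz, ?_⟩
    rw [mul_smul, ← h, smul_smul, inv_mul_cancel₀ ht.ne', one_smul]
  · rintro ⟨r, hr, z, hz, rfl⟩
    exact ⟨t * r, by positivity, z, hz, by rw [mul_smul]⟩

lemma sub_cone {U : Set (Rn 3)} : U ⊆ coneOver U := fun y hy => ⟨1, one_pos, y, hy, by simp⟩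

lemma diff_vol {g : Rn 3 → ℝ} {U : Set (Rn 3)} (hU : IsOpen U) (hg : LocallyLipschitzOn U g) :
    ∀ᵐ x : Rn 3, x ∈ U → DifferentiableAt ℝ g x := by
  rw [ae_iff]
  refine measure_null_of_locally_null _ fun x hx => ?_
  have hx : x ∈ U ∧ ¬ DifferentiableAt ℝ g x := by simpa using hx
  obtain ⟨C, t, ht, hl⟩ := hg hx.1
  rw [hU.nhdsWithin_eq hx.1] at ht
  have hl2 := hl.mono (interior_subset (s := t))
  have h := hl2.ae_differentiableWithinAt (μ := volume) isOpen_interior.measurableSet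
  rw [ae_restrict_iff' isOpen_interior.measurableSet, ae_iff] at h
  refine ⟨_, ?_, h⟩
  have hi : interior t ∈ 𝓝 x := interior_mem_nhds.2 ht
  filter_upwards [nhdsWithin_le_nhds hi, self_mem_nhdsWithin] with y hy hy2
  have hy2 : y ∈ U ∧ ¬ DifferentiableAt ℝ g y := by simpa using hy2
  simp only [Classical.not_imp]
  exact ⟨hy, fun hd => hy2.2 (hd.differentiableAt (isOpen_interior.mem_nhds hy))⟩

lemma diff_nu0 {g : Rn 3 → ℝ} {K : Set (Rn 3)} (hK : IsClosed K)
    (hg : LocallyLipschitzOn (coneOver (S2 \ K)) g)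
    (hh : ∀ (y : Rn 3) (t : ℝ), 0 < t → g (t • y) = g y) :
    ∀ᵐ x ∂nu0, x ∈ coneOver (S2 \ K) → DifferentiableAt ℝ g x := by
  have hU := cone_open hK
  have mset : MeasurableSet {x | x ∈ coneOver (S2 \ K) → DifferentiableAt ℝ g x} := by
    have := hU.measurableSet.compl.union (measurableSet_of_differentiableAt ℝ g)
    convert this using 1
    ext x; simp [imp_iff_not_or]
  unfold nu0
  rw [ae_map_iff measurable_nrm.aemeasurable mset]
  refine ae_restrict_of_ae ?_
  have h0 : ∀ᵐ x : Rn 3, x ≠ 0 := by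
    rw [ae_iff]; simp
  filter_upwards [h0, diff_vol hU hg] with x hx hd hm
  have hp := norm_pos_iff.2 hx
  unfold nrm at hm ⊢
  rw [cone_smul (by positivity)] at hm
  have hd := hd hm
  have e : g = fun y => g (‖x‖ • y) := by ext y; rw [hh y _ hp]
  rw [e]
  have e2 : ‖x‖ • ‖x‖⁻¹ • x = x := by rw [smul_smul, mul_inv_cancel₀ hp.ne', one_smul]
  refine DifferentiableAt.comp (g := g) (f := fun y => ‖x‖ • y) _ ?_ (by fun_prop)
  rwa [e2]

def Pt (θ s : ℝ) : Rn 3 := !₂[-(√(1 - s ^ 2) * Real.sin θ), √(1 - s ^ 2) * Real.cos θ, 0]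
def Ps (θ s : ℝ) : Rn 3 :=
  !₂[-(s / √(1 - s ^ 2)) * Real.cos θ, -(s / √(1 - s ^ 2)) * Real.sin θ, 1]

lemma hd_toLp {f : ℝ → Fin 3 → ℝ} {f' : Fin 3 → ℝ} {x : ℝ} (h : HasDerivAt f f' x) :
    HasDerivAt (fun t => (WithLp.toLp 2 (f t) : Rn 3)) (WithLp.toLp 2 f') x :=
  (PiLp.continuousLinearEquiv 2 ℝ (fun _ : Fin 3 => ℝ)).symm.hasFDerivAt.comp_hasDerivAt x h

lemma hasDeriv_t (θ s : ℝ) : HasDerivAt (fun θ => Phi θ s) (Pt θ s) θ := by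
  unfold Phi Pt
  apply hd_toLp
  rw [hasDerivAt_pi]
  intro i
  fin_cases i
  · simpa using (Real.hasDerivAt_cos θ).const_mul (√(1 - s ^ 2))
  · simpa using (Real.hasDerivAt_sin θ).const_mul (√(1 - s ^ 2))
  · simpa using hasDerivAt_const θ s

lemma hasDeriv_s (θ : ℝ) {s : ℝ} (hs : s ∈ Ioo (-1 : ℝ) 1) :
    HasDerivAt (fun s => Phi θ s) (Ps θ s) s := by
  have hw := w_pos hs
  have e : (1 : ℝ) - s ^ 2 ≠ 0 := by rw [← w_sq hs]; positivity
  have h1 : HasDerivAt (fun s : ℝ => 1 - s ^ 2) (-(2 * s)) s := by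
    simpa using (hasDerivAt_pow 2 s).const_sub 1
  have h2 : HasDerivAt (fun s : ℝ => √(1 - s ^ 2)) (-(s / √(1 - s ^ 2))) s := by
    refine (h1.sqrt e).congr_deriv ?_
    field_simp
  unfold Phi Ps
  apply hd_toLp
  rw [hasDerivAt_pi]
  intro i
  fin_cases i
  · simpa using h2.mul_const (Real.cos θ)
  · simpa using h2.mul_const (Real.sin θ)
  · exact hasDerivAt_id s

lemma ll_t (s : ℝ) (S : Set ℝ) : LocallyLipschitzOn S (fun θ => Phi θ s) := by
  have : ContDiff ℝ 1 (fun θ => Phi θ s) := by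
    rw [contDiff_euclidean]
    intro i
    fin_cases i
    · exact contDiff_const.mul Real.contDiff_cos
    · exact contDiff_const.mul Real.contDiff_sin
    · exact contDiff_const
  exact this.locallyLipschitz.locallyLipschitzOn

lemma ll_s (θ : ℝ) : LocallyLipschitzOn (Ioo (-1 : ℝ) 1) (fun s => Phi θ s) := by
  intro s hs
  have hw := w_pos hs
  have e : (1 : ℝ) - s ^ 2 ≠ 0 := by rw [← w_sq hs]; positivity
  have h : ContDiffAt ℝ 1 (fun s : ℝ => √(1 - s ^ 2)) s := by
    have h1 : ContDiffAt ℝ 1 (fun s : ℝ => 1 - s ^ 2) s := by fun_prop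
    exact h1.sqrt e
  have : ContDiffAt ℝ 1 (fun s => Phi θ s) s := by
    rw [contDiffAt_euclidean]
    intro i
    fin_cases i
    · exact h.mul contDiffAt_const
    · exact h.mul contDiffAt_const
    · exact contDiffAt_id
  obtain ⟨C, t, ht, hl⟩ := this.exists_lipschitzOnWith
  exact ⟨C, t, nhdsWithin_le_nhds ht, hl⟩

lemma inner3 (x y : Rn 3) : inner ℝ x y = x 0 * y 0 + x 1 * y 1 + x 2 * y 2 := by
  rw [PiLp.inner_apply, Fin.sum_univ_three]
  simp [mul_comm]

lemma grad_ineq (v : Rn 3) (θ : ℝ) {s : ℝ} (hs : s ∈ Ioo (-1 : ℝ) 1) :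
    ENNReal.ofReal (1 - s ^ 2) * ENNReal.ofReal ((inner ℝ v (Ps θ s)) ^ 2) +
      ENNReal.ofReal (1 / (1 - s ^ 2)) * ENNReal.ofReal ((inner ℝ v (Pt θ s)) ^ 2) ≤
      ENNReal.ofReal (‖v‖ ^ 2) := by
  have hw := w_pos hs
  have hw2 := w_sq hs
  have hp : 0 < 1 - s ^ 2 := by rw [← hw2]; positivity
  rw [← ENNReal.ofReal_mul hp.le, ← ENNReal.ofReal_mul (by positivity),
    ← ENNReal.ofReal_add (by positivity) (by positivity)]
  apply ENNReal.ofReal_le_ofReal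
  rw [inner3, inner3, norm3]
  simp only [Ps, Pt]
  simp
  set w := √(1 - s ^ 2) with hwd
  set a := v 0
  set b := v 1
  set c := v 2
  have hsc := Real.sin_sq_add_cos_sq θ
  set S := Real.sin θ
  set C := Real.cos θ
  rw [← hw2]
  have e1 : w ^ 2 * (-(a * (s / w * C)) + -(b * (s / w * S)) + c) ^ 2
      = (w * c - s * (a * C + b * S)) ^ 2 := by field_simp; ring
  have e2 : (w ^ 2)⁻¹ * (-(a * (w * S)) + b * (w * C)) ^ 2 = (b * C - a * S) ^ 2 := by
    field_simp; ring
  rw [e1, e2]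
  have : a ^ 2 + b ^ 2 + c ^ 2 - (w * c - s * (a * C + b * S)) ^ 2 - (b * C - a * S) ^ 2
      = (w * (a * C + b * S) + s * c) ^ 2 := by
    have hw3 : w ^ 2 = 1 - s ^ 2 := hw2
    linear_combination (-(a * C + b * S) ^ 2 - c ^ 2) * hw3 - (a ^ 2 + b ^ 2) * hsc
  nlinarith [sq_nonneg (w * (a * C + b * S) + s * c)]

lemma gap_ineq {g : Rn 3 → ℝ} {U : Set (Rn 3)} (hU : IsOpen U) (hg : LocallyLipschitzOn U g)
    {s : ℝ} (hs : s ∈ Ioo (-1 : ℝ) 1) (hm : Phi Real.pi s ∈ U) :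
    ∃ C η : ℝ, 0 < η ∧ ∀ x ∈ Ioo (Real.pi - η) Real.pi,
      |g (Phi x s) - g (Phi (-x) s)| ≤ C * (Real.pi - x) := by
  obtain ⟨C, t, ht, hl⟩ := hg hm
  rw [hU.nhdsWithin_eq hm] at ht
  have hc : ∀ y, ContinuousAt (fun θ => Phi θ s) y := fun y => (hasDeriv_t y s).continuousAt
  have h1 : ∀ᶠ x in 𝓝 Real.pi, Phi x s ∈ t := (hc Real.pi) ht
  have h2 : ∀ᶠ x in 𝓝 Real.pi, Phi (-x) s ∈ t := by
    have : Tendsto (fun x => Phi (-x) s) (𝓝 Real.pi) (𝓝 (Phi Real.pi s)) := by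
      rw [← Phi_neg_pi]
      exact (hc (-Real.pi)).tendsto.comp (continuous_neg.tendsto Real.pi)
    exact this ht
  obtain ⟨η, hη, hb⟩ := Metric.eventually_nhds_iff.1 (h1.and h2)
  refine ⟨C * 2, η, hη, fun x hx => ?_⟩
  have hd : dist x Real.pi < η := by
    rw [Real.dist_eq, abs_lt]; constructor <;> linarith [hx.1, hx.2]
  obtain ⟨a, b⟩ := hb hd
  have h := hl.dist_le_mul _ a _ b
  rw [Real.dist_eq] at h
  refine h.trans ?_
  rw [mul_assoc]
  refine mul_le_mul_of_nonneg_left ?_ C.2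
  rw [dist_eq_norm]
  have hsin : |Real.sin x| ≤ Real.pi - x := by
    have : |Real.sin (Real.pi - x)| ≤ |Real.pi - x| := Real.abs_sin_le_abs
    rwa [Real.sin_pi_sub, abs_of_pos (show 0 < Real.pi - x by linarith [hx.2])] at this
  have hpos : 0 < Real.pi - x := by linarith [hx.2]
  apply abs_le_of_sq_le_sq' _ (by positivity) |>.2
  rw [norm3]
  simp [Phi]
  have hw2 := w_sq hs
  have hs2 : Real.sin x ^ 2 ≤ (Real.pi - x) ^ 2 := by
    rw [← sq_abs]; gcongr
  have : √(1 - s ^ 2) ^ 2 ≤ 1 := by rw [hw2]; nlinarith [sq_nonneg s]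
  nlinarith [mul_le_mul this hs2 (sq_nonneg _) zero_le_one]

lemma core_g {α β : ℝ} (hα : -1 < α) (hαβ : α < β) (hβ : β < 1) : ∃ δ : ℝ, 0 < δ ∧
    ∀ (K : Set (Rn 3)) (g : Rn 3 → ℝ), IsClosed K → K ⊆ halfCircle → Measurable g →
    LocallyLipschitzOn (coneOver (S2 \ K)) g →
    (∀ (y : Rn 3) (t : ℝ), 0 < t → g (t • y) = g y) →
    (∀ s ∈ Ioo α β, Phi Real.pi s ∉ K) →
    (∫⁻ p, ENNReal.ofReal (g (Phi p.1 p.2) ^ 2) ∂m2 < ⊤) →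
    (∫ p, g (Phi p.1 p.2) ∂m2 = 0) →
    ENNReal.ofReal (3 / 4 + δ) * ∫⁻ p, ENNReal.ofReal (g (Phi p.1 p.2) ^ 2) ∂m2 ≤
      ∫⁻ p, ENNReal.ofReal (‖gradient g (Phi p.1 p.2)‖ ^ 2) ∂m2 := by
  obtain ⟨δ, hδ, H⟩ := core2d hα hαβ hβ
  refine ⟨δ, hδ, fun K g hK hKE mg hl hh hgap hfin hmean => ?_⟩
  have hU := cone_open hK
  have hin : ∀ θ ∈ Ioo (-Real.pi) Real.pi, ∀ s ∈ Ioo (-1 : ℝ) 1, Phi θ s ∈ coneOver (S2 \ K) := by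
    intro θ hθ s hs
    have := Phi_notMem hθ hs
    exact sub_cone ⟨this.1, fun h => this.2 (hKE h)⟩
  have mgr : Measurable (gradient g) :=
    (InnerProductSpace.toDual ℝ (Rn 3)).symm.continuous.measurable.comp (measurable_fderiv ℝ g)
  have mPt : Measurable fun p : ℝ × ℝ => Pt p.1 p.2 := by
    unfold Pt
    refine (WithLp.measurable_toLp 2 _).comp (measurable_pi_lambda _ fun i => ?_)
    fin_cases i <;> simp <;> fun_prop
  have mPs : Measurable fun p : ℝ × ℝ => Ps p.1 p.2 := by
    unfold Ps
    refine (WithLp.measurable_toLp 2 _).comp (measurable_pi_lambda _ fun i => ?_)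
    fin_cases i <;> simp <;> fun_prop
  have mG : Measurable fun p : ℝ × ℝ => g (Phi p.1 p.2) := mg.comp measurable_Phi
  have mgP : Measurable fun p : ℝ × ℝ => gradient g (Phi p.1 p.2) := mgr.comp measurable_Phi
  have mA : Measurable fun p : ℝ × ℝ => inner ℝ (gradient g (Phi p.1 p.2)) (Pt p.1 p.2) :=
    mgP.inner mPt
  have mB : Measurable fun p : ℝ × ℝ => inner ℝ (gradient g (Phi p.1 p.2)) (Ps p.1 p.2) :=
    mgP.inner mPs
  have mG2 : Measurable fun p : ℝ × ℝ => ENNReal.ofReal (g (Phi p.1 p.2) ^ 2) :=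
    (mG.pow_const 2).ennreal_ofReal
  have eG : ∫⁻ p, ENNReal.ofReal (g (Phi p.1 p.2) ^ 2) ∂m2 =
      ∫⁻ θ in Ioo (-Real.pi) Real.pi, ∫⁻ s in Ioo (-1 : ℝ) 1, ENNReal.ofReal (g (Phi θ s) ^ 2) := by
    unfold m2
    exact lintegral_prod _ mG2.aemeasurable
  have hdiff := ae_nu0_Phi (diff_nu0 hK hl hh)
  have key := H (fun θ s => g (Phi θ s)) (fun θ s => inner ℝ (gradient g (Phi θ s)) (Pt θ s))
    (fun θ s => inner ℝ (gradient g (Phi θ s)) (Ps θ s)) mG mA mB ?_ ?_ ?_ ?_ (by rwa [← eG])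
    hmean
  · rw [← eG] at key
    refine key.trans ?_
    have mN : Measurable fun p : ℝ × ℝ => ENNReal.ofReal (‖gradient g (Phi p.1 p.2)‖ ^ 2) :=
      (mgP.norm.pow_const 2).ennreal_ofReal
    unfold m2
    rw [lintegral_prod _ mN.aemeasurable]
    refine lintegral_mono fun θ => ?_
    refine setLIntegral_mono' measurableSet_Ioo fun s hs => ?_
    exact grad_ineq _ θ hs
  · filter_upwards [hdiff, m2_mem] with p hp hm
    have hd := (hp (hin _ hm.1 _ hm.2)).hasFDerivAt
    simp only [inner_gradient_left]
    exact ⟨hd.comp_hasDerivAt (f := fun θ => Phi θ p.2) p.1 (hasDeriv_t p.1 p.2),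
      hd.comp_hasDerivAt (f := fun s => Phi p.1 s) p.2 (hasDeriv_s p.1 hm.2)⟩
  · intro θ hθ
    exact ll_comp hl (ll_s θ) (fun s hs => hin θ hθ s hs)
  · intro s hs
    exact ll_comp hl (ll_t s _) (fun θ hθ => hin θ hθ s hs)
  · intro s hs
    have hs1 : s ∈ Ioo (-1 : ℝ) 1 := ⟨by linarith [hs.1], by linarith [hs.2]⟩
    refine gap_ineq hU hl hs1 (sub_cone ⟨?_, hgap s hs⟩)
    simpa [S2] using Phi_norm Real.pi hs1

lemma find_gap {K : Set (Rn 3)} (hK : IsClosed K) (hKE : K ⊆ halfCircle) (hne : K ≠ halfCircle) :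
    ∃ α β : ℝ, -1 < α ∧ α < β ∧ β < 1 ∧ ∀ s ∈ Ioo α β, Phi Real.pi s ∉ K := by
  obtain ⟨p, hp, hpK⟩ : ∃ p ∈ halfCircle, p ∉ K := by
    by_contra h
    push Not at h
    exact hne (Subset.antisymm hKE h)
  obtain ⟨φ, hφ, h0, h1, h2⟩ := hp
  have hpe : p = Phi Real.pi (Real.sin φ) := by
    have := Real.cos_eq_sqrt_one_sub_sin_sq hφ.1 hφ.2
    ext i; fin_cases i
    · simpa [Phi, ← this] using h0
    · simpa [Phi] using h1
    · simpa [Phi] using h2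
  have hc : Continuous fun s => Phi Real.pi s := by
    unfold Phi
    refine (PiLp.continuous_toLp 2 _).comp (continuous_pi fun i => ?_)
    fin_cases i <;> simp <;> fun_prop
  have hV : IsOpen {s | Phi Real.pi s ∉ K} := hK.isOpen_compl.preimage hc
  have hcl : Real.sin φ ∈ closure (Ioo (-1 : ℝ) 1) := by
    rw [closure_Ioo (by norm_num)]
    exact ⟨Real.neg_one_le_sin φ, Real.sin_le_one φ⟩
  obtain ⟨s1, hs1, hs2⟩ := mem_closure_iff.1 hcl _ hV (by rw [hpe] at hpK; exact hpK)
  obtain ⟨ε, hε, hb⟩ := Metric.isOpen_iff.1 (hV.inter (isOpen_Ioo (a := (-1 : ℝ)) (b := 1))) s1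
    ⟨hs1, hs2⟩
  have hmem : ∀ s, |s - s1| < ε → Phi Real.pi s ∉ K ∧ s ∈ Ioo (-1 : ℝ) 1 := by
    intro s hs
    exact hb (by rwa [mem_ball, Real.dist_eq])
  refine ⟨s1 - ε / 2, s1 + ε / 2, ?_, by linarith, ?_, ?_⟩
  · exact (hmem (s1 - ε / 2) (by rw [abs_lt]; constructor <;> linarith)).2.1
  · exact (hmem (s1 + ε / 2) (by rw [abs_lt]; constructor <;> linarith)).2.2
  · intro s hs
    exact (hmem s (by rw [abs_lt]; constructor <;> linarith [hs.1, hs.2])).1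

/-- rigidity. If `K ⊆ E₀` is a closed subset of the half great circle
with `Λ(K) = 3/4`, then `K = E₀`. -/
theorem statement6 (K : Set (Rn 3)) (hKc : IsClosed K) (hK : K ⊆ halfCircle)
    (hlam : Lam K = ENNReal.ofReal (3 / 4)) : K = halfCircle := by
  by_contra hne
  obtain ⟨α, β, hα, hαβ, hβ, hgap⟩ := find_gap hKc hK hne
  obtain ⟨δ, hδ, H⟩ := core_g hα hαβ hβ
  have hU := cone_open hKc
  have hlow : ENNReal.ofReal (3 / 4 + δ) ≤ Lam K := by
    unfold Lam
    refine le_sInf ?_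
    rintro q ⟨g, ⟨hh, hl, hpos, hfin, -, hmean⟩, rfl⟩
    rw [ENNReal.le_div_iff_mul_le (Or.inl hpos.ne') (Or.inl hfin.ne)]
    have hM0 : μH[(2 : ℝ)].restrict S2 ≠ 0 := by
      intro h
      rw [h] at hpos
      simp at hpos
    obtain ⟨c, hc0, hct, hc⟩ := mH_eq hM0
    rw [nu0_map, smul_smul] at hc
    set d := c * ENNReal.ofReal (1 / 3) with hd
    have hd0 : d ≠ 0 := mul_ne_zero hc0 (by rw [Ne, ENNReal.ofReal_eq_zero]; norm_num)
    have hdt : d ≠ ⊤ := ENNReal.mul_ne_top hct ENNReal.ofReal_ne_top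
    have hSK : MeasurableSet (S2 \ K) :=
      (isClosed_sphere.measurableSet : MeasurableSet S2).diff hKc.measurableSet
    have haeP : ∀ᵐ p ∂m2, Phi p.1 p.2 ∈ S2 \ K := by
      filter_upwards [m2_mem] with p hp
      have := Phi_notMem hp.1 hp.2
      exact ⟨this.1, fun h => this.2 (hK h)⟩
    have hae : ∀ᵐ x ∂(μH[(2 : ℝ)].restrict S2), x ∈ S2 \ K := by
      rw [hc]
      apply Measure.ae_smul_measure
      rw [ae_map_iff (p := fun x => x ∈ S2 \ K) measurable_Phi.aemeasurable hSK]
      exact haeP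
    have hres : μH[(2 : ℝ)].restrict (S2 \ K) = μH[(2 : ℝ)].restrict S2 := by
      have h1 := Measure.restrict_eq_self_of_ae_mem hae
      rw [Measure.restrict_restrict hSK, inter_eq_self_of_subset_left sdiff_subset] at h1
      exact h1
    have hl2 : LocallyLipschitzOn (coneOver (S2 \ K)) g := by
      intro x hx
      obtain ⟨t, ht, C, hC⟩ := hl x hx
      exact ⟨C, t, ht, hC⟩
    classical
    let g' : Rn 3 → ℝ := (coneOver (S2 \ K)).indicator g
    have hgg : ∀ x ∈ coneOver (S2 \ K), g' x = g x := fun x hx => indicator_of_mem hx g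
    have mg' : Measurable g' := by
      have : g' = (coneOver (S2 \ K)).piecewise g 0 := by
        ext x; simp [g', indicator, piecewise]
      rw [this]
      exact ContinuousOn.measurable_piecewise hl2.continuousOn continuousOn_const hU.measurableSet
    have hl' : LocallyLipschitzOn (coneOver (S2 \ K)) g' := by
      intro x hx
      obtain ⟨C, t, ht, hC⟩ := hl2 hx
      refine ⟨C, t ∩ coneOver (S2 \ K), inter_mem ht self_mem_nhdsWithin, ?_⟩
      intro a ha b hb
      rw [hgg a ha.2, hgg b hb.2]
      exact hC ha.1 hb.1
    have hh' : ∀ (y : Rn 3) (t : ℝ), 0 < t → g' (t • y) = g' y := by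
      intro y t ht
      by_cases hy : y ∈ coneOver (S2 \ K)
      · rw [hgg _ ((cone_smul ht y).2 hy), hgg _ hy, hh y t ht]
      · have : t • y ∉ coneOver (S2 \ K) := fun h => hy ((cone_smul ht y).1 h)
        simp only [g']
        rw [indicator_of_notMem hy, indicator_of_notMem this]
    have hgr : ∀ x ∈ coneOver (S2 \ K), gradient g x = gradient g' x := by
      intro x hx
      apply Filter.EventuallyEq.gradient_eq
      filter_upwards [hU.mem_nhds hx] with y hy
      exact (hgg y hy).symm
    have e1 : ∫⁻ y in S2, ENNReal.ofReal ((g y) ^ 2) ∂μH[(2 : ℝ)] =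
        d * ∫⁻ p, ENNReal.ofReal (g' (Phi p.1 p.2) ^ 2) ∂m2 := by
      have : ∫⁻ y in S2, ENNReal.ofReal ((g y) ^ 2) ∂μH[(2 : ℝ)] =
          ∫⁻ y in S2, ENNReal.ofReal ((g' y) ^ 2) ∂μH[(2 : ℝ)] := by
        apply lintegral_congr_ae
        filter_upwards [hae] with x hx
        rw [hgg x (sub_cone hx)]
      rw [this, hc, lintegral_smul_measure, lintegral_map (mg'.pow_const 2).ennreal_ofReal measurable_Phi,
        smul_eq_mul]
    have mgr : Measurable (gradient g') :=
      (InnerProductSpace.toDual ℝ (Rn 3)).symm.continuous.measurable.comp (measurable_fderiv ℝ g')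
    have e2 : ∫⁻ y in S2 \ K, ENNReal.ofReal (‖gradient g y‖ ^ 2) ∂μH[(2 : ℝ)] =
        d * ∫⁻ p, ENNReal.ofReal (‖gradient g' (Phi p.1 p.2)‖ ^ 2) ∂m2 := by
      rw [hres]
      have : ∫⁻ y in S2, ENNReal.ofReal (‖gradient g y‖ ^ 2) ∂μH[(2 : ℝ)] =
          ∫⁻ y in S2, ENNReal.ofReal (‖gradient g' y‖ ^ 2) ∂μH[(2 : ℝ)] := by
        apply lintegral_congr_ae
        filter_upwards [hae] with x hx
        rw [hgr x (sub_cone hx)]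
      rw [this, hc, lintegral_smul_measure,
        lintegral_map (mgr.norm.pow_const 2).ennreal_ofReal measurable_Phi, smul_eq_mul]
    have e3 : ∫ p, g' (Phi p.1 p.2) ∂m2 = 0 := by
      have h1 : ∫ y in S2, g y ∂μH[(2 : ℝ)] = ∫ y in S2, g' y ∂μH[(2 : ℝ)] := by
        apply integral_congr_ae
        filter_upwards [hae] with x hx
        rw [hgg x (sub_cone hx)]
      rw [h1, hc, integral_smul_measure,
        integral_map measurable_Phi.aemeasurable mg'.aestronglyMeasurable, smul_eq_zero] at hmean
      rcases hmean with h | h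
      · exact absurd h (ENNReal.toReal_ne_zero.2 ⟨hd0, hdt⟩)
      · exact h
    have hf : ∫⁻ p, ENNReal.ofReal (g' (Phi p.1 p.2) ^ 2) ∂m2 < ⊤ := by
      rw [e1] at hfin
      by_contra h
      rw [not_lt, top_le_iff] at h
      rw [h, ENNReal.mul_top hd0] at hfin
      exact lt_irrefl _ hfin
    have key := H K g' hKc hK mg' hl' hh' hgap hf e3
    rw [e1, e2, mul_left_comm]
    exact mul_le_mul_right key d
  rw [hlam] at hlow
  have := (ENNReal.ofReal_le_ofReal_iff (by norm_num)).1 hlow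
  linarith
end
end
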